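/- Let α, β ∈ ℝ and let f : ℝ² → ℝ be a smooth function whose 4-jet at the origin is j⁴f(0) = xy² + x³ + αx³y + βy⁴ (a flat umbilic of class Π^f_1 whose cubic part has one real root direction). Let δ = f_xy² − f_xx·f_yy. Then δ(0) = 0, ∇δ(0) = (0,0), and the 2-jet of δ at the origin equals 4y² − 12x², so the Hessian of δ at 0 is indefinite and the parabolic set of f has a node (two transverse smooth branches) at the origin. Moreover, the asymptotic BDE of f is topologically equivalent at 0 to the 1-saddle BDE y dy² + 2x dxdy + y dx² = 0, i.e. the BDE with coefficients (a,b,c) = (y, x, y). -/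

import Mathlib

open Asymptotics Filter Set

noncomputable section

/-- Partial derivative in the first variable (∂/∂x). -/
def pdx (f : ℝ × ℝ → ℝ) (p : ℝ × ℝ) : ℝ := deriv (fun s => f (s, p.2)) p.1

/-- Partial derivative in the second variable (∂/∂y). -/
def pdy (f : ℝ × ℝ → ℝ) (p : ℝ × ℝ) : ℝ := deriv (fun s => f (p.1, s)) p.2

/-- f_xx -/
def fxx (f : ℝ × ℝ → ℝ) : ℝ × ℝ → ℝ := pdx (pdx f)
/-- f_xy -/
def fxy (f : ℝ × ℝ → ℝ) : ℝ × ℝ → ℝ := pdy (pdx f)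
/-- f_yy -/
def fyy (f : ℝ × ℝ → ℝ) : ℝ × ℝ → ℝ := pdy (pdy f)

/-- The discriminant δ = f_xy² − f_xx·f_yy of the asymptotic BDE of `f`. -/
def bdeDiscr (f : ℝ × ℝ → ℝ) : ℝ × ℝ → ℝ := fun p => (fxy f p) ^ 2 - fxx f p * fyy f p

/-- The BDE `a dy² + 2b dxdy + c dx² = 0`, regarded as the family of quadratic
forms `ω_p(v) = a(p)v₂² + 2b(p)v₁v₂ + c(p)v₁²`. -/
def BDE (a b c : ℝ × ℝ → ℝ) : (ℝ × ℝ) → (ℝ × ℝ) → ℝ :=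
  fun p v => a p * v.2 ^ 2 + 2 * b p * v.1 * v.2 + c p * v.1 ^ 2

/-- The asymptotic BDE `f_yy dy² + 2 f_xy dxdy + f_xx dx² = 0` of the surface `z = f(x,y)`. -/
def asymBDE (f : ℝ × ℝ → ℝ) : (ℝ × ℝ) → (ℝ × ℝ) → ℝ := BDE (fyy f) (fxy f) (fxx f)

/-- `j^k f(0) = P` : the degree-k Taylor polynomial of `f` at the origin is `P`,
i.e. `f − P = o(‖(x,y)‖^k)` as `(x,y) → 0`. -/
def HasJetAt0 (f P : ℝ × ℝ → ℝ) (k : ℕ) : Prop :=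
  (fun p => f p - P p) =o[nhds (0 : ℝ × ℝ)] fun p => ‖p‖ ^ k

/-- `γ` is an integral curve of the BDE `ω` on the open interval `I`:
`γ` is C¹ on `I` with nowhere-vanishing derivative annihilating `ω`. -/
def IsIntegralCurveOnBDE (ω : (ℝ × ℝ) → (ℝ × ℝ) → ℝ) (γ : ℝ → ℝ × ℝ) (I : Set ℝ) : Prop :=
  (∃ a b : ℝ, I = Set.Ioo a b) ∧
  ∃ dγ : ℝ → ℝ × ℝ, ContinuousOn dγ I ∧
    ∀ t ∈ I, HasDerivAt γ (dγ t) t ∧ dγ t ≠ 0 ∧ ω (γ t) (dγ t) = 0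

/-- Topological equivalence of two BDEs at the origin: a local homeomorphism
fixing `0` sending integral curves of one to integral curves of the other. -/
def TopEquivAt0 (ω Ω : (ℝ × ℝ) → (ℝ × ℝ) → ℝ) : Prop :=
  ∃ (U V : Set (ℝ × ℝ)) (h hinv : ℝ × ℝ → ℝ × ℝ),
    IsOpen U ∧ IsOpen V ∧ (0 : ℝ × ℝ) ∈ U ∧ (0 : ℝ × ℝ) ∈ V ∧ h 0 = 0 ∧
    ContinuousOn h U ∧ ContinuousOn hinv V ∧
    Set.BijOn h U V ∧ Set.InvOn hinv h U V ∧
    (∀ γ I, IsIntegralCurveOnBDE ω γ I → Set.MapsTo γ I U →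
      ∃ σ J, IsIntegralCurveOnBDE Ω σ J ∧ h '' (γ '' I) = σ '' J) ∧
    (∀ σ J, IsIntegralCurveOnBDE Ω σ J → Set.MapsTo σ J V →
      ∃ γ I, IsIntegralCurveOnBDE ω γ I ∧ hinv '' (σ '' J) = γ '' I)

/-- Smooth equivalence of two BDEs at the origin: a local C^∞ diffeomorphism `h`
fixing `0` pulling one family of quadratic forms back to a nonvanishing multiple
of the other. -/
def SmoothEquivAt0 (ω Ω : (ℝ × ℝ) → (ℝ × ℝ) → ℝ) : Prop :=
  ∃ (U V : Set (ℝ × ℝ)) (h hinv : ℝ × ℝ → ℝ × ℝ) (ρ : ℝ × ℝ → ℝ),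
    IsOpen U ∧ IsOpen V ∧ (0 : ℝ × ℝ) ∈ U ∧ (0 : ℝ × ℝ) ∈ V ∧ h 0 = 0 ∧
    ContDiffOn ℝ (⊤ : ℕ∞) h U ∧ ContDiffOn ℝ (⊤ : ℕ∞) hinv V ∧
    Set.BijOn h U V ∧ Set.InvOn hinv h U V ∧
    ContDiffOn ℝ (⊤ : ℕ∞) ρ U ∧ (∀ p ∈ U, ρ p ≠ 0) ∧
    (∀ p ∈ U, ∀ v : ℝ × ℝ, Ω (h p) (fderiv ℝ h p v) = ρ p * ω p v)

/-- Fiber topological equivalence at `0` of two 2-parameter families of BDEs: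
a homeomorphism `φ` of parameter spaces (onto its image), fixing `0`, such that
corresponding members of the families are topologically equivalent at `0`. -/
def FiberTopEquivAt0 (ω Ω : (ℝ × ℝ) → (ℝ × ℝ) → (ℝ × ℝ) → ℝ) : Prop :=
  ∃ (W : Set (ℝ × ℝ)) (φ ψ : ℝ × ℝ → ℝ × ℝ),
    W ∈ nhds (0 : ℝ × ℝ) ∧ φ 0 = 0 ∧
    ContinuousOn φ W ∧ ContinuousOn ψ (φ '' W) ∧
    Set.InvOn ψ φ W (φ '' W) ∧
    ∀ q ∈ W, TopEquivAt0 (ω q) (Ω (φ q))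


/-- averaged field -/
def avgF (F : ℝ → ℝ → ℝ) (n : ℕ) (t x : ℝ) : ℝ :=
  ((n : ℝ) + 1) * ∫ s in x..(x + 1 / ((n : ℝ) + 1)), F s t

lemma avgF_close (F : ℝ → ℝ → ℝ) (hF : Continuous (fun p : ℝ × ℝ => F p.1 p.2)) (n : ℕ)
    (t x A ε : ℝ) (h : ∀ s ∈ Icc x (x + 1 / ((n : ℝ) + 1)), |F s t - A| ≤ ε) :
    |avgF F n t x - A| ≤ ε := by
  have hn : (0 : ℝ) < (n : ℝ) + 1 := by positivity
  have hc : Continuous (fun s => F s t) := hF.comp (by fun_prop : Continuous fun s : ℝ => (s, t))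
  have e1 : avgF F n t x - A
      = ((n : ℝ) + 1) * ∫ s in x..(x + 1 / ((n : ℝ) + 1)), (F s t - A) := by
    rw [intervalIntegral.integral_sub (hc.intervalIntegrable _ _) (by simp)]
    simp only [avgF, intervalIntegral.integral_const, smul_eq_mul]
    field_simp
    ring
  have h2 : ‖∫ s in x..(x + 1 / ((n : ℝ) + 1)), (F s t - A)‖
      ≤ ε * |x + 1 / ((n : ℝ) + 1) - x| := by
    apply intervalIntegral.norm_integral_le_of_norm_le_const
    intro s hs
    rw [uIoc_of_le (by linarith [div_pos one_pos hn])] at hs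
    exact h s ⟨hs.1.le, hs.2⟩
  rw [e1, abs_mul, abs_of_pos hn]
  rw [Real.norm_eq_abs, add_sub_cancel_left, abs_of_pos (div_pos one_pos hn)] at h2
  calc _ ≤ ((n : ℝ) + 1) * (ε * (1 / ((n : ℝ) + 1))) := by gcongr
    _ = ε := by field_simp

lemma avgF_lip (F : ℝ → ℝ → ℝ) (hF : Continuous (fun p : ℝ × ℝ => F p.1 p.2)) (M : ℝ)
    (hM : ∀ x t, |F x t| ≤ M) (n : ℕ) (t x y : ℝ) :
    |avgF F n t x - avgF F n t y| ≤ ((n : ℝ) + 1) * (2 * M) * |x - y| := by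
  have hn : (0 : ℝ) < (n : ℝ) + 1 := by positivity
  have hc : Continuous (fun s => F s t) := hF.comp (by fun_prop : Continuous fun s : ℝ => (s, t))
  have hi : ∀ a b, IntervalIntegrable (fun s => F s t) MeasureTheory.volume a b :=
    fun a b => hc.intervalIntegrable a b
  have hb : ∀ a b, |∫ s in a..b, F s t| ≤ M * |b - a| := fun a b => by
    have := intervalIntegral.norm_integral_le_of_norm_le_const (a := a) (b := b)
      (f := fun s => F s t) (C := M) (fun s _ => hM s t)
    simpa using this
  have e : (∫ s in x..(x + 1 / ((n : ℝ) + 1)), F s t) - ∫ s in y..(y + 1 / ((n : ℝ) + 1)), F s t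
     = (∫ s in x..y, F s t) - ∫ s in (x + 1 / ((n : ℝ) + 1))..(y + 1 / ((n : ℝ) + 1)), F s t := by
    rw [← intervalIntegral.integral_interval_sub_interval_comm (hi _ _) (hi _ _) (hi _ _)]
  unfold avgF
  rw [← mul_sub, e, abs_mul, abs_of_pos hn, mul_assoc]
  gcongr
  have h1 := hb x y
  have h2 := hb (x + 1 / ((n : ℝ) + 1)) (y + 1 / ((n : ℝ) + 1))
  rw [show y + 1 / ((n : ℝ) + 1) - (x + 1 / ((n : ℝ) + 1)) = y - x by ring] at h2
  rw [abs_sub_comm y x] at h1 h2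
  have := abs_sub (∫ s in x..y, F s t) (∫ s in (x + 1 / ((n : ℝ) + 1))..(y + 1 / ((n : ℝ) + 1)), F s t)
  linarith

lemma avgF_cont (F : ℝ → ℝ → ℝ) (hF : Continuous (fun p : ℝ × ℝ => F p.1 p.2)) (n : ℕ) (x : ℝ) :
    Continuous (fun t => avgF F n t x) := by
  unfold avgF
  refine continuous_const.mul ?_
  apply intervalIntegral.continuous_parametric_intervalIntegral_of_continuous'
  exact hF.comp (by fun_prop : Continuous fun p : ℝ × ℝ => (p.2, p.1))

lemma peano_approx (F : ℝ → ℝ → ℝ) (hF : Continuous (fun p : ℝ × ℝ => F p.1 p.2)) (M : ℝ)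
    (hM0 : 0 ≤ M) (hM : ∀ x t, |F x t| ≤ M) (t0 x0 : ℝ) (n : ℕ) :
    ∃ x : ℝ → ℝ, x t0 = x0 ∧ ∀ t ∈ Ioo (t0 - (n + 1)) (t0 + (n + 1)),
      HasDerivAt x (avgF F n t (x t)) t := by
  have hn : (0 : ℝ) < (n : ℝ) + 1 := by positivity
  let T0 : Icc (t0 - (n + 1)) (t0 + ((n : ℝ) + 1)) := ⟨t0, by constructor <;> linarith⟩
  let L : NNReal := ⟨M, hM0⟩
  have hpl : IsPicardLindelof (avgF F n) T0 x0 (L * (n + 1)) 0 L ((n + 1) * (2 * L)) := by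
    refine ⟨?_, ?_, ?_, ?_⟩
    · intro t _
      apply LipschitzOnWith.of_dist_le_mul
      intro x _ y _
      simpa [Real.dist_eq] using! avgF_lip F hF M hM n t x y
    · intro x _
      exact (avgF_cont F hF n x).continuousOn
    · intro t _ x _
      have := avgF_close F hF n t x 0 M (by intro s _; simpa using hM s t)
      simpa using! this
    · simp [T0]
  obtain ⟨x, h0, hx⟩ := hpl.exists_eq_forall_mem_Icc_hasDerivWithinAt₀
  exact ⟨x, h0, fun t ht => (hx t (Ioo_subset_Icc_self ht)).hasDerivAt (Icc_mem_nhds ht.1 ht.2)⟩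

theorem peano (F : ℝ → ℝ → ℝ) (hF : Continuous (fun p : ℝ × ℝ => F p.1 p.2)) (M : ℝ)
    (hM : ∀ x t, |F x t| ≤ M) (t0 x0 : ℝ) :
    ∃ x : ℝ → ℝ, x t0 = x0 ∧ ∀ t, HasDerivAt x (F (x t) t) t := by
  have hM0 : 0 ≤ M := (abs_nonneg _).trans (hM 0 0)
  choose X hX0 hX using peano_approx F hF M hM0 hM t0 x0
  have hav : ∀ n t x, |avgF F n t x| ≤ M := fun n t x => by
    have := avgF_close F hF n t x 0 M (by intro s _; simpa using hM s t)
    simpa using this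
  -- Lipschitz
  have hlip : ∀ (n : ℕ) (s t : ℝ), s ∈ Ioo (t0 - (n + 1)) (t0 + ((n : ℝ) + 1)) →
      t ∈ Ioo (t0 - (n + 1)) (t0 + ((n : ℝ) + 1)) → |X n s - X n t| ≤ M * |s - t| := by
    intro n s t hs ht
    exact (convex_Ioo _ _).norm_image_sub_le_of_norm_hasDerivWithin_le
      (fun x hx => (hX n x hx).hasDerivWithinAt) (fun x _ => hav n x _) ht hs
  have hev : ∀ t : ℝ, ∀ᶠ n : ℕ in (hyperfilter ℕ : Filter ℕ),
      t ∈ Ioo (t0 - (n + 1)) (t0 + ((n : ℝ) + 1)) := by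
    intro t
    have : ∀ᶠ n : ℕ in atTop, t ∈ Ioo (t0 - (n + 1)) (t0 + ((n : ℝ) + 1)) := by
      filter_upwards [eventually_ge_atTop (Nat.ceil |t - t0|)] with n hn
      have h1 := (Nat.le_ceil |t - t0|).trans (Nat.cast_le.mpr hn)
      have h2 := abs_le.mp h1
      constructor <;> linarith [h2.1, h2.2]
    exact (Nat.cofinite_eq_atTop ▸ hyperfilter_le_cofinite : (hyperfilter ℕ : Filter ℕ) ≤ atTop) this
  have hlim : ∀ t, ∃ y, Tendsto (fun n => X n t) (hyperfilter ℕ : Filter ℕ) (nhds y) := by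
    intro t
    have hK : IsCompact (Icc (x0 - M * |t - t0|) (x0 + M * |t - t0|)) := isCompact_Icc
    have hmem : ∀ᶠ n : ℕ in (hyperfilter ℕ : Filter ℕ), X n t ∈ Icc (x0 - M * |t - t0|) (x0 + M * |t - t0|) := by
      filter_upwards [hev t, hev t0] with n h1 h2
      have := abs_le.mp (hlip n t t0 h1 h2)
      rw [hX0] at this
      constructor <;> linarith [this.1, this.2]
    obtain ⟨y, _, hy⟩ := hK.ultrafilter_le_nhds (Ultrafilter.map (fun n => X n t) (hyperfilter ℕ))
      (by rw [le_principal_iff]; exact hmem)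
    exact ⟨y, hy⟩
  choose x hx using hlim
  refine ⟨x, ?_, ?_⟩
  · refine tendsto_nhds_unique (hx t0) ?_
    simp only [hX0]; exact tendsto_const_nhds
  · intro t
    rw [hasDerivAt_iff_isLittleO, isLittleO_iff]
    intro ε hε
    obtain ⟨δ, hδ, hδF⟩ := Metric.continuousAt_iff.mp (hF.continuousAt (x := (x t, t))) ε hε
    have hδ' : 0 < δ / (3 * (M + 1)) := by positivity
    filter_upwards [Metric.ball_mem_nhds t hδ'] with s hs
    rw [Metric.mem_ball, Real.dist_eq] at hs
    have hlims : Tendsto (fun n => |X n s - X n t - (s - t) * F (x t) t|) (hyperfilter ℕ : Filter ℕ)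
        (nhds |x s - x t - (s - t) * F (x t) t|) :=
      (((hx s).sub (hx t)).sub tendsto_const_nhds).abs
    simp only [Real.norm_eq_abs, smul_eq_mul]
    refine le_of_tendsto hlims ?_
    have hnear : ∀ᶠ n in (hyperfilter ℕ : Filter ℕ), |X n t - x t| < δ / 3 :=
      (hx t).eventually (by
        have := Metric.ball_mem_nhds (x t) (show 0 < δ / 3 by positivity)
        filter_upwards [this] with y hy; simpa [Real.dist_eq] using hy)
    have hsmall : ∀ᶠ n : ℕ in (hyperfilter ℕ : Filter ℕ), 1 / ((n : ℝ) + 1) < δ / 3 := by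
      have h1 := (tendsto_one_div_add_atTop_nhds_zero_nat (𝕜 := ℝ)).eventually
        (gt_mem_nhds (show 0 < δ / 3 by positivity))
      exact (Nat.cofinite_eq_atTop ▸ hyperfilter_le_cofinite : (hyperfilter ℕ : Filter ℕ) ≤ atTop) h1
    filter_upwards [hnear, hsmall, hev s, hev t] with n h1 h2 h3 h4
    have hsub : uIcc t s ⊆ Ioo (t0 - (n + 1)) (t0 + ((n : ℝ) + 1)) :=
      (ordConnected_Ioo).uIcc_subset h4 h3
    have hmv := (convex_uIcc t s).norm_image_sub_le_of_norm_hasDerivWithin_le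
      (f := fun r => X n r - r * F (x t) t) (C := ε)
      (f' := fun r => avgF F n r (X n r) - F (x t) t)
      (fun r hr => (((hX n r (hsub hr)).sub
        (by simpa using (hasDerivAt_id r).mul_const (F (x t) t)))).hasDerivWithinAt) (by
        intro r hr
        apply avgF_close F hF
        intro y hy
        have hrt : |r - t| ≤ |s - t| := by
          have := abs_sub_left_of_mem_uIcc hr
          exact this
        have hl := hlip n r t (hsub hr) h4
        have hM3 : M * |r - t| < δ / 3 := by
          calc M * |r - t| ≤ (M + 1) * |s - t| := by gcongr; linarith
            _ < (M + 1) * (δ / (3 * (M + 1))) := by gcongr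
            _ = δ / 3 := by field_simp
        have := hδF (x := (y, r)) (by
          rw [Prod.dist_eq, max_lt_iff]
          constructor
          · rw [Real.dist_eq]
            simp only
            have a1 := abs_le.mp hl
            have a2 := abs_lt.mp h1
            rw [abs_lt]; constructor <;> linarith [hy.1, hy.2, a1.1, a1.2, a2.1, a2.2]
          · rw [Real.dist_eq]
            refine lt_of_le_of_lt hrt (lt_of_lt_of_le hs ?_)
            rw [div_le_iff₀ (by positivity)]
            nlinarith)
        rw [Real.dist_eq] at this
        exact this.le) left_mem_uIcc right_mem_uIcc
    rw [Real.norm_eq_abs, Real.norm_eq_abs] at hmv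
    refine le_trans (le_of_eq ?_) hmv
    congr 1
    ring


structure FlowData (F u l : ℝ → ℝ → ℝ) : Prop where
  cont : Continuous fun p : ℝ × ℝ => F p.1 p.2
  pos : ∃ m > 0, ∀ U s, m ≤ F U s
  bdd : ∃ M, ∀ U s, F U s ≤ M
  u0 : ∀ w, u w 0 = w
  du : ∀ w s, HasDerivAt (u w) (F (u w s) s) s
  lu : ∀ w s, l (u w s) s = w
  ul : ∀ U s, u (l U s) s = U
  lip : ∀ U U' s, |l U s - l U' s| ≤ 3 * |U - U'|
  lipu : ∀ w w' s, |u w s - u w' s| ≤ 3 * |w - w'|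
  mono : ∀ s, StrictMono (fun U => l U s)
  odd : ∀ U s, l (-U) (-s) = - l U s
  F00 : F 0 0 = 1

lemma flow_est (F : ℝ → ℝ → ℝ) (c : ℝ → ℝ) (hc : Continuous c) (hcm : Monotone c) (r K m : ℝ)
    (hr : ∀ x, |c x| ≤ r) (hm : 0 < m) (hK : 0 ≤ K) (hmF : ∀ U s, m ≤ F U s)
    (hL : ∀ U U' s, |F U s - F U' s| ≤ K * |c U - c U'|) (hKr : 4 * K * r ≤ m)
    (x y : ℝ → ℝ) (hx : ∀ t, HasDerivAt x (F (x t) t) t) (hy : ∀ t, HasDerivAt y (F (y t) t) t)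
    (s t : ℝ) : |x s - y s| ≤ 3 * |x t - y t| := by
  set P : ℝ → ℝ := fun z => ∫ q in (0 : ℝ)..z, c q with hP
  have hPd : ∀ z, HasDerivAt P (c z) z := fun z =>
    intervalIntegral.integral_hasDerivAt_right (hc.intervalIntegrable _ _)
      (hc.stronglyMeasurableAtFilter _ _) hc.continuousAt
  have hPl : ∀ a b, |P a - P b| ≤ r * |a - b| := by
    intro a b
    exact convex_univ.norm_image_sub_le_of_norm_hasDerivWithin_le
      (fun z _ => (hPd z).hasDerivWithinAt) (fun z _ => hr z) (mem_univ b) (mem_univ a)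
  set lam := 2 * K / m with hlam
  have hlam0 : 0 ≤ lam := by positivity
  have hlr : lam * r ≤ 1 / 2 := by
    rw [hlam, div_mul_eq_mul_div, div_le_iff₀ hm]; linarith
  have hr0 : 0 ≤ r := (abs_nonneg _).trans (hr 0)
  -- derivative facts
  set D : ℝ → ℝ := fun t => F (x t) t - F (y t) t with hD
  set E' : ℝ → ℝ := fun t => c (x t) * F (x t) t - c (y t) * F (y t) t with hE'
  have hΔ : ∀ t, HasDerivAt (fun t => x t - y t) (D t) t := fun t => (hx t).sub (hy t)
  have hE : ∀ t, HasDerivAt (fun t => P (x t) - P (y t)) (E' t) t := fun t =>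
    ((hPd _).comp t (hx t)).sub ((hPd _).comp t (hy t))
  have key : ∀ t, y t ≤ x t → |D t| ≤ lam * E' t := by
    intro t hxy
    have h1 := hL (x t) (y t) t
    have h2 : 0 ≤ c (x t) - c (y t) := sub_nonneg.mpr (hcm hxy)
    rw [abs_of_nonneg h2] at h1
    have h3 : E' t = (c (x t) - c (y t)) * F (x t) t + c (y t) * D t := by
      simp only [hE', hD]; ring
    have h4 : m * (c (x t) - c (y t)) ≤ (c (x t) - c (y t)) * F (x t) t := by
      nlinarith [hmF (x t) t]
    have h5 : -(r * |D t|) ≤ c (y t) * D t := by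
      have : |c (y t) * D t| ≤ r * |D t| := by
        rw [abs_mul]; gcongr; exact hr _
      linarith [neg_abs_le (c (y t) * D t)]
    have h6 : m * (c (x t) - c (y t)) ≤ E' t + r * |D t| := by linarith
    have h7 : m * |D t| ≤ K * (E' t + r * |D t|) := by
      calc m * |D t| ≤ m * (K * (c (x t) - c (y t))) := by gcongr
        _ = K * (m * (c (x t) - c (y t))) := by ring
        _ ≤ _ := by gcongr
    have h8 : m * |D t| ≤ 2 * K * E' t := by
      nlinarith [abs_nonneg (D t), mul_le_mul_of_nonneg_right hKr (abs_nonneg (D t))]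
    rw [hlam, div_mul_eq_mul_div, le_div_iff₀ hm]; linarith
  have key2 : ∀ t, x t ≤ y t → |D t| ≤ -(lam * E' t) := by
    intro t hxy
    have h1 := hL (x t) (y t) t
    have h2 : 0 ≤ c (y t) - c (x t) := sub_nonneg.mpr (hcm hxy)
    rw [abs_sub_comm (c (x t)), abs_of_nonneg h2] at h1
    have h3 : - E' t = (c (y t) - c (x t)) * F (y t) t - c (x t) * D t := by
      simp only [hE', hD]; ring
    have h4 : m * (c (y t) - c (x t)) ≤ (c (y t) - c (x t)) * F (y t) t := by
      nlinarith [hmF (y t) t]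
    have h5 : c (x t) * D t ≤ r * |D t| := by
      have : |c (x t) * D t| ≤ r * |D t| := by
        rw [abs_mul]; gcongr; exact hr _
      linarith [le_abs_self (c (x t) * D t)]
    have h6 : m * (c (y t) - c (x t)) ≤ -E' t + r * |D t| := by linarith
    have h7 : m * |D t| ≤ K * (-E' t + r * |D t|) := by
      calc m * |D t| ≤ m * (K * (c (y t) - c (x t))) := by gcongr
        _ = K * (m * (c (y t) - c (x t))) := by ring
        _ ≤ _ := by gcongr
    have h8 : m * |D t| ≤ -(2 * K * E' t) := by
      nlinarith [abs_nonneg (D t), mul_le_mul_of_nonneg_right hKr (abs_nonneg (D t))]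
    rw [hlam, div_mul_eq_mul_div, ← neg_div, le_div_iff₀ hm]; linarith
  have hEb : ∀ t, |lam * (P (x t) - P (y t))| ≤ 1 / 2 * |x t - y t| := by
    intro t
    rw [abs_mul, abs_of_nonneg hlam0]
    calc lam * |P (x t) - P (y t)| ≤ lam * (r * |x t - y t|) := by gcongr; exact hPl _ _
      _ = lam * r * |x t - y t| := by ring
      _ ≤ _ := by gcongr
  set Θ : ℝ → ℝ := fun t => (x t - y t) - lam * (P (x t) - P (y t)) with hΘ
  set Ξ : ℝ → ℝ := fun t => (x t - y t) + lam * (P (x t) - P (y t)) with hΞ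
  have hΘd : ∀ t, HasDerivAt Θ (D t - lam * E' t) t := fun t => (hΔ t).sub ((hE t).const_mul lam)
  have hΞd : ∀ t, HasDerivAt Ξ (D t + lam * E' t) t := fun t => (hΔ t).add ((hE t).const_mul lam)
  have hΘa : Antitone (fun t => (Θ t) ^ 2) := by
    refine antitone_of_hasDerivAt_nonpos (f' := fun t => 2 * Θ t * (D t - lam * E' t)) ?_ ?_
    · intro t
      have := (hΘd t).fun_pow 2
      simpa using this
    · intro t
      have hb := abs_le.mp (hEb t)
      rcases le_total (y t) (x t) with h | h
      · have k := key t h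
        rw [abs_of_nonneg (sub_nonneg.mpr h)] at hb
        have : 0 ≤ Θ t := by simp only [hΘ]; linarith [hb.1, hb.2]
        have k2 : D t - lam * E' t ≤ 0 := by linarith [le_abs_self (D t)]
        simp only [Pi.zero_apply]
        nlinarith
      · have k := key2 t h
        rw [abs_of_nonpos (sub_nonpos.mpr h)] at hb
        have : Θ t ≤ 0 := by simp only [hΘ]; linarith [hb.1, hb.2]
        have k2 : 0 ≤ D t - lam * E' t := by linarith [neg_abs_le (D t)]
        simp only [Pi.zero_apply]
        nlinarith
  have hΞm : Monotone (fun t => (Ξ t) ^ 2) := by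
    refine monotone_of_hasDerivAt_nonneg (f' := fun t => 2 * Ξ t * (D t + lam * E' t)) ?_ ?_
    · intro t
      have := (hΞd t).fun_pow 2
      simpa using this
    · intro t
      have hb := abs_le.mp (hEb t)
      rcases le_total (y t) (x t) with h | h
      · have k := key t h
        rw [abs_of_nonneg (sub_nonneg.mpr h)] at hb
        have : 0 ≤ Ξ t := by simp only [hΞ]; linarith [hb.1, hb.2]
        have k2 : 0 ≤ D t + lam * E' t := by linarith [neg_abs_le (D t)]
        simp only [Pi.zero_apply]
        positivity
      · have k := key2 t h
        rw [abs_of_nonpos (sub_nonpos.mpr h)] at hb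
        have : Ξ t ≤ 0 := by simp only [hΞ]; linarith [hb.1, hb.2]
        have k2 : D t + lam * E' t ≤ 0 := by linarith [le_abs_self (D t)]
        simp only [Pi.zero_apply]
        nlinarith
  have lo1 : ∀ t, 1 / 2 * |x t - y t| ≤ |Θ t| := fun t => by
    have := abs_sub_abs_le_abs_sub (x t - y t) (lam * (P (x t) - P (y t)))
    linarith [hEb t]
  have hi1 : ∀ t, |Θ t| ≤ 3 / 2 * |x t - y t| := fun t => by
    have := abs_sub (x t - y t) (lam * (P (x t) - P (y t)))
    linarith [hEb t]
  have lo2 : ∀ t, 1 / 2 * |x t - y t| ≤ |Ξ t| := fun t => by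
    have := abs_sub_abs_le_abs_add (x t - y t) (lam * (P (x t) - P (y t)))
    linarith [hEb t]
  have hi2 : ∀ t, |Ξ t| ≤ 3 / 2 * |x t - y t| := fun t => by
    have := abs_add_le (x t - y t) (lam * (P (x t) - P (y t)))
    linarith [hEb t]
  rcases le_total t s with h | h
  · have := sq_le_sq.mp (hΘa h)
    linarith [lo1 s, hi1 t]
  · have := sq_le_sq.mp (hΞm h)
    linarith [lo2 s, hi2 t]

theorem flow_exists (F : ℝ → ℝ → ℝ) (c : ℝ → ℝ) (hc : Continuous c) (hcm : Monotone c)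
    (r K m M : ℝ)
    (hr : ∀ x, |c x| ≤ r) (hm : 0 < m) (hK : 0 ≤ K) (hmF : ∀ U s, m ≤ F U s)
    (hMF : ∀ U s, F U s ≤ M)
    (hF : Continuous fun p : ℝ × ℝ => F p.1 p.2)
    (hL : ∀ U U' s, |F U s - F U' s| ≤ K * |c U - c U'|) (hKr : 4 * K * r ≤ m)
    (hodd : ∀ U s, F (-U) (-s) = F U s) (h00 : F 0 0 = 1) :
    ∃ u l, FlowData F u l := by
  have hab : ∀ U s, |F U s| ≤ M := fun U s => by
    rw [abs_of_nonneg (by linarith [hmF U s])]; exact hMF U s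
  have hP := fun t0 x0 => peano F hF M hab t0 x0
  have est := flow_est F c hc hcm r K m hr hm hK hmF hL hKr
  choose X hX0 hXd using hP
  have uniq : ∀ x y : ℝ → ℝ, (∀ t, HasDerivAt x (F (x t) t) t) →
      (∀ t, HasDerivAt y (F (y t) t) t) → ∀ t, x t = y t → ∀ s, x s = y s := by
    intro x y hx hy t hxy s
    have := est x y hx hy s t
    rw [hxy, sub_self, abs_zero, mul_zero] at this
    exact sub_eq_zero.mp (abs_eq_zero.mp (le_antisymm this (abs_nonneg _)))
  have ul : ∀ U s, X 0 (X s U 0) s = U := by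
    intro U s
    rw [uniq (X 0 (X s U 0)) (X s U) (hXd _ _) (hXd _ _) 0 (hX0 _ _) s, hX0]
  have lu : ∀ w s, X s (X 0 w s) 0 = w := by
    intro w s
    rw [uniq (X s (X 0 w s)) (X 0 w) (hXd _ _) (hXd _ _) s (hX0 _ _) 0, hX0]
  have mono : ∀ s, StrictMono (fun U => X s U 0) := by
    intro s a b hab
    by_contra hcon
    have hcon : X s b 0 ≤ X s a 0 := not_lt.mp hcon
    have hcont : Continuous (fun t => X s b t - X s a t) :=
      continuous_iff_continuousAt.mpr fun t =>
        ((hXd s b t).continuousAt).sub ((hXd s a t).continuousAt)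
    have h1 : (0 : ℝ) ∈ uIcc (X s b 0 - X s a 0) (X s b s - X s a s) := by
      rw [hX0, hX0]
      exact mem_uIcc.mpr (Or.inl ⟨by linarith, by linarith⟩)
    obtain ⟨t, _, ht⟩ := intermediate_value_uIcc hcont.continuousOn h1
    have := uniq _ _ (hXd s b) (hXd s a) t (by simp only at ht; linarith) s
    rw [hX0, hX0] at this
    linarith
  refine ⟨fun w s => X 0 w s, fun U s => X s U 0, hF, ⟨m, hm, hmF⟩, ⟨M, hMF⟩, fun w => hX0 0 w,
    fun w s => hXd 0 w s, lu, ul, ?_, ?_, mono, ?_, h00⟩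
  · intro U U' s
    have := est _ _ (hXd s U) (hXd s U') 0 s
    simpa [hX0] using this
  · intro w w' s
    have := est _ _ (hXd 0 w) (hXd 0 w') s 0
    simpa [hX0] using this
  · intro U s
    have hd : ∀ t, HasDerivAt (fun t => - X s U (-t)) (F (- X s U (-t)) t) t := by
      intro t
      have h := ((hXd s U (-t)).comp t (hasDerivAt_neg t)).fun_neg
      have e := hodd (X s U (-t)) (-t)
      rw [neg_neg] at e
      rw [e]
      simpa [Function.comp_def] using h
    have := uniq _ _ (hXd (-s) (-U)) hd (-s) (by simp [hX0]) 0
    simpa using this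

namespace FlowData
variable {F u l : ℝ → ℝ → ℝ} (h : FlowData F u l)
include h

lemma l0 (U : ℝ) : l U 0 = U := by
  have := h.lu U 0
  rwa [h.u0] at this

lemma u_strictMono (w : ℝ) : StrictMono (u w) := by
  obtain ⟨m, hm, hF⟩ := h.pos
  exact strictMono_of_hasDerivAt_pos (fun s => h.du w s) (fun s => lt_of_lt_of_le hm (hF _ _))

lemma u_cont (w : ℝ) : Continuous (u w) :=
  continuous_iff_continuousAt.mpr fun t => (h.du w t).continuousAt

lemma l_anti (U : ℝ) : StrictAnti (fun s => l U s) := by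
  intro s s' hs
  have h1 := h.u_strictMono (l U s) hs
  rw [h.ul] at h1
  have h2 := h.mono s' h1
  simp only [h.lu] at h2
  exact h2

lemma u_lip : ∃ M, 0 ≤ M ∧ ∀ w s s', |u w s - u w s'| ≤ M * |s - s'| := by
  obtain ⟨m, hm, hF⟩ := h.pos
  obtain ⟨M, hM⟩ := h.bdd
  refine ⟨M, by linarith [hF 0 0, hM 0 0], fun w s s' => ?_⟩
  exact convex_univ.norm_image_sub_le_of_norm_hasDerivWithin_le
      (fun z _ => (h.du w z).hasDerivWithinAt) (fun z _ => by
        rw [Real.norm_eq_abs, abs_of_nonneg (by linarith [hF (u w z) z])]; exact hM _ _)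
      (mem_univ s') (mem_univ s)

lemma l_cont : Continuous (fun p : ℝ × ℝ => l p.1 p.2) := by
  obtain ⟨M, hM0, hM⟩ := h.u_lip
  refine continuous_iff_continuousAt.mpr fun p => ?_
  rw [ContinuousAt, tendsto_iff_dist_tendsto_zero]
  refine squeeze_zero (g := fun q : ℝ × ℝ => 3 * |q.1 - p.1| + 3 * (M * |p.2 - q.2|))
    (fun _ => dist_nonneg) ?_ ?_
  · intro q
    rw [Real.dist_eq]
    have h1 := h.lip q.1 p.1 q.2
    have h2 := h.lip p.1 (u (l p.1 p.2) q.2) q.2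
    rw [h.lu] at h2
    have h3 := hM (l p.1 p.2) p.2 q.2
    rw [h.ul] at h3
    have h4 := abs_sub_le (l q.1 q.2) (l p.1 q.2) (l p.1 p.2)
    linarith
  · have : Continuous (fun q : ℝ × ℝ => 3 * |q.1 - p.1| + 3 * (M * |p.2 - q.2|)) := by fun_prop
    have h2 := this.tendsto p
    simpa using h2

lemma u_cont2 : Continuous (fun p : ℝ × ℝ => u p.1 p.2) := by
  obtain ⟨M, hM0, hM⟩ := h.u_lip
  refine continuous_iff_continuousAt.mpr fun p => ?_
  rw [ContinuousAt, tendsto_iff_dist_tendsto_zero]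
  refine squeeze_zero (g := fun q : ℝ × ℝ => 3 * |q.1 - p.1| + (M * |q.2 - p.2|))
    (fun _ => dist_nonneg) ?_ ?_
  · intro q
    rw [Real.dist_eq]
    have h1 := h.lipu q.1 p.1 q.2
    have h3 := hM p.1 q.2 p.2
    have h4 := abs_sub_le (u q.1 q.2) (u p.1 q.2) (u p.1 p.2)
    linarith
  · have : Continuous (fun q : ℝ × ℝ => 3 * |q.1 - p.1| + (M * |q.2 - p.2|)) := by fun_prop
    have h2 := this.tendsto p
    simpa using h2

lemma u_growth : ∃ m > 0, ∀ w s s', m * |s - s'| ≤ |u w s - u w s'| := by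
  obtain ⟨m, hm, hF⟩ := h.pos
  refine ⟨m, hm, ?_⟩
  have key : ∀ w s s', s ≤ s' → m * (s' - s) ≤ u w s' - u w s := by
    intro w s s' hs
    have hmono : Monotone (fun t => u w t - m * t) :=
      monotone_of_hasDerivAt_nonneg (f' := fun t => F (u w t) t - m)
        (fun t => by simpa using (h.du w t).fun_sub ((hasDerivAt_id t).const_mul m))
        (fun t => by simpa using hF (u w t) t)
    have := hmono hs
    simp only at this
    linarith
  intro w s s'
  rcases le_total s s' with hs | hs
  · rw [abs_sub_comm, abs_of_nonneg (sub_nonneg.mpr hs), abs_sub_comm]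
    exact (key w s s' hs).trans (le_abs_self _)
  · rw [abs_of_nonneg (sub_nonneg.mpr hs)]
    exact (key w s' s hs).trans (le_abs_self _)

theorem exists_homeo : ∃ H : (ℝ × ℝ) ≃ₜ (ℝ × ℝ), ∀ U S,
    (H (U, S)).1 - (H (U, S)).2 = l U S ∧ (H (U, S)).1 + (H (U, S)).2 = l U (-S) := by
  obtain ⟨m, hm, hg⟩ := h.u_growth
  have hlc := h.l_cont
  have huc := h.u_cont2
  have gmono : ∀ w v, StrictMono (fun S => u w S - u v (-S)) := fun w v a b hab => by
    have h1 := h.u_strictMono w hab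
    have h2 := h.u_strictMono v (neg_lt_neg hab)
    simp only; linarith
  have hex : ∀ w v, ∃ S, u w S - u v (-S) = 0 := by
    intro w v
    have gc : Continuous (fun S => u w S - u v (-S)) :=
      (h.u_cont w).sub ((h.u_cont v).comp continuous_neg)
    set T := |w - v| / m with hT
    have hT0 : 0 ≤ T := by positivity
    have hmT : m * T = |w - v| := by rw [hT]; field_simp
    have a1 := hg w T 0
    have a2 := hg w 0 (-T)
    have a3 := h.u_strictMono w |>.monotone hT0
    have a4 := h.u_strictMono w |>.monotone (neg_nonpos.mpr hT0)
    have b3 := h.u_strictMono v |>.monotone hT0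
    have b4 := h.u_strictMono v |>.monotone (neg_nonpos.mpr hT0)
    rw [h.u0] at a1 a2 a3 a4 b3 b4
    rw [abs_of_nonneg (by linarith : 0 ≤ T - 0), abs_of_nonneg (by linarith)] at a1
    rw [abs_of_nonneg (by linarith : 0 ≤ 0 - -T), abs_of_nonneg (by linarith)] at a2
    have c1 := neg_abs_le (w - v)
    have c2 := le_abs_self (w - v)
    have hz : (0 : ℝ) ∈ Icc (u w (-T) - u v (- -T)) (u w T - u v (-T)) := by
      rw [neg_neg]; constructor <;> linarith
    obtain ⟨S, _, hS⟩ := intermediate_value_Icc (by linarith : -T ≤ T) gc.continuousOn hz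
    exact ⟨S, hS⟩
  choose R hR using hex
  have hRc : Continuous (fun p : ℝ × ℝ => R p.1 p.2) := by
    refine continuous_iff_continuousAt.mpr fun p => ?_
    rw [ContinuousAt, tendsto_iff_dist_tendsto_zero]
    refine squeeze_zero (g := fun q : ℝ × ℝ => (3 * |q.1 - p.1| + 3 * |q.2 - p.2|) / m)
      (fun _ => dist_nonneg) ?_ ?_
    · intro q
      rw [Real.dist_eq, le_div_iff₀ hm]
      have e1 := hR q.1 q.2
      have e2 := hR p.1 p.2
      have h1 := abs_le.mp (h.lipu q.1 p.1 (R p.1 p.2))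
      have h2 := abs_le.mp (h.lipu q.2 p.2 (-R p.1 p.2))
      have g1 := hg q.1 (R q.1 q.2) (R p.1 p.2)
      rcases le_total (R q.1 q.2) (R p.1 p.2) with hle | hle
      · have m1 := (h.u_strictMono q.1).monotone hle
        have m2 := (h.u_strictMono q.2).monotone (neg_le_neg hle)
        rw [abs_sub_comm (u _ _), abs_of_nonneg (by linarith : 0 ≤ u q.1 (R p.1 p.2) - _)] at g1
        linarith
      · have m1 := (h.u_strictMono q.1).monotone hle
        have m2 := (h.u_strictMono q.2).monotone (neg_le_neg hle)
        rw [abs_of_nonneg (by linarith : 0 ≤ u q.1 (R q.1 q.2) - u q.1 (R p.1 p.2))] at g1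
        linarith
    · have : Continuous (fun q : ℝ × ℝ => (3 * |q.1 - p.1| + 3 * |q.2 - p.2|) / m) := by fun_prop
      have h2 := this.tendsto p
      simpa using h2
  let H : (ℝ × ℝ) ≃ₜ (ℝ × ℝ) :=
    { toFun := fun p => ((l p.1 p.2 + l p.1 (-p.2)) / 2, (l p.1 (-p.2) - l p.1 p.2) / 2)
      invFun := fun q => (u (q.1 - q.2) (R (q.1 - q.2) (q.1 + q.2)), R (q.1 - q.2) (q.1 + q.2))
      left_inv := by
        rintro ⟨U, S⟩
        have e1 : (l U S + l U (-S)) / 2 - (l U (-S) - l U S) / 2 = l U S := by ring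
        have e2 : (l U S + l U (-S)) / 2 + (l U (-S) - l U S) / 2 = l U (-S) := by ring
        simp only [e1, e2]
        have : R (l U S) (l U (-S)) = S := by
          apply (gmono (l U S) (l U (-S))).injective
          simp only [hR, h.ul, sub_self]
        rw [this, h.ul]
      right_inv := by
        rintro ⟨x, y⟩
        have e := hR (x - y) (x + y)
        have e' : u (x - y) (R (x - y) (x + y)) = u (x + y) (-R (x - y) (x + y)) := by linarith
        simp only [h.lu]
        rw [e', h.lu]
        ext <;> simp only <;> ring
      continuous_toFun := by
        have c2 : Continuous (fun p : ℝ × ℝ => l p.1 (-p.2)) :=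
          hlc.comp (by fun_prop : Continuous fun p : ℝ × ℝ => (p.1, -p.2))
        fun_prop
      continuous_invFun := by
        have c1 : Continuous (fun q : ℝ × ℝ => R (q.1 - q.2) (q.1 + q.2)) :=
          hRc.comp (by fun_prop : Continuous fun q : ℝ × ℝ => (q.1 - q.2, q.1 + q.2))
        have c2 : Continuous (fun q : ℝ × ℝ => u (q.1 - q.2) (R (q.1 - q.2) (q.1 + q.2))) :=
          huc.comp (((by fun_prop : Continuous fun q : ℝ × ℝ => (q.1 - q.2))).prodMk c1)
        fun_prop }
  refine ⟨H, fun U S => ?_⟩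
  change (l U S + l U (-S)) / 2 - (l U (-S) - l U S) / 2 = l U S ∧
    (l U S + l U (-S)) / 2 + (l U (-S) - l U S) / 2 = l U (-S)
  constructor <;> ring

end FlowData


/-- `x ↦ sign(x)|x|^{3/2}` -/
def th (x : ℝ) : ℝ := x * √|x|

lemma th_cont : Continuous th := by unfold th; fun_prop

lemma th_neg (x : ℝ) : th (-x) = - th x := by simp [th]

lemma th_zero : th 0 = 0 := by simp [th]

lemma th_one : th 1 = 1 := by simp [th]

lemma th_mul (x y : ℝ) : th (x * y) = th x * th y := by
  simp only [th, abs_mul, Real.sqrt_mul (abs_nonneg x)]; ring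

lemma th_deriv (x : ℝ) : HasDerivAt th (3 / 2 * √|x|) x := by
  rcases lt_trichotomy x 0 with h | h | h
  · have h1 : HasDerivAt (fun y : ℝ => y * √(-y)) (1 * √(-x) + x * ((-1) / (2 * √(-x)))) x := by
      exact (hasDerivAt_id x).mul ((hasDerivAt_neg x).sqrt (by linarith))
    have e : th =ᶠ[nhds x] fun y : ℝ => y * √(-y) := by
      filter_upwards [gt_mem_nhds h] with y hy
      simp only [th, abs_of_neg hy]
    refine (h1.congr_of_eventuallyEq e).congr_deriv ?_
    rw [abs_of_neg h]
    have hs : √(-x) ≠ 0 := (Real.sqrt_pos.mpr (by linarith)).ne'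
    have hs2 : √(-x) ^ 2 = -x := Real.sq_sqrt (by linarith)
    field_simp
    linarith
  · subst h
    rw [hasDerivAt_iff_tendsto_slope]
    have : Tendsto (fun y : ℝ => √|y|) (nhdsWithin 0 {0}ᶜ) (nhds (3 / 2 * √|(0 : ℝ)|)) := by
      have hc : Continuous (fun y : ℝ => √|y|) := by fun_prop
      have := (hc.tendsto 0).mono_left (nhdsWithin_le_nhds (s := {0}ᶜ))
      simpa using this
    refine this.congr' ?_
    filter_upwards [self_mem_nhdsWithin] with y hy
    have hy : y ≠ 0 := hy
    simp [slope, th, hy]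
  · have h1 : HasDerivAt (fun y : ℝ => y * √y) (1 * √x + x * (1 / (2 * √x))) x := by
      exact (hasDerivAt_id x).mul ((hasDerivAt_id x).sqrt h.ne')
    have e : th =ᶠ[nhds x] fun y : ℝ => y * √y := by
      filter_upwards [lt_mem_nhds h] with y hy
      simp only [th, abs_of_pos hy]
    refine (h1.congr_of_eventuallyEq e).congr_deriv ?_
    rw [abs_of_pos h]
    have hs : √x ≠ 0 := (Real.sqrt_pos.mpr h).ne'
    have hs2 : √x ^ 2 = x := Real.sq_sqrt h.le
    field_simp
    linarith

lemma th_pos {x : ℝ} (h : 0 < x) : 0 < th x :=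
  mul_pos h (Real.sqrt_pos.mpr (abs_pos.mpr h.ne'))

lemma th_strictMono : StrictMono th := by
  have key : ∀ a b : ℝ, 0 ≤ a → a < b → th a < th b := by
    intro a b ha hab
    simp only [th, abs_of_nonneg ha, abs_of_pos (ha.trans_lt hab)]
    have : √a < √b := Real.sqrt_lt_sqrt ha hab
    nlinarith [Real.sqrt_nonneg a]
  intro a b hab
  rcases le_or_gt 0 a with h | h
  · exact key a b h hab
  · rcases le_or_gt b 0 with hb | hb
    · have := key (-b) (-a) (by linarith) (by linarith)
      rw [th_neg, th_neg] at this
      linarith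
    · have h1 := th_pos (neg_pos.mpr h)
      rw [th_neg] at h1
      linarith [th_pos hb]

lemma th_surj : Function.Surjective th := by
  have ht : Tendsto th atTop atTop := by
    refine tendsto_atTop_mono' _ ?_ tendsto_id
    filter_upwards [eventually_ge_atTop (1 : ℝ)] with x hx
    simp only [th, id, abs_of_nonneg (zero_le_one.trans hx)]
    have : 1 ≤ √x := Real.one_le_sqrt.mpr hx
    nlinarith
  refine th_cont.surjective ht ?_
  have := tendsto_neg_atTop_atBot.comp (ht.comp tendsto_neg_atBot_atTop)
  refine this.congr fun x => ?_
  simp [th_neg]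

/-- the homeomorphism `th` -/
def thE : ℝ ≃ₜ ℝ := (th_strictMono.orderIsoOfSurjective th th_surj).toHomeomorph

lemma thE_apply (x : ℝ) : thE x = th x := rfl

/-- inverse of `th` -/
def thi (y : ℝ) : ℝ := thE.symm y

lemma th_thi (y : ℝ) : th (thi y) = y := thE.apply_symm_apply y
lemma thi_th (x : ℝ) : thi (th x) = x := thE.symm_apply_apply x
lemma thi_cont : Continuous thi := thE.symm.continuous
lemma th_eq_zero {x : ℝ} : th x = 0 ↔ x = 0 := by
  conv_lhs => rw [← th_zero]
  exact th_strictMono.injective.eq_iff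
lemma th_pos_iff {x : ℝ} : 0 < th x ↔ 0 < x := by
  conv_lhs => rw [← th_zero]
  exact th_strictMono.lt_iff_lt
lemma th_neg_iff {x : ℝ} : th x < 0 ↔ x < 0 := by
  conv_lhs => rw [← th_zero]
  exact th_strictMono.lt_iff_lt
lemma thi_zero : thi 0 = 0 := by have := thi_th 0; rwa [th_zero] at this
lemma thi_one : thi 1 = 1 := by have := thi_th 1; rwa [th_one] at this
lemma thi_div (x y : ℝ) (hy : y ≠ 0) : thi (x / th y) = thi x / y := by
  have hy' : th y ≠ 0 := fun h => hy (th_eq_zero.mp h)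
  apply th_strictMono.injective
  rw [th_thi, div_eq_iff hy', ← th_mul, div_mul_cancel₀ _ hy, th_thi]

lemma thi_deriv {y : ℝ} (hy : thi y ≠ 0) : HasDerivAt thi (3 / 2 * √|thi y|)⁻¹ y := by
  refine (th_deriv (thi y)).of_local_left_inverse thi_cont.continuousAt ?_ ?_
  · have : 0 < √|thi y| := Real.sqrt_pos.mpr (abs_pos.mpr hy)
    positivity
  · exact Eventually.of_forall th_thi

/-- `l` along curves tangent to the field -/
lemma FlowData.const_of_tangent {F u l : ℝ → ℝ → ℝ} (h : FlowData F u l) {U s : ℝ → ℝ} {U' s' t : ℝ}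
    (hU : HasDerivAt U U' t) (hs : HasDerivAt s s' t) (he : U' = F (U t) (s t) * s') :
    HasDerivAt (fun t => l (U t) (s t)) 0 t := by
  set w := l (U t) (s t) with hw
  have hd : HasDerivAt (fun r => U r - u w (s r)) 0 t := by
    have h1 := (h.du w (s t)).comp t hs
    have e : u w (s t) = U t := by rw [hw, h.ul]
    rw [e] at h1
    refine (hU.fun_sub h1).congr_deriv ?_
    rw [he]; ring
  rw [hasDerivAt_iff_isLittleO] at hd ⊢
  have e : u w (s t) = U t := by rw [hw, h.ul]
  simp only [e, sub_self, smul_zero, sub_zero] at hd ⊢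
  refine IsBigO.trans_isLittleO (IsBigO.of_bound 3 (Eventually.of_forall fun r => ?_)) hd
  have := h.lip (U r) (u w (s r)) (s r)
  rw [h.lu] at this
  simpa [Real.norm_eq_abs] using this

lemma ioo_of_open {R : Set ℝ} (ho : IsOpen R) (hp : IsPreconnected R) (hb : Bornology.IsBounded R)
    : ∃ a b, R = Ioo a b := by
  rcases R.eq_empty_or_nonempty with h | hne
  · exact ⟨0, 0, by simp [h]⟩
  have h1 := hb.bddBelow
  have h2 := hb.bddAbove
  refine ⟨sInf R, sSup R, Subset.antisymm (fun x hx => ?_) (IsConnected.Ioo_csInf_csSup_subset ⟨hne, hp⟩ h1 h2)⟩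
  obtain ⟨e, he, hball⟩ := Metric.isOpen_iff.mp ho x hx
  have m1 : x - e / 2 ∈ R := hball (by
    rw [Metric.mem_ball, Real.dist_eq, abs_lt]; constructor <;> linarith)
  have m2 : x + e / 2 ∈ R := hball (by
    rw [Metric.mem_ball, Real.dist_eq, abs_lt]; constructor <;> linarith)
  constructor
  · linarith [csInf_le h1 m1]
  · linarith [le_csSup h2 m2]

lemma freq_pos {g : ℝ → ℝ} {g' c t : ℝ} (hg : HasDerivAt g g' t) (h0 : g t = 0) (hg' : g' ≠ 0)
    (hc : c ≠ 0) : ∃ᶠ r in nhds t, 0 < c * g r := by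
  intro hcon
  have hm : IsLocalMax (fun r => c * g r) t := by
    filter_upwards [hcon] with r hr
    rw [h0, mul_zero]; exact not_lt.mp hr
  have := hm.hasDerivAt_eq_zero (hg.const_mul c)
  exact (mul_ne_zero hc hg') this

lemma const_of_deriv_zero {g : ℝ → ℝ} {a b : ℝ} (h : ∀ t ∈ Ioo a b, HasDerivAt g 0 t) {t r : ℝ}
    (ht : t ∈ Ioo a b) (hr : r ∈ Ioo a b) : g t = g r := by
  have := (convex_Ioo a b).norm_image_sub_le_of_norm_hasDerivWithin_le (C := 0)
    (fun z hz => (h z hz).hasDerivWithinAt) (fun z _ => by simp) hr ht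
  rw [zero_mul] at this
  exact sub_eq_zero.mp (norm_le_zero_iff.mp this)

/-- a continuous nonvanishing function has constant sign on an interval -/
lemma const_sign {g : ℝ → ℝ} {a b : ℝ} (hg : ContinuousOn g (Ioo a b)) (h : ∀ t ∈ Ioo a b, g t ≠ 0) :
    (∀ t ∈ Ioo a b, 0 < g t) ∨ (∀ t ∈ Ioo a b, g t < 0) := by
  by_contra hcon
  push Not at hcon
  obtain ⟨⟨t, ht, h1⟩, ⟨r, hr, h2⟩⟩ := hcon
  obtain ⟨z, hz, hz0⟩ := isPreconnected_Ioo.intermediate_value ht hr hg ⟨h1, h2⟩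
  exact h z hz hz0


/-- sign -/
def sg (b : Bool) : ℝ := if b then 1 else -1

lemma sg_ne (b : Bool) : sg b ≠ 0 := by cases b <;> simp [sg]

/-- the two hyperbolic sectors -/
def sec (b : Bool) : Set (ℝ × ℝ) := {p | 0 < sg b * p.1 ∧ sg b * p.2 < 0}

lemma sec_open (b : Bool) : IsOpen (sec b) :=
  (isOpen_lt (f := fun _ : ℝ × ℝ => (0 : ℝ)) (g := fun p : ℝ × ℝ => sg b * p.1) (by fun_prop)
    (by fun_prop)).inter (isOpen_lt (f := fun p : ℝ × ℝ => sg b * p.2)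
    (g := fun _ : ℝ × ℝ => (0 : ℝ)) (by fun_prop) (by fun_prop))

lemma sec_ne1 {b : Bool} {p : ℝ × ℝ} (h : p ∈ sec b) : p.1 ≠ 0 := by
  intro h0; have := h.1; simp [h0] at this
lemma sec_ne2 {b : Bool} {p : ℝ × ℝ} (h : p ∈ sec b) : p.2 ≠ 0 := by
  intro h0; have := h.2; simp [h0] at this

structure Good (ω : (ℝ × ℝ) → (ℝ × ℝ) → ℝ) (N : Set (ℝ × ℝ)) (F u l : Bool → ℝ → ℝ → ℝ) :
    Prop where
  flow : ∀ b, FlowData (F b) (u b) (l b)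
  op : IsOpen N
  bd : Bornology.IsBounded N
  mem0 : (0 : ℝ × ℝ) ∈ N
  zero : ∀ w, ω 0 w = 0
  rel : ∀ b p, p ∈ N → p ∈ sec b → ∃ k : ℝ, k ≠ 0 ∧ ∀ w : ℝ × ℝ,
    ω p w = k * ((√|p.1| * w.1 + F b (th p.1) (th (-p.2)) * √|p.2| * w.2) *
      (√|p.1| * w.1 - F b (th p.1) (-th (-p.2)) * √|p.2| * w.2))
  ell : ∀ p w, p ∈ N → 0 < p.1 * p.2 → ω p w = 0 → w = 0
  ax1 : ∀ p w, p ∈ N → p.1 = 0 → p.2 ≠ 0 → ω p w = 0 → w.2 = 0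
  ax2 : ∀ p w, p ∈ N → p.2 = 0 → p.1 ≠ 0 → ω p w = 0 → w.1 = 0

def leaf (l : Bool → ℝ → ℝ → ℝ) (b : Bool) (κ w : ℝ) : Set (ℝ × ℝ) :=
  {p | p ∈ sec b ∧ l b (th p.1) (κ * th (-p.2)) = w}

def sepx (l : Bool → ℝ → ℝ → ℝ) : Set (ℝ × ℝ) := {p | p = 0 ∨ ∃ b, p ∈ leaf l b 1 0}

def IsLeaf (l : Bool → ℝ → ℝ → ℝ) (L : Set (ℝ × ℝ)) : Prop :=
  (∃ b κ w, (κ = 1 ∨ κ = -1) ∧ L = leaf l b κ w) ∨ L = sepx l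

def IsArc (l : Bool → ℝ → ℝ → ℝ) (T : Set (ℝ × ℝ)) : Prop :=
  ∃ L O, IsLeaf l L ∧ IsOpen O ∧ T = O ∩ L ∧ IsPreconnected T

structure IC (ω : (ℝ × ℝ) → (ℝ × ℝ) → ℝ) (N : Set (ℝ × ℝ)) (γ dγ : ℝ → ℝ × ℝ) (a b : ℝ) :
    Prop where
  cd : ContinuousOn dγ (Ioo a b)
  d : ∀ t ∈ Ioo a b, HasDerivAt γ (dγ t) t
  ne : ∀ t ∈ Ioo a b, dγ t ≠ 0
  an : ∀ t ∈ Ioo a b, ω (γ t) (dγ t) = 0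
  mem : ∀ t ∈ Ioo a b, γ t ∈ N

lemma IC.mono {ω : (ℝ × ℝ) → (ℝ × ℝ) → ℝ} {N : Set (ℝ × ℝ)} {γ dγ : ℝ → ℝ × ℝ} {a b a' b' : ℝ}
    (h : IC ω N γ dγ a b) (hs : Ioo a' b' ⊆ Ioo a b) : IC ω N γ dγ a' b' :=
  ⟨h.cd.mono hs, fun t ht => h.d t (hs ht), fun t ht => h.ne t (hs ht), fun t ht => h.an t (hs ht),
    fun t ht => h.mem t (hs ht)⟩

lemma hd1 {γ : ℝ → ℝ × ℝ} {d : ℝ × ℝ} {t : ℝ} (h : HasDerivAt γ d t) :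
    HasDerivAt (fun t => (γ t).1) d.1 t :=
  (hasFDerivAt_fst (𝕜 := ℝ) (E := ℝ) (F := ℝ) (p := γ t)).comp_hasDerivAt t h
lemma hd2 {γ : ℝ → ℝ × ℝ} {d : ℝ × ℝ} {t : ℝ} (h : HasDerivAt γ d t) :
    HasDerivAt (fun t => (γ t).2) d.2 t :=
  (hasFDerivAt_snd (𝕜 := ℝ) (E := ℝ) (F := ℝ) (p := γ t)).comp_hasDerivAt t h

section
variable {ω : (ℝ × ℝ) → (ℝ × ℝ) → ℝ} {N : Set (ℝ × ℝ)} {F u l : Bool → ℝ → ℝ → ℝ}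

lemma Good.Fpos (h : Good ω N F u l) (b : Bool) (U s : ℝ) : 0 < F b U s := by
  obtain ⟨m, hm, hF⟩ := (h.flow b).pos
  exact hm.trans_le (hF U s)

lemma Good.fac (h : Good ω N F u l) {b : Bool} {p w : ℝ × ℝ} (hp : p ∈ N) (hs : p ∈ sec b)
    (hw : ω p w = 0) : ∃ κ : ℝ, (κ = 1 ∨ κ = -1) ∧
      √|p.1| * w.1 = - κ * F b (th p.1) (κ * th (-p.2)) * √|p.2| * w.2 := by
  obtain ⟨k, hk, hr⟩ := h.rel b p hp hs
  rw [hr w] at hw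
  rcases mul_eq_zero.mp ((mul_eq_zero.mp hw).resolve_left hk) with h1 | h1
  · exact ⟨1, Or.inl rfl, by rw [one_mul]; linarith⟩
  · exact ⟨-1, Or.inr rfl, by rw [neg_one_mul (th _)]; linarith⟩

lemma Good.fac_conv (h : Good ω N F u l) {b : Bool} {p w : ℝ × ℝ} (hp : p ∈ N) (hs : p ∈ sec b)
    {κ : ℝ} (hκ : κ = 1 ∨ κ = -1)
    (hw : √|p.1| * w.1 = - κ * F b (th p.1) (κ * th (-p.2)) * √|p.2| * w.2) : ω p w = 0 := by
  obtain ⟨k, hk, hr⟩ := h.rel b p hp hs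
  rw [hr w, mul_eq_zero, mul_eq_zero]
  rcases hκ with rfl | rfl
  · rw [one_mul] at hw; right; left; linarith
  · rw [neg_one_mul (th _)] at hw; right; right; linarith

lemma Good.fac_sign (h : Good ω N F u l) {b : Bool} {p w : ℝ × ℝ} (hs : p ∈ sec b)
    (hw0 : w ≠ 0) {κ : ℝ} (hκ : κ = 1 ∨ κ = -1)
    (hw : √|p.1| * w.1 = - κ * F b (th p.1) (κ * th (-p.2)) * √|p.2| * w.2) :
    κ * (w.1 * w.2) < 0 ∧ w.2 ≠ 0 := by
  have p1 : 0 < √|p.1| := Real.sqrt_pos.mpr (abs_pos.mpr (sec_ne1 hs))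
  have p2 : 0 < √|p.2| := Real.sqrt_pos.mpr (abs_pos.mpr (sec_ne2 hs))
  have hF := h.Fpos b (th p.1) (κ * th (-p.2))
  have w2 : w.2 ≠ 0 := by
    intro h0
    rw [h0, mul_zero] at hw
    exact hw0 (Prod.ext ((mul_eq_zero.mp hw).resolve_left p1.ne') h0)
  refine ⟨?_, w2⟩
  have hk2 : κ * κ = 1 := by rcases hκ with rfl | rfl <;> norm_num
  have e : √|p.1| * (κ * (w.1 * w.2)) =
      - (F b (th p.1) (κ * th (-p.2)) * √|p.2| * (w.2 * w.2)) := by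
    calc √|p.1| * (κ * (w.1 * w.2)) = κ * w.2 * (√|p.1| * w.1) := by ring
      _ = - ((κ * κ) * F b (th p.1) (κ * th (-p.2)) * √|p.2| * (w.2 * w.2)) := by rw [hw]; ring
      _ = _ := by rw [hk2, one_mul]
  have : 0 < w.2 * w.2 := mul_self_pos.mpr w2
  have h3 : √|p.1| * (κ * (w.1 * w.2)) < 0 := by rw [e]; exact neg_neg_of_pos (by positivity)
  exact neg_of_mul_neg_right h3 p1.le

lemma Good.sec_of_ne (h : Good ω N F u l) {γ dγ : ℝ → ℝ × ℝ} {a b : ℝ} (hγ : IC ω N γ dγ a b)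
    {t : ℝ} (ht : t ∈ Ioo a b) (hne : γ t ≠ 0) : ∃ s, γ t ∈ sec s := by
  have nell : ∀ r ∈ Ioo a b, ¬ 0 < (γ r).1 * (γ r).2 := fun r hr hpos =>
    hγ.ne r hr (h.ell _ _ (hγ.mem r hr) hpos (hγ.an r hr))
  have d1 := hd1 (hγ.d t ht)
  have d2 := hd2 (hγ.d t ht)
  have hI : ∀ᶠ r in nhds t, r ∈ Ioo a b := isOpen_Ioo.mem_nhds ht
  have n1 : (γ t).1 ≠ 0 := by
    intro h0
    have h2 : (γ t).2 ≠ 0 := fun h2 => hne (Prod.ext h0 h2)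
    have w2 := h.ax1 _ _ (hγ.mem t ht) h0 h2 (hγ.an t ht)
    have w1 : (dγ t).1 ≠ 0 := fun w1 => hγ.ne t ht (Prod.ext w1 w2)
    have ev : ∀ᶠ r in nhds t, 0 < (γ t).2 * (γ r).2 := by
      have : Tendsto (fun r => (γ t).2 * (γ r).2) (nhds t) (nhds ((γ t).2 * (γ t).2)) :=
        (d2.continuousAt.tendsto).const_mul _
      exact this.eventually (lt_mem_nhds (mul_self_pos.mpr h2))
    obtain ⟨r, hr, h3, h4⟩ := ((freq_pos d1 h0 w1 h2).and_eventually (ev.and hI)).exists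
    apply nell r h4
    have := mul_pos hr h3
    have e : (γ t).2 * (γ r).1 * ((γ t).2 * (γ r).2) = ((γ t).2)^2 * ((γ r).1 * (γ r).2) := by ring
    rw [e] at this
    exact pos_of_mul_pos_right this (sq_nonneg _)
  have n2 : (γ t).2 ≠ 0 := by
    intro h0
    have w2 := h.ax2 _ _ (hγ.mem t ht) h0 n1 (hγ.an t ht)
    have w1 : (dγ t).2 ≠ 0 := fun w1 => hγ.ne t ht (Prod.ext w2 w1)
    have ev : ∀ᶠ r in nhds t, 0 < (γ t).1 * (γ r).1 := by
      have : Tendsto (fun r => (γ t).1 * (γ r).1) (nhds t) (nhds ((γ t).1 * (γ t).1)) :=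
        (d1.continuousAt.tendsto).const_mul _
      exact this.eventually (lt_mem_nhds (mul_self_pos.mpr n1))
    obtain ⟨r, hr, h3, h4⟩ := ((freq_pos d2 h0 w1 n1).and_eventually (ev.and hI)).exists
    apply nell r h4
    have := mul_pos hr h3
    have e : (γ t).1 * (γ r).2 * ((γ t).1 * (γ r).1) = ((γ t).1)^2 * ((γ r).1 * (γ r).2) := by ring
    rw [e] at this
    exact pos_of_mul_pos_right this (sq_nonneg _)
  have n3 := nell t ht
  rcases lt_or_gt_of_ne n1 with h1 | h1
  · refine ⟨false, ?_⟩
    have : 0 < (γ t).2 := by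
      by_contra hc
      exact n3 (mul_pos_of_neg_of_neg h1 (lt_of_le_of_ne (not_lt.mp hc) n2))
    constructor <;> simp [sg] <;> assumption
  · refine ⟨true, ?_⟩
    have : (γ t).2 < 0 := by
      by_contra hc
      exact n3 (mul_pos h1 (lt_of_le_of_ne (not_lt.mp hc) n2.symm))
    constructor <;> simp [sg] <;> assumption

/-- curves avoiding the origin lie in a leaf -/
lemma Good.leaf_of_ne (h : Good ω N F u l) {γ dγ : ℝ → ℝ × ℝ} {a b : ℝ} (hγ : IC ω N γ dγ a b)
    (hne : ∀ t ∈ Ioo a b, γ t ≠ 0) (hab : a < b) :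
    ∃ s κ w, (κ = 1 ∨ κ = -1) ∧ ∀ t ∈ Ioo a b, γ t ∈ leaf l s κ w := by
  have hmid : (a + b) / 2 ∈ Ioo a b := ⟨by linarith, by linarith⟩
  have hc : ContinuousOn γ (Ioo a b) := fun t ht => (hγ.d t ht).continuousAt.continuousWithinAt
  have hsec : ∀ t ∈ Ioo a b, ∃ s, γ t ∈ sec s := fun t ht => h.sec_of_ne hγ ht (hne t ht)
  have hs : ∃ s, ∀ t ∈ Ioo a b, γ t ∈ sec s := by
    have c1 : ContinuousOn (fun t => (γ t).1) (Ioo a b) := continuous_fst.comp_continuousOn hc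
    rcases const_sign c1 (fun t ht => by obtain ⟨s, hs⟩ := hsec t ht; exact sec_ne1 hs) with hp | hp
    · refine ⟨true, fun t ht => ?_⟩
      obtain ⟨s, hs⟩ := hsec t ht
      cases s
      · have := hs.1; simp only [sg] at this; simp at this; linarith [hp t ht]
      · exact hs
    · refine ⟨false, fun t ht => ?_⟩
      obtain ⟨s, hs⟩ := hsec t ht
      cases s
      · exact hs
      · have := hs.1; simp only [sg] at this; simp at this; linarith [hp t ht]
  obtain ⟨s, hs⟩ := hs
  have hk : ∃ κ : ℝ, (κ = 1 ∨ κ = -1) ∧ ∀ t ∈ Ioo a b, √|(γ t).1| * (dγ t).1 =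
      - κ * F s (th (γ t).1) (κ * th (-(γ t).2)) * √|(γ t).2| * (dγ t).2 := by
    have hf := fun t ht => h.fac (hγ.mem t ht) (hs t ht) (hγ.an t ht)
    have c1 : ContinuousOn (fun t => (dγ t).1 * (dγ t).2) (Ioo a b) :=
      (continuous_fst.comp_continuousOn hγ.cd).mul (continuous_snd.comp_continuousOn hγ.cd)
    rcases const_sign c1 (fun t ht h0 => by
      obtain ⟨κ, hκ, hw⟩ := hf t ht
      have := (h.fac_sign (hs t ht) (hγ.ne t ht) hκ hw).1
      rw [h0] at this; simp at this) with hp | hp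
    · refine ⟨-1, Or.inr rfl, fun t ht => ?_⟩
      obtain ⟨κ, hκ, hw⟩ := hf t ht
      have h2 := (h.fac_sign (hs t ht) (hγ.ne t ht) hκ hw).1
      rcases hκ with rfl | rfl
      · linarith [hp t ht]
      · exact hw
    · refine ⟨1, Or.inl rfl, fun t ht => ?_⟩
      obtain ⟨κ, hκ, hw⟩ := hf t ht
      have h2 := (h.fac_sign (hs t ht) (hγ.ne t ht) hκ hw).1
      rcases hκ with rfl | rfl
      · exact hw
      · linarith [hp t ht]
  obtain ⟨κ, hκ, hk⟩ := hk
  have hd : ∀ t ∈ Ioo a b, HasDerivAt (fun t => l s (th (γ t).1) (κ * th (-(γ t).2))) 0 t := by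
    intro t ht
    have dU := (th_deriv (γ t).1).comp t (hd1 (hγ.d t ht))
    have dS := ((th_deriv (-(γ t).2)).comp t (hd2 (hγ.d t ht)).fun_neg).const_mul κ
    refine (h.flow s).const_of_tangent dU dS ?_
    have := hk t ht
    simp only [abs_neg]
    calc 3 / 2 * √|(γ t).1| * (dγ t).1 = 3 / 2 * (√|(γ t).1| * (dγ t).1) := by ring
      _ = _ := by rw [this]; ring
  exact ⟨s, κ, _, hκ, fun t ht => ⟨hs t ht, const_of_deriv_zero hd ht hmid⟩⟩

/-- on a leaf accumulating at the origin -/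
lemma Good.leaf_zero (h : Good ω N F u l) {γ : ℝ → ℝ × ℝ} {f : Filter ℝ} [f.NeBot]
    (h0 : Tendsto γ f (nhds 0)) {s : Bool} {κ w : ℝ} (hκ : κ = 1 ∨ κ = -1)
    (hl : ∀ᶠ t in f, γ t ∈ leaf l s κ w) : κ = 1 ∧ w = 0 := by
  have hw : w = 0 := by
    have hc : Continuous (fun p : ℝ × ℝ => l s (th p.1) (κ * th (-p.2))) :=
      (h.flow s).l_cont.comp ((th_cont.comp continuous_fst).prodMk
        (continuous_const.mul (th_cont.comp continuous_snd.neg)))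
    have h1 := (hc.tendsto 0).comp h0
    have e : l s (th (0 : ℝ × ℝ).1) (κ * th (-(0 : ℝ × ℝ).2)) = 0 := by
      simp [th_zero, (h.flow s).l0]
    rw [e] at h1
    have h2 : Tendsto (fun _ : ℝ => w) f (nhds 0) := by
      refine h1.congr' ?_
      filter_upwards [hl] with t ht
      exact ht.2
    exact tendsto_nhds_unique tendsto_const_nhds h2
  refine ⟨?_, hw⟩
  rcases hκ with rfl | rfl
  · rfl
  exfalso
  obtain ⟨t, ht⟩ := hl.exists
  obtain ⟨⟨h1, h2⟩, h3⟩ := ht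
  rw [hw] at h3
  have e := (h.flow s).l0 (th (γ t).1)
  have an := (h.flow s).l_anti (th (γ t).1)
  cases s
  · simp [sg] at h1 h2
    have := an (th_neg_iff.mpr (by linarith : -(γ t).2 < 0) |> neg_pos.mpr)
    have h4 := th_neg_iff.mpr h1
    simp only [neg_one_mul] at h3
    simp only at this
    linarith
  · simp [sg] at h1 h2
    have := an (th_pos_iff.mpr (by linarith : 0 < -(γ t).2) |> neg_neg_of_pos)
    have h4 := th_pos_iff.mpr h1
    simp only [neg_one_mul] at h3
    simp only at this
    linarith

lemma Good.sep_bound (h : Good ω N F u l) : ∃ C, 0 ≤ C ∧ ∀ s p, p ∈ leaf l s 1 0 → |p.1| ≤ C * |p.2| := by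
  have key : ∀ s, ∃ C, 0 ≤ C ∧ ∀ p, p ∈ leaf l s 1 0 → |p.1| ≤ C * |p.2| := by
    intro s
    obtain ⟨M, hM0, hM⟩ := (h.flow s).u_lip
    refine ⟨|thi M|, abs_nonneg _, fun p hp => ?_⟩
    have h1 := (h.flow s).ul (th p.1) (1 * th (-p.2))
    rw [hp.2] at h1
    have h2 := hM 0 (1 * th (-p.2)) 0
    rw [h1, (h.flow s).u0, sub_zero, sub_zero, one_mul] at h2
    have ab : ∀ x, |th x| = th |x| := fun x => by
      simp only [th, abs_mul, abs_abs, abs_of_nonneg (Real.sqrt_nonneg _)]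
    rw [ab, ab, abs_neg, ← th_thi M, ← th_mul] at h2
    have h3 := th_strictMono.le_iff_le.mp h2
    exact h3.trans (by gcongr; exact le_abs_self _)
  obtain ⟨C1, h1, k1⟩ := key true
  obtain ⟨C2, h2, k2⟩ := key false
  refine ⟨C1 + C2, by positivity, fun s p hp => ?_⟩
  cases s
  · exact (k2 p hp).trans (by gcongr; linarith)
  · exact (k1 p hp).trans (by gcongr; linarith)

end


section
variable {ω : (ℝ × ℝ) → (ℝ × ℝ) → ℝ} {N : Set (ℝ × ℝ)} {F u l : Bool → ℝ → ℝ → ℝ}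

lemma Good.v_ne (h : Good ω N F u l) {γ dγ : ℝ → ℝ × ℝ} {a b : ℝ} (hγ : IC ω N γ dγ a b)
    {t : ℝ} (ht : t ∈ Ioo a b) : (dγ t).2 ≠ 0 := by
  by_cases hz : γ t = 0
  swap
  · obtain ⟨s, hs⟩ := h.sec_of_ne hγ ht hz
    obtain ⟨κ, hκ, hw⟩ := h.fac (hγ.mem t ht) hs (hγ.an t ht)
    exact (h.fac_sign hs (hγ.ne t ht) hκ hw).2
  intro hv
  have hd := hγ.d t ht
  have ev := hd.eventually_ne (c := 0) (hγ.ne t ht)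
  have ev2 : ∀ᶠ r in nhdsWithin t (Ioi t), γ r ≠ 0 :=
    ev.filter_mono (nhdsWithin_mono t (fun r hr => ne_of_gt hr))
  obtain ⟨c, hc, hsub⟩ := mem_nhdsGT_iff_exists_Ioo_subset.mp ev2
  set c' := min c b with hc'
  have htc : t < c' := lt_min hc ht.2
  have hI : IC ω N γ dγ t c' := hγ.mono (fun r hr => ⟨ht.1.trans hr.1, hr.2.trans_le (min_le_right _ _)⟩)
  obtain ⟨s, κ, w, hκ, hl⟩ := h.leaf_of_ne hI
    (fun r hr => hsub ⟨hr.1, hr.2.trans_le (min_le_left _ _)⟩) htc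
  have evl : ∀ᶠ r in nhdsWithin t (Ioi t), γ r ∈ leaf l s κ w := by
    filter_upwards [Ioo_mem_nhdsGT htc] with r hr using hl r hr
  have h0 : Tendsto γ (nhdsWithin t (Ioi t)) (nhds 0) := by
    have := hd.continuousAt.tendsto.mono_left (nhdsWithin_le_nhds (s := Ioi t))
    rwa [hz] at this
  obtain ⟨rfl, rfl⟩ := h.leaf_zero h0 hκ evl
  obtain ⟨C, hC0, hC⟩ := h.sep_bound
  have s1 := (hasDerivAt_iff_tendsto_slope.mp (hd1 hd)).mono_left
    (nhdsWithin_mono t (fun r (hr : t < r) => ne_of_gt hr) : nhdsWithin t (Ioi t) ≤ _)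
  have s2 := (hasDerivAt_iff_tendsto_slope.mp (hd2 hd)).mono_left
    (nhdsWithin_mono t (fun r (hr : t < r) => ne_of_gt hr) : nhdsWithin t (Ioi t) ≤ _)
  have hle : |(dγ t).1| ≤ C * |(dγ t).2| := by
    refine le_of_tendsto_of_tendsto s1.abs (s2.abs.const_mul C) ?_
    filter_upwards [evl] with r hr
    simp only [slope, hz, vsub_eq_sub, sub_zero, smul_eq_mul, abs_mul, Prod.fst_zero, Prod.snd_zero]
    have := hC s _ hr
    calc |(r - t)⁻¹| * |(γ r).1| ≤ |(r - t)⁻¹| * (C * |(γ r).2|) := by gcongr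
      _ = _ := by ring
  rw [hv, abs_zero, mul_zero] at hle
  exact hγ.ne t ht (Prod.ext (abs_eq_zero.mp (le_antisymm hle (abs_nonneg _))) hv)

lemma leaf_graph (hfl : ∀ b, FlowData (F b) (u b) (l b)) {L : Set (ℝ × ℝ)} (hL : IsLeaf l L)
    {p q : ℝ × ℝ} (hp : p ∈ L) (hq : q ∈ L) (he : p.2 = q.2) : p = q := by
  have key : ∀ b κ w, ∀ p ∈ leaf l b κ w, ∀ q ∈ leaf l b κ w, p.2 = q.2 → p = q := by
    intro b κ w p hp q hq he
    have h1 := hp.2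
    have h2 := hq.2
    rw [← h2, he] at h1
    exact Prod.ext (th_strictMono.injective (((hfl b).mono _).injective h1)) he
  rcases hL with ⟨b, κ, w, hκ, rfl⟩ | rfl
  · exact key b κ w p hp q hq he
  · rcases hp with rfl | ⟨b, hp⟩
    · rcases hq with rfl | ⟨b', hq⟩
      · rfl
      · exact absurd he.symm (sec_ne2 hq.1)
    · rcases hq with rfl | ⟨b', hq⟩
      · exact absurd he (sec_ne2 hp.1)
      · have : b = b' := by
          have h1 := hp.1.2
          have h2 := hq.1.2
          rw [he] at h1
          cases b <;> cases b' <;> simp [sg] at h1 h2 ⊢ <;> linarith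
        subst this
        exact key b 1 0 p hp q hq he

lemma Good.arc_of_leaf (h : Good ω N F u l) {γ dγ : ℝ → ℝ × ℝ} {a b : ℝ} (hγ : IC ω N γ dγ a b)
    {L : Set (ℝ × ℝ)} (hL : IsLeaf l L) (hm : ∀ t ∈ Ioo a b, γ t ∈ L) :
    IsArc l (γ '' Ioo a b) := by
  have hc : ContinuousOn γ (Ioo a b) := fun t ht => (hγ.d t ht).continuousAt.continuousWithinAt
  have hs : ∀ t ∈ Ioo a b, HasStrictDerivAt (fun t => (γ t).2) (dγ t).2 t := by
    intro t ht
    refine hasStrictDerivAt_of_hasDerivAt_of_continuousAt (f' := fun t => (dγ t).2) ?_ ?_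
    · filter_upwards [isOpen_Ioo.mem_nhds ht] with r hr using hd2 (hγ.d r hr)
    · exact (continuous_snd.comp_continuousOn hγ.cd).continuousAt (isOpen_Ioo.mem_nhds ht)
  have hR : IsOpen ((fun t => (γ t).2) '' Ioo a b) := by
    rw [isOpen_iff_mem_nhds]
    rintro _ ⟨t, ht, rfl⟩
    rw [← (hs t ht).map_nhds_eq (h.v_ne hγ ht)]
    exact image_mem_map (isOpen_Ioo.mem_nhds ht)
  refine ⟨L, _, hL, hR.preimage continuous_snd, ?_, isPreconnected_Ioo.image _ hc⟩
  apply Subset.antisymm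
  · rintro _ ⟨t, ht, rfl⟩
    exact ⟨⟨t, ht, rfl⟩, hm t ht⟩
  · rintro p ⟨⟨t, ht, he⟩, hp⟩
    exact ⟨t, ht, leaf_graph h.flow hL (hm t ht) hp he⟩

theorem Good.arc (h : Good ω N F u l) {γ dγ : ℝ → ℝ × ℝ} {a b : ℝ} (hγ : IC ω N γ dγ a b)
    (hab : a < b) : IsArc l (γ '' Ioo a b) := by
  by_cases hz : ∃ t0 ∈ Ioo a b, γ t0 = 0
  swap
  · push Not at hz
    obtain ⟨s, κ, w, hκ, hl⟩ := h.leaf_of_ne hγ hz hab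
    exact h.arc_of_leaf hγ (Or.inl ⟨s, κ, w, hκ, rfl⟩) hl
  obtain ⟨t0, ht0, hz⟩ := hz
  refine h.arc_of_leaf hγ (Or.inr rfl) ?_
  have inj : ∀ t ∈ Ioo a b, γ t = 0 → t = t0 := by
    intro t ht htz
    by_contra hne
    have key : ∀ r ∈ Ioo a b, ∀ r' ∈ Ioo a b, r < r' → (γ r).2 = (γ r').2 → False := by
      intro r hr r' hr' hlt he
      have hsub : Icc r r' ⊆ Ioo a b := fun z hz => ⟨hr.1.trans_le hz.1, hz.2.trans_lt hr'.2⟩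
      obtain ⟨c, hc, hc0⟩ := exists_hasDerivAt_eq_zero (f := fun t => (γ t).2)
        (f' := fun t => (dγ t).2) hlt
        (fun z hz => (hd2 (hγ.d z (hsub hz))).continuousAt.continuousWithinAt) he
        (fun z hz => hd2 (hγ.d z (hsub (Ioo_subset_Icc_self hz))))
      exact h.v_ne hγ (hsub (Ioo_subset_Icc_self hc)) hc0
    rcases lt_or_gt_of_ne hne with h1 | h1
    · exact key t ht t0 ht0 h1 (by rw [htz, hz])
    · exact key t0 ht0 t ht h1 (by rw [htz, hz])
  have hlim := (hγ.d t0 ht0).continuousAt.tendsto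
  rw [hz] at hlim
  intro t ht
  rcases lt_trichotomy t t0 with h1 | h1 | h1
  · have hI : IC ω N γ dγ a t0 := hγ.mono (fun r hr => ⟨hr.1, hr.2.trans ht0.2⟩)
    obtain ⟨s, κ, w, hκ, hl⟩ := h.leaf_of_ne hI
      (fun r hr h0 => hr.2.ne (inj r ⟨hr.1, hr.2.trans ht0.2⟩ h0)) ht0.1
    obtain ⟨rfl, rfl⟩ := h.leaf_zero (hlim.mono_left (nhdsWithin_le_nhds (s := Iio t0))) hκ
      (by filter_upwards [Ioo_mem_nhdsLT ht0.1] with r hr using hl r hr)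
    exact Or.inr ⟨s, hl t ⟨ht.1, h1⟩⟩
  · rw [h1]; exact Or.inl hz
  · have hI : IC ω N γ dγ t0 b := hγ.mono (fun r hr => ⟨ht0.1.trans hr.1, hr.2⟩)
    obtain ⟨s, κ, w, hκ, hl⟩ := h.leaf_of_ne hI
      (fun r hr h0 => hr.1.ne' (inj r ⟨ht0.1.trans hr.1, hr.2⟩ h0)) ht0.2
    obtain ⟨rfl, rfl⟩ := h.leaf_zero (hlim.mono_left (nhdsWithin_le_nhds (s := Ioi t0))) hκ
      (by filter_upwards [Ioo_mem_nhdsGT ht0.2] with r hr using hl r hr)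
    exact Or.inr ⟨s, hl t ⟨h1, ht.2⟩⟩

/-- parametrisation of a leaf by `t = -v` -/
def gr (u : Bool → ℝ → ℝ → ℝ) (b : Bool) (κ w t : ℝ) : ℝ := thi (u b w (κ * th t))

lemma gr_cont (hfl : ∀ b, FlowData (F b) (u b) (l b)) (b : Bool) (κ w : ℝ) :
    Continuous (gr u b κ w) :=
  thi_cont.comp (((hfl b).u_cont w).comp (continuous_const.mul th_cont))

lemma gr_deriv (hfl : ∀ b, FlowData (F b) (u b) (l b)) {b : Bool} {κ w t : ℝ}
    (h0 : gr u b κ w t ≠ 0) : HasDerivAt (gr u b κ w)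
      (κ * F b (th (gr u b κ w t)) (κ * th t) * √|t| / √|gr u b κ w t|) t := by
  have h1 := ((hfl b).du w (κ * th t)).comp t ((th_deriv t).const_mul κ)
  have h2 := (thi_deriv (y := u b w (κ * th t)) h0).comp t h1
  refine h2.congr_deriv ?_
  have e : th (gr u b κ w t) = u b w (κ * th t) := th_thi _
  rw [e]
  have : √|gr u b κ w t| ≠ 0 := (Real.sqrt_pos.mpr (abs_pos.mpr h0)).ne'
  change (3 / 2 * √|gr u b κ w t|)⁻¹ * _ = _
  field_simp

lemma mem_leaf_iff (hfl : ∀ b, FlowData (F b) (u b) (l b)) {b : Bool} {κ w : ℝ} {p : ℝ × ℝ} :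
    p ∈ leaf l b κ w ↔ p ∈ sec b ∧ p = (gr u b κ w (-p.2), - -p.2) := by
  constructor
  · intro hp
    refine ⟨hp.1, Prod.ext ?_ (by simp)⟩
    have := (hfl b).ul (th p.1) (κ * th (-p.2))
    rw [hp.2] at this
    simp only [gr]
    rw [this, thi_th]
  · rintro ⟨h1, h2⟩
    refine ⟨h1, ?_⟩
    have h3 : p.1 = gr u b κ w (-p.2) := congrArg Prod.fst h2
    rw [h3, gr, th_thi, (hfl b).lu]

lemma Good.an_gr (h : Good ω N F u l) {b : Bool} {κ w t : ℝ} (hκ : κ = 1 ∨ κ = -1)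
    (hN : (gr u b κ w t, -t) ∈ N) (hs : (gr u b κ w t, -t) ∈ sec b) :
    ω (gr u b κ w t, -t) (κ * F b (th (gr u b κ w t)) (κ * th t) * √|t| / √|gr u b κ w t|, -1) = 0 := by
  refine h.fac_conv hN hs hκ ?_
  have : √|gr u b κ w t| ≠ 0 := (Real.sqrt_pos.mpr (abs_pos.mpr (sec_ne1 hs))).ne'
  simp only [neg_neg, abs_neg]
  field_simp

lemma Good.curve_leaf (h : Good ω N F u l) {b : Bool} {κ w : ℝ} (hκ : κ = 1 ∨ κ = -1)
    {T O : Set (ℝ × ℝ)} (hO : IsOpen O) (hT : T = O ∩ leaf l b κ w) (hp : IsPreconnected T)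
    (hN : T ⊆ N) : ∃ σ J, IsIntegralCurveOnBDE ω σ J ∧ T = σ '' J := by
  set G : ℝ → ℝ × ℝ := fun t => (gr u b κ w t, -t) with hG
  have hGc : Continuous G := (gr_cont h.flow b κ w).prodMk continuous_neg
  set R : Set ℝ := G ⁻¹' (O ∩ sec b) with hR
  have hRo : IsOpen R := (hO.inter (sec_open b)).preimage hGc
  have memT : ∀ p, p ∈ T ↔ (-p.2 ∈ R ∧ G (-p.2) = p) := by
    intro p
    rw [hT, mem_inter_iff, mem_leaf_iff h.flow]
    constructor
    · rintro ⟨h1, h2, h3⟩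
      refine ⟨?_, h3.symm⟩
      change G (-p.2) ∈ O ∩ sec b
      rw [show G (-p.2) = p from h3.symm]; exact ⟨h1, h2⟩
    · rintro ⟨h1, h3⟩
      have h1 : G (-p.2) ∈ O ∩ sec b := h1
      rw [h3] at h1
      exact ⟨h1.1, h1.2, h3.symm⟩
  have hTR : T = G '' R := by
    ext p
    rw [memT]
    constructor
    · rintro ⟨h1, h2⟩; exact ⟨_, h1, h2⟩
    · rintro ⟨t, ht, rfl⟩
      simp only [hG, neg_neg]
      exact ⟨ht, trivial⟩
  have hRT : R = (fun p : ℝ × ℝ => -p.2) '' T := by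
    rw [hTR, image_image]; simp [hG]
  have hRp : IsPreconnected R := by
    rw [hRT]; exact hp.image _ (by fun_prop)
  have hRb : Bornology.IsBounded R := by
    rw [hRT]
    have h1 := ((h.bd.subset hN).image_snd).neg
    refine h1.subset ?_
    rintro _ ⟨p, hp, rfl⟩
    simpa using ⟨p.1, hp⟩
  obtain ⟨a, c, hac⟩ := ioo_of_open hRo hRp hRb
  refine ⟨G, R, ⟨⟨a, c, hac⟩, fun t => (κ * F b (th (gr u b κ w t)) (κ * th t) * √|t| / √|gr u b κ w t|, -1),
    ?_, fun t ht => ⟨?_, ?_, ?_⟩⟩, hTR⟩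
  · refine ContinuousOn.prodMk (ContinuousOn.div ?_ ?_ ?_) continuousOn_const
    · have c1 := gr_cont h.flow b κ w
      have c2 : Continuous (fun t => F b (th (gr u b κ w t)) (κ * th t)) :=
        (h.flow b).cont.comp ((th_cont.comp c1).prodMk (continuous_const.mul th_cont))
      exact ((continuous_const.mul c2).mul (by fun_prop)).continuousOn
    · have c1 := gr_cont h.flow b κ w
      fun_prop
    · intro t ht
      exact (Real.sqrt_pos.mpr (abs_pos.mpr (sec_ne1 ht.2))).ne'
  · exact (gr_deriv h.flow (sec_ne1 ht.2)).prodMk (hasDerivAt_neg t)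
  · intro h0; simpa using congrArg Prod.snd h0
  · exact h.an_gr hκ (hN (by rw [hTR]; exact ⟨t, ht, rfl⟩)) ht.2

end


section
variable {ω : (ℝ × ℝ) → (ℝ × ℝ) → ℝ} {N : Set (ℝ × ℝ)} {F u l : Bool → ℝ → ℝ → ℝ}

/-- derivative of the parametrised leaf -/
def dgr (F u : Bool → ℝ → ℝ → ℝ) (b : Bool) (κ w t : ℝ) : ℝ :=
  κ * F b (th (gr u b κ w t)) (κ * th t) * √|t| / √|gr u b κ w t|

lemma gr_zero (hfl : ∀ b, FlowData (F b) (u b) (l b)) (b : Bool) : gr u b 1 0 0 = 0 := by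
  simp [gr, th_zero, (hfl b).u0, thi_zero]

lemma gr_pos (hfl : ∀ b, FlowData (F b) (u b) (l b)) (b : Bool) {t : ℝ} (ht : 0 < t) :
    0 < gr u b 1 0 t := by
  rw [← th_pos_iff, gr, th_thi, one_mul]
  have := (hfl b).u_strictMono 0 (th_pos ht)
  rwa [(hfl b).u0 0] at this

lemma gr_neg (hfl : ∀ b, FlowData (F b) (u b) (l b)) (b : Bool) {t : ℝ} (ht : t < 0) :
    gr u b 1 0 t < 0 := by
  rw [← th_neg_iff, gr, th_thi, one_mul]
  have := (hfl b).u_strictMono 0 (th_neg_iff.mpr ht)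
  rwa [(hfl b).u0 0] at this

lemma gr_ne (hfl : ∀ b, FlowData (F b) (u b) (l b)) (b : Bool) {t : ℝ} (ht : t ≠ 0) :
    gr u b 1 0 t ≠ 0 := by
  rcases lt_or_gt_of_ne ht with h | h
  · exact (gr_neg hfl b h).ne
  · exact (gr_pos hfl b h).ne'

lemma dgr_tendsto (hfl : ∀ b, FlowData (F b) (u b) (l b)) (b : Bool) :
    Tendsto (dgr F u b 1 0) (nhdsWithin 0 {0}ᶜ) (nhds 1) := by
  have hth : Tendsto th (nhdsWithin 0 {0}ᶜ) (nhdsWithin 0 {0}ᶜ) := by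
    refine tendsto_nhdsWithin_iff.mpr ⟨?_, ?_⟩
    · have := (th_cont.tendsto 0).mono_left (nhdsWithin_le_nhds (s := {0}ᶜ))
      rwa [th_zero] at this
    · filter_upwards [self_mem_nhdsWithin] with t ht h0
      exact ht (th_eq_zero.mp h0)
  have h1 := (hasDerivAt_iff_tendsto_slope.mp ((hfl b).du 0 0)).comp hth
  rw [(hfl b).u0, (hfl b).F00] at h1
  have h2 := (thi_cont.tendsto 1).comp h1
  rw [thi_one] at h2
  have h3 : Tendsto (fun t => gr u b 1 0 t / t) (nhdsWithin 0 {0}ᶜ) (nhds 1) := by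
    refine h2.congr' ?_
    filter_upwards [self_mem_nhdsWithin] with t ht
    have ht : t ≠ 0 := ht
    simp only [Function.comp, slope, vsub_eq_sub, sub_zero, smul_eq_mul, (hfl b).u0]
    rw [gr, one_mul, ← thi_div _ _ ht]
    congr 1; ring
  have c1 := gr_cont hfl b 1 0
  have c2 : Continuous (fun t => F b (th (gr u b 1 0 t)) (1 * th t)) :=
    (hfl b).cont.comp ((th_cont.comp c1).prodMk (continuous_const.mul th_cont))
  have h4 := (c2.tendsto 0).mono_left (nhdsWithin_le_nhds (s := {0}ᶜ))
  rw [gr_zero hfl, th_zero, mul_zero, (hfl b).F00] at h4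
  have h5 := h4.div h3.abs.sqrt (by simp)
  simp only [abs_one, Real.sqrt_one, div_one] at h5
  refine h5.congr' ?_
  filter_upwards [self_mem_nhdsWithin] with t ht
  have ht : t ≠ 0 := ht
  simp only [dgr, Pi.div_apply, one_mul]
  rw [abs_div, Real.sqrt_div (abs_nonneg _)]
  have a1 : √|t| ≠ 0 := (Real.sqrt_pos.mpr (abs_pos.mpr ht)).ne'
  have a2 : √|gr u b 1 0 t| ≠ 0 := (Real.sqrt_pos.mpr (abs_pos.mpr (gr_ne hfl b ht))).ne'
  field_simp

lemma dgr_cont (hfl : ∀ b, FlowData (F b) (u b) (l b)) (b : Bool) {t : ℝ} (ht : t ≠ 0) :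
    ContinuousAt (dgr F u b 1 0) t := by
  have c1 := gr_cont hfl b 1 0
  have c2 : Continuous (fun t => F b (th (gr u b 1 0 t)) (1 * th t)) :=
    (hfl b).cont.comp ((th_cont.comp c1).prodMk (continuous_const.mul th_cont))
  refine ContinuousAt.div ((continuous_const.mul c2).mul (by fun_prop)).continuousAt
    (by fun_prop) (Real.sqrt_pos.mpr (abs_pos.mpr (gr_ne hfl b ht))).ne'

lemma Good.curve_sep (h : Good ω N F u l)
    {T O : Set (ℝ × ℝ)} (hO : IsOpen O) (hT : T = O ∩ sepx l) (hp : IsPreconnected T)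
    (hN : T ⊆ N) : ∃ σ J, IsIntegralCurveOnBDE ω σ J ∧ T = σ '' J := by
  have hfl := h.flow
  set g : ℝ → ℝ := fun t => if 0 < t then gr u true 1 0 t else gr u false 1 0 t with hg
  set d : ℝ → ℝ := fun t => if t = 0 then 1 else
    (if 0 < t then dgr F u true 1 0 t else dgr F u false 1 0 t) with hd
  have gev : ∀ t, t ≠ 0 → ∃ b, (gr u b 1 0 t, -t) ∈ sec b ∧ g =ᶠ[nhds t] gr u b 1 0 ∧
      d =ᶠ[nhds t] dgr F u b 1 0 := by
    intro t ht
    rcases lt_or_gt_of_ne ht with h1 | h1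
    · refine ⟨false, ⟨?_, ?_⟩, ?_, ?_⟩
      · simp [sg, gr_neg hfl false h1]
      · simp [sg, h1]
      · filter_upwards [gt_mem_nhds h1] with r hr
        simp [hg, not_lt.mpr (le_of_lt hr)]
      · filter_upwards [gt_mem_nhds h1] with r hr
        simp [hd, not_lt.mpr (le_of_lt hr), ne_of_lt hr]
    · refine ⟨true, ⟨?_, ?_⟩, ?_, ?_⟩
      · simp [sg, gr_pos hfl true h1]
      · simp [sg, h1]
      · filter_upwards [lt_mem_nhds h1] with r hr
        simp [hg, hr]
      · filter_upwards [lt_mem_nhds h1] with r hr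
        simp [hd, hr, ne_of_gt hr]
  have g0 : g 0 = 0 := by simp [hg, gr_zero hfl]
  have d0 : d 0 = 1 := by simp [hd]
  have gc0 : ContinuousAt g 0 := by
    rw [ContinuousAt, g0]
    refine Tendsto.if' ?_ ?_
    · have := (gr_cont hfl true 1 0).tendsto 0
      rwa [gr_zero hfl] at this
    · have := (gr_cont hfl false 1 0).tendsto 0
      rwa [gr_zero hfl] at this
  have dc0 : ContinuousAt d 0 := by
    rw [continuousAt_iff_punctured_nhds, d0]
    have := Tendsto.if' (p := fun t : ℝ => 0 < t) (dgr_tendsto hfl true) (dgr_tendsto hfl false)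
    refine this.congr' ?_
    filter_upwards [self_mem_nhdsWithin] with t ht
    have ht : t ≠ 0 := ht
    simp [hd, ht]
  have gd : ∀ t, t ≠ 0 → HasDerivAt g (d t) t := by
    intro t ht
    obtain ⟨b, _, e1, e2⟩ := gev t ht
    rw [e2.eq_of_nhds]
    exact (gr_deriv hfl (gr_ne hfl b ht)).congr_of_eventuallyEq e1
  have gd' : ∀ t, HasDerivAt g (d t) t := by
    intro t
    by_cases ht : t = 0
    · rw [ht]; exact hasDerivAt_of_hasDerivAt_of_ne gd gc0 dc0
    · exact gd t ht
  have dc : Continuous d := continuous_iff_continuousAt.mpr fun t => by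
    by_cases ht : t = 0
    · rw [ht]; exact dc0
    · obtain ⟨b, _, e1, e2⟩ := gev t ht
      exact (dgr_cont hfl b ht).congr e2.symm
  have gc : Continuous g := continuous_iff_continuousAt.mpr fun t => (gd' t).continuousAt
  set G : ℝ → ℝ × ℝ := fun t => (g t, -t) with hG
  have hGc : Continuous G := gc.prodMk continuous_neg
  set R : Set ℝ := G ⁻¹' O with hR
  have hRo : IsOpen R := hO.preimage hGc
  have Gmem : ∀ t, G t ∈ sepx l := by
    intro t
    by_cases ht : t = 0
    · left; rw [hG, ht]; simp [g0]
    · right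
      obtain ⟨b, hb, e1, e2⟩ := gev t ht
      refine ⟨b, (mem_leaf_iff hfl).mpr ⟨?_, ?_⟩⟩
      · simp only [hG, e1.eq_of_nhds]; exact hb
      · simp only [hG, e1.eq_of_nhds, neg_neg]
  have hTR : T = G '' R := by
    rw [hT]
    apply Subset.antisymm
    · rintro p ⟨h1, h2⟩
      have e := leaf_graph hfl (Or.inr rfl) h2 (Gmem (-p.2)) (by simp [hG])
      exact ⟨-p.2, by rw [hR, mem_preimage, ← e]; exact h1, e.symm⟩
    · rintro _ ⟨t, ht, rfl⟩
      exact ⟨ht, Gmem t⟩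
  have hRT : R = (fun p : ℝ × ℝ => -p.2) '' T := by
    rw [hTR, image_image]; simp [hG]
  have hRp : IsPreconnected R := by
    rw [hRT]; exact hp.image _ (by fun_prop)
  have hRb : Bornology.IsBounded R := by
    rw [hRT]
    have h1 := ((h.bd.subset hN).image_snd).neg
    refine h1.subset ?_
    rintro _ ⟨p, hp, rfl⟩
    simpa using ⟨p.1, hp⟩
  obtain ⟨a, c, hac⟩ := ioo_of_open hRo hRp hRb
  refine ⟨G, R, ⟨⟨a, c, hac⟩, fun t => (d t, -1), ?_, fun t ht => ⟨?_, ?_, ?_⟩⟩, hTR⟩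
  · exact (dc.prodMk continuous_const).continuousOn
  · exact (gd' t).prodMk (hasDerivAt_neg t)
  · intro h0; simpa using congrArg Prod.snd h0
  · by_cases h0 : t = 0
    · have : G t = 0 := by rw [hG, h0]; simp [g0]
      rw [this]; exact h.zero _
    · obtain ⟨b, hb, e1, e2⟩ := gev t h0
      have hm : G t ∈ N := hN (by rw [hTR]; exact ⟨t, ht, rfl⟩)
      simp only [hG, e1.eq_of_nhds, e2.eq_of_nhds] at hm ⊢
      exact h.an_gr (Or.inl rfl) hm hb

theorem Good.curve (h : Good ω N F u l) {T : Set (ℝ × ℝ)} (hT : IsArc l T) (hN : T ⊆ N) :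
    ∃ σ J, IsIntegralCurveOnBDE ω σ J ∧ T = σ '' J := by
  obtain ⟨L, O, hL, hO, hT, hp⟩ := hT
  rcases hL with ⟨b, κ, w, hκ, rfl⟩ | rfl
  · exact h.curve_leaf hκ hO hT hp hN
  · exact h.curve_sep hO hT hp hN

/-- integral curves (possibly empty) as arcs -/
theorem Good.arc' (h : Good ω N F u l) {γ : ℝ → ℝ × ℝ} {I : Set ℝ} (hγ : IsIntegralCurveOnBDE ω γ I)
    (hN : MapsTo γ I N) : IsArc l (γ '' I) := by
  obtain ⟨⟨a, b, rfl⟩, dγ, hc, hd⟩ := hγ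
  rcases lt_or_ge a b with hab | hab
  · exact h.arc ⟨hc, fun t ht => (hd t ht).1, fun t ht => (hd t ht).2.1, fun t ht => (hd t ht).2.2,
      fun t ht => hN ht⟩ hab
  · rw [Ioo_eq_empty (not_lt.mpr hab), image_empty]
    exact ⟨sepx l, ∅, Or.inr rfl, isOpen_empty, by simp, isPreconnected_empty⟩

theorem Good.topEquiv {ω' : (ℝ × ℝ) → (ℝ × ℝ) → ℝ} {N' : Set (ℝ × ℝ)} {F' u' l' : Bool → ℝ → ℝ → ℝ}
    (h : Good ω N F u l) (h' : Good ω' N' F' u' l') (H : (ℝ × ℝ) ≃ₜ (ℝ × ℝ)) (H0 : H 0 = 0)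
    (Hs : ∀ b p, H p ∈ sec b ↔ p ∈ sec b)
    (Hl : ∀ b κ p, (κ = 1 ∨ κ = -1) → p ∈ sec b →
      l' b (th (H p).1) (κ * th (-(H p).2)) = l b (th p.1) (κ * th (-p.2))) :
    TopEquivAt0 ω ω' := by
  have leafH : ∀ b κ w, (κ = 1 ∨ κ = -1) → ∀ p, p ∈ leaf l b κ w ↔ H p ∈ leaf l' b κ w := by
    intro b κ w hκ p
    constructor
    · rintro ⟨h1, h2⟩; exact ⟨(Hs b p).mpr h1, by rw [Hl b κ p hκ h1, h2]⟩
    · rintro ⟨h1, h2⟩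
      have h1 := (Hs b p).mp h1
      exact ⟨h1, by rw [← Hl b κ p hκ h1, h2]⟩
  have sepH : ∀ p, p ∈ sepx l ↔ H p ∈ sepx l' := by
    intro p
    have : p = 0 ↔ H p = 0 := by
      conv_rhs => rw [← H0]
      exact H.injective.eq_iff.symm
    simp only [sepx, mem_ofPred_eq, ← this, leafH _ 1 0 (Or.inl rfl) p]
  have arcH : ∀ T, IsArc l T → IsArc l' (H '' T) := by
    rintro T ⟨L, O, hL, hO, rfl, hp⟩
    refine ⟨H '' L, H '' O, ?_, H.isOpenMap _ hO, image_inter H.injective,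
      hp.image _ H.continuous.continuousOn⟩
    rcases hL with ⟨b, κ, w, hκ, rfl⟩ | rfl
    · refine Or.inl ⟨b, κ, w, hκ, ?_⟩
      ext q; rw [← H.apply_symm_apply q, H.injective.mem_set_image, leafH b κ w hκ]
    · refine Or.inr ?_
      ext q; rw [← H.apply_symm_apply q, H.injective.mem_set_image, sepH]
  have arcH' : ∀ T, IsArc l' T → IsArc l (H.symm '' T) := by
    rintro T ⟨L, O, hL, hO, rfl, hp⟩
    refine ⟨H.symm '' L, H.symm '' O, ?_, H.symm.isOpenMap _ hO, image_inter H.symm.injective,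
      hp.image _ H.symm.continuous.continuousOn⟩
    rcases hL with ⟨b, κ, w, hκ, rfl⟩ | rfl
    · refine Or.inl ⟨b, κ, w, hκ, ?_⟩
      ext q; rw [← H.symm_apply_apply q, H.symm.injective.mem_set_image, ← leafH b κ w hκ]; simp
    · refine Or.inr ?_
      ext q; rw [← H.symm_apply_apply q, H.symm.injective.mem_set_image, ← sepH]; simp
  refine ⟨N ∩ H ⁻¹' N', N' ∩ H.symm ⁻¹' N, H, H.symm, h.op.inter (h'.op.preimage H.continuous),
    h'.op.inter (h.op.preimage H.symm.continuous), ⟨h.mem0, ?_⟩, ⟨h'.mem0, ?_⟩, H0,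
    H.continuous.continuousOn, H.symm.continuous.continuousOn, ?_, ?_, ?_, ?_⟩
  · simp [H0, h'.mem0]
  · have : H.symm 0 = 0 := by rw [← H0, H.symm_apply_apply, H0]
    simp [this, h.mem0]
  · refine ⟨fun p hp => ⟨hp.2, by simpa using hp.1⟩, H.injective.injOn, fun q hq =>
      ⟨H.symm q, ⟨hq.2, by simpa using hq.1⟩, by simp⟩⟩
  · exact ⟨fun p _ => by simp, fun p _ => by simp⟩
  · intro γ I hγ hm
    have h1 := arcH _ (h.arc' hγ (fun t ht => (hm ht).1))
    exact h'.curve h1 (by rintro _ ⟨_, ⟨t, ht, rfl⟩, rfl⟩; exact (hm ht).2)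
  · intro γ I hγ hm
    have h1 := arcH' _ (h'.arc' hγ (fun t ht => (hm ht).1))
    exact h.curve h1 (by rintro _ ⟨_, ⟨t, ht, rfl⟩, rfl⟩; exact (hm ht).2)

end


/-- the linear flow -/
lemma flow_one : FlowData (fun _ _ => 1) (fun w s => w + s) (fun U s => U - s) where
  cont := continuous_const
  pos := ⟨1, one_pos, fun _ _ => le_refl _⟩
  bdd := ⟨1, fun _ _ => le_refl _⟩
  u0 := fun w => by simp
  du := fun w s => by simpa using (hasDerivAt_id s).const_add w
  lu := fun w s => by ring
  ul := fun w s => by ring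
  lip := fun U U' s => by
    rw [show U - s - (U' - s) = U - U' by ring]; linarith [abs_nonneg (U - U')]
  lipu := fun U U' s => by
    rw [show U + s - (U' + s) = U - U' by ring]; linarith [abs_nonneg (U - U')]
  mono := fun s a b hab => by simpa using hab
  odd := fun U s => by ring
  F00 := rfl

lemma sign_iff_of_mono {g : ℝ → ℝ} (hg : StrictMono g) (h0 : g 0 = 0) (x : ℝ) :
    (0 < g x ↔ 0 < x) ∧ (g x < 0 ↔ x < 0) := by
  constructor
  · conv_lhs => rw [← h0]
    exact hg.lt_iff_lt
  · conv_lhs => rw [← h0]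
    exact hg.lt_iff_lt

lemma FlowData.homeo_sign {F u l : ℝ → ℝ → ℝ} (h : FlowData F u l) {p q : ℝ × ℝ}
    (h1 : q.1 - q.2 = l p.1 p.2) (h2 : q.1 + q.2 = l p.1 (-p.2)) :
    (0 < q.1 ↔ 0 < p.1) ∧ (q.1 < 0 ↔ p.1 < 0) ∧ (0 < q.2 ↔ 0 < p.2) ∧ (q.2 < 0 ↔ p.2 < 0) := by
  have a := sign_iff_of_mono (g := fun U => (l U p.2 + l U (-p.2)) / 2)
    (fun x y hxy => by
      have h1 := h.mono p.2 hxy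
      have h2 := h.mono (-p.2) hxy
      simp only at h1 h2 ⊢; linarith) (by
      have := h.odd 0 p.2
      rw [neg_zero] at this
      simp only [this]; ring) p.1
  have b := sign_iff_of_mono (g := fun S => (l p.1 (-S) - l p.1 S) / 2)
    (fun x y hxy => by
      have h1 := h.l_anti p.1 hxy
      have h2 := h.l_anti p.1 (neg_lt_neg hxy)
      simp only at h1 h2 ⊢; linarith) (by simp) p.2
  rw [← h1, ← h2] at a b
  rw [show (q.1 - q.2 + (q.1 + q.2)) / 2 = q.1 by ring] at a
  rw [show (q.1 + q.2 - (q.1 - q.2)) / 2 = q.2 by ring] at b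
  exact ⟨a.1, a.2, b.1, b.2⟩

lemma sec_iff_th {b : Bool} {p : ℝ × ℝ} :
    p ∈ sec b ↔ 0 < sg b * th p.1 ∧ 0 < sg b * th (-p.2) := by
  have e1 : 0 < -th p.1 ↔ p.1 < 0 := by rw [neg_pos]; exact th_neg_iff
  have e2 : 0 < -th (-p.2) ↔ 0 < p.2 := by rw [neg_pos, th_neg_iff, neg_lt_zero]
  have e3 : 0 < th (-p.2) ↔ p.2 < 0 := by rw [th_pos_iff, neg_pos]
  cases b
  · simp only [sec, mem_ofPred_eq, sg, Bool.false_eq_true, if_false, neg_one_mul, e1, e2]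
    constructor <;> rintro ⟨h1, h2⟩ <;> constructor <;> linarith
  · simp only [sec, mem_ofPred_eq, sg, if_true, one_mul, th_pos_iff, e3]

theorem glue_homeo {F u l : Bool → ℝ → ℝ → ℝ} (hfl : ∀ b, FlowData (F b) (u b) (l b)) :
    ∃ H : (ℝ × ℝ) ≃ₜ (ℝ × ℝ), H 0 = 0 ∧ (∀ b p, H p ∈ sec b ↔ p ∈ sec b) ∧
      ∀ b κ p, (κ = 1 ∨ κ = -1) → p ∈ sec b →
        th (H p).1 - κ * th (-(H p).2) = l b (th p.1) (κ * th (-p.2)) := by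
  obtain ⟨A, hA⟩ := (hfl true).exists_homeo
  obtain ⟨B, hB⟩ := (hfl false).exists_homeo
  have sA := fun p : ℝ × ℝ => (hfl true).homeo_sign (hA p.1 p.2).1 (hA p.1 p.2).2
  have sB := fun p : ℝ × ℝ => (hfl false).homeo_sign (hB p.1 p.2).1 (hB p.1 p.2).2
  have A0 : ∀ p : ℝ × ℝ, p.2 = 0 → A p = p := by
    rintro ⟨U, S⟩ (rfl : S = 0)
    have := hA U 0
    rw [neg_zero, (hfl true).l0] at this
    exact Prod.ext (by linarith) (by simp only; linarith)
  have B0 : ∀ p : ℝ × ℝ, p.2 = 0 → B p = p := by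
    rintro ⟨U, S⟩ (rfl : S = 0)
    have := hB U 0
    rw [neg_zero, (hfl false).l0] at this
    exact Prod.ext (by linarith) (by simp only; linarith)
  have A0' : ∀ p : ℝ × ℝ, p.2 = 0 → A.symm p = p := fun p hp => by
    rw [Homeomorph.symm_apply_eq, A0 p hp]
  have B0' : ∀ p : ℝ × ℝ, p.2 = 0 → B.symm p = p := fun p hp => by
    rw [Homeomorph.symm_apply_eq, B0 p hp]
  let C : (ℝ × ℝ) ≃ₜ (ℝ × ℝ) :=
    { toFun := fun p => if 0 ≤ p.2 then A p else B p
      invFun := fun p => if 0 ≤ p.2 then A.symm p else B.symm p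
      left_inv := fun p => by
        by_cases h : 0 ≤ p.2
        · have : 0 ≤ (A p).2 := by
            by_contra hc
            exact absurd ((sA p).2.2.2.mp (not_le.mp hc)) (not_lt.mpr h)
          simp [h, this]
        · have : ¬ 0 ≤ (B p).2 := not_le.mpr ((sB p).2.2.2.mpr (not_le.mp h))
          simp [h, this]
      right_inv := fun p => by
        by_cases h : 0 ≤ p.2
        · have : 0 ≤ (A.symm p).2 := by
            by_contra hc
            have := (sA (A.symm p)).2.2.2.mpr (not_le.mp hc)
            simp at this
            exact absurd this (not_lt.mpr h)
          simp [h, this]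
        · have : ¬ 0 ≤ (B.symm p).2 := by
            refine not_le.mpr ((sB (B.symm p)).2.2.2.mp ?_)
            simpa using h
          simp [h, this]
      continuous_toFun := by
        refine Continuous.if_le A.continuous B.continuous continuous_const continuous_snd ?_
        intro p hp; rw [A0 p hp.symm, B0 p hp.symm]
      continuous_invFun := by
        refine Continuous.if_le A.symm.continuous B.symm.continuous continuous_const
          continuous_snd ?_
        intro p hp; rw [A0' p hp.symm, B0' p hp.symm] }
  have Cdef : ∀ p : ℝ × ℝ, C p = if 0 ≤ p.2 then A p else B p := fun p => rfl
  let Q : (ℝ × ℝ) ≃ₜ (ℝ × ℝ) := thE.prodCongr ((Homeomorph.neg ℝ).trans thE)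
  have Qdef : ∀ p : ℝ × ℝ, Q p = (th p.1, th (-p.2)) := fun p => rfl
  let H := (Q.trans C).trans Q.symm
  have key : ∀ p : ℝ × ℝ, (th (H p).1, th (-(H p).2)) = C (th p.1, th (-p.2)) := by
    intro p
    rw [← Qdef, ← Qdef]
    simp [H]
  have Hs : ∀ b p, H p ∈ sec b ↔ p ∈ sec b := by
    intro b p
    have e1 := congrArg Prod.fst (key p)
    have e2 := congrArg Prod.snd (key p)
    simp only at e1 e2
    rw [sec_iff_th, sec_iff_th, e1, e2]
    set q : ℝ × ℝ := (th p.1, th (-p.2)) with hq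
    rw [show th p.1 = q.1 from rfl, show th (-p.2) = q.2 from rfl, Cdef]
    have s1 := sA q
    have s2 := sB q
    split_ifs
    · cases b
      · simp [sg, s1.2.1, s1.2.2.2]
      · simp [sg, s1.1, s1.2.2.1]
    · cases b
      · simp [sg, s2.2.1, s2.2.2.2]
      · simp [sg, s2.1, s2.2.2.1]
  refine ⟨H, ?_, Hs, ?_⟩
  · have h0 := key 0
    rw [Cdef, if_pos (by simp [th_zero]), A0 _ (by simp [th_zero])] at h0
    have e1 := congrArg Prod.fst h0
    have e2 := congrArg Prod.snd h0
    simp only [Prod.fst_zero, Prod.snd_zero, neg_zero, th_zero, th_eq_zero, neg_eq_zero] at e1 e2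
    exact Prod.ext e1 e2
  · intro b κ p hκ hp
    have e1 := congrArg Prod.fst (key p)
    have e2 := congrArg Prod.snd (key p)
    simp only at e1 e2
    rw [e1, e2, Cdef]
    have hs := (sec_iff_th.mp hp).2
    cases b
    · simp [sg] at hs
      rw [if_neg (by simpa using hs)]
      have := hB (th p.1) (th (-p.2))
      rcases hκ with rfl | rfl
      · rw [one_mul, one_mul]; exact this.1
      · rw [neg_one_mul, neg_one_mul, sub_neg_eq_add]; exact this.2
    · simp [sg] at hs
      rw [if_pos (by simpa using hs.le)]
      have := hA (th p.1) (th (-p.2))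
      rcases hκ with rfl | rfl
      · rw [one_mul, one_mul]; exact this.1
      · rw [neg_one_mul, neg_one_mul, sub_neg_eq_add]; exact this.2

/-- odd square root -/
def rt (x : ℝ) : ℝ := √x - √(-x)
lemma rt_cont : Continuous rt := by unfold rt; fun_prop
lemma rt_neg (x : ℝ) : rt (-x) = - rt x := by simp [rt]
lemma rt_mono : Monotone rt := fun x y h => by
  have h1 := Real.sqrt_le_sqrt h
  have h2 := Real.sqrt_le_sqrt (neg_le_neg h)
  simp only [rt]; linarith
lemma rt_of_nonneg {x : ℝ} (h : 0 ≤ x) : rt x = √|x| := by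
  simp [rt, Real.sqrt_eq_zero_of_nonpos (neg_nonpos.mpr h), abs_of_nonneg h]
lemma rt_of_nonpos {x : ℝ} (h : x ≤ 0) : rt x = -√|x| := by
  simp [rt, Real.sqrt_eq_zero_of_nonpos h, abs_of_nonpos h]
lemma rt_abs (x : ℝ) : |rt x| = √|x| := by
  rcases le_total 0 x with h | h
  · rw [rt_of_nonneg h, abs_of_nonneg (Real.sqrt_nonneg _)]
  · rw [rt_of_nonpos h, abs_neg, abs_of_nonneg (Real.sqrt_nonneg _)]
lemma rt_sq (x : ℝ) : rt x ^ 2 = |x| := by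
  rw [← sq_abs, rt_abs, Real.sq_sqrt (abs_nonneg _)]

/-- flow attached to an even `C¹` function with value `1` at the origin -/
theorem sector_flow (η : ℝ × ℝ → ℝ) (hη : ContDiffAt ℝ 1 η 0) (h1 : η 0 = 1)
    (hev : ∀ p, η (-p) = η p) : ∃ r > 0, ∃ F u l, FlowData F u l ∧ ∀ x y : ℝ, |x| ≤ r → |y| ≤ r →
      F (th x) (th y) = η (rt x, rt y) ∧ F (th x) (- th y) = η (rt x, - rt y) := by
  obtain ⟨K, s, hs, hK⟩ := hη.exists_lipschitzOnWith
  have ev : ∀ᶠ p in nhds (0 : ℝ × ℝ), 1 / 2 < η p ∧ η p < 2 := by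
    have := hη.continuousAt.tendsto
    rw [h1] at this
    exact (this.eventually (lt_mem_nhds (by norm_num))).and
      (this.eventually (gt_mem_nhds (by norm_num)))
  obtain ⟨e, he, hb⟩ := Metric.mem_nhds_iff.mp (inter_mem hs (inter_mem ev
    (hη.eventually (by simp) )))
  set r := min (e / 2) (1 / (8 * (K + 1))) with hr
  have hr0 : 0 < r := lt_min (by linarith) (by positivity)
  set c : ℝ → ℝ := fun U => max (-r) (min r (rt (thi U))) with hc
  have thim : Monotone thi := fun x y h => by
    rw [← th_strictMono.le_iff_le, th_thi, th_thi]; exact h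
  have hcc : Continuous c := continuous_const.max (continuous_const.min (rt_cont.comp thi_cont))
  have hcm : Monotone c := fun x y h => max_le_max le_rfl (min_le_min le_rfl (rt_mono (thim h)))
  have hcr : ∀ x, |c x| ≤ r := fun x => abs_le.mpr ⟨le_max_left _ _,
    max_le (by linarith) (min_le_left _ _)⟩
  have thin : ∀ y, thi (-y) = - thi y := fun y => th_strictMono.injective (by
    rw [th_thi, th_neg, th_thi])
  have hco : ∀ x, c (-x) = - c x := fun x => by
    simp only [hc, thin, rt_neg]
    rw [max_def, max_def, min_def, min_def]; split_ifs <;> linarith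
  have mem : ∀ x y, (c x, c y) ∈ Metric.ball (0 : ℝ × ℝ) e := fun x y => by
    rw [mem_ball_zero_iff, Prod.norm_def]
    refine max_lt ((hcr x).trans_lt ?_) ((hcr y).trans_lt ?_) <;>
    · have := min_le_left (e / 2) (1 / (8 * ((K : ℝ) + 1))); rw [← hr] at this; linarith
  have hKr : 4 * (K : ℝ) * r ≤ 1 / 2 := by
    have := min_le_right (e / 2) (1 / (8 * ((K : ℝ) + 1)))
    rw [← hr, le_div_iff₀ (by positivity)] at this
    nlinarith [K.coe_nonneg]
  obtain ⟨u, l, hfl⟩ := flow_exists (fun U S => η (c U, c S)) c hcc hcm r K (1 / 2) 2 hcr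
    (by norm_num) K.coe_nonneg (fun U s => ((hb (mem U s)).2.1).1.le)
    (fun U s => ((hb (mem U s)).2.1).2.le)
    (continuous_iff_continuousAt.mpr fun p => by
      have h2 : ContDiffAt ℝ 1 η (c p.1, c p.2) := (hb (mem p.1 p.2)).2.2
      exact ContinuousAt.comp (g := η) (f := fun p : ℝ × ℝ => (c p.1, c p.2)) h2.continuousAt
        ((hcc.comp continuous_fst).prodMk (hcc.comp continuous_snd)).continuousAt)
    (fun U U' s => by
      have := hK.dist_le_mul _ (hb (mem U s)).1 _ (hb (mem U' s)).1
      rw [Prod.dist_eq, dist_self, max_eq_left dist_nonneg] at this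
      simpa [Real.dist_eq] using this)
    hKr (fun U s => by rw [hco, hco, ← hev (c U, c s)]; rfl)
    (by
      have : c 0 = 0 := by have := hco 0; rw [neg_zero] at this; linarith
      rw [this]; exact h1)
  refine ⟨r ^ 2, by positivity, _, u, l, hfl, fun x y hx hy => ?_⟩
  have ce : ∀ x, |x| ≤ r ^ 2 → c (th x) = rt x := fun x hx => by
    have : |rt x| ≤ r := by
      rw [rt_abs]; exact (Real.sqrt_le_sqrt hx).trans (by rw [Real.sqrt_sq hr0.le])
    have := abs_le.mp this
    simp only [hc, thi_th]
    rw [min_eq_right this.2, max_eq_right this.1]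
  constructor
  · rw [ce x hx, ce y hy]
  · rw [hco, ce x hx, ce y hy]


lemma sg_sq (b : Bool) : sg b * sg b = 1 := by cases b <;> simp [sg]

lemma sec_abs {b : Bool} {p : ℝ × ℝ} (h : p ∈ sec b) : p.1 = sg b * |p.1| ∧ p.2 = - (sg b * |p.2|) := by
  obtain ⟨h1, h2⟩ := h
  cases b
  · simp [sg] at h1 h2 ⊢
    rw [abs_of_neg h1, abs_of_pos h2]; simp
  · simp [sg] at h1 h2 ⊢
    rw [abs_of_pos h1, abs_of_neg h2]; simp

lemma sec_rt {b : Bool} {p : ℝ × ℝ} (h : p ∈ sec b) : rt p.1 * rt (-p.2) = √|p.1| * √|p.2| := by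
  obtain ⟨h1, h2⟩ := h
  cases b
  · simp [sg] at h1 h2
    rw [rt_of_nonpos h1.le, rt_of_nonpos (by linarith : -p.2 ≤ 0), abs_neg]; ring
  · simp [sg] at h1 h2
    rw [rt_of_nonneg h1.le, rt_of_nonneg (by linarith : 0 ≤ -p.2), abs_neg]

lemma good_model : Good (fun p w => p.1 * w.1 ^ 2 + p.2 * w.2 ^ 2) (Metric.ball 0 1)
    (fun _ _ _ => 1) (fun _ w s => w + s) (fun _ U s => U - s) where
  flow := fun _ => flow_one
  op := Metric.isOpen_ball
  bd := Metric.isBounded_ball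
  mem0 := Metric.mem_ball_self one_pos
  zero := fun w => by simp
  rel := fun b p _ hs => by
    refine ⟨sg b, sg_ne b, fun w => ?_⟩
    obtain ⟨h1, h2⟩ := sec_abs hs
    have q1 := Real.sq_sqrt (abs_nonneg p.1)
    have q2 := Real.sq_sqrt (abs_nonneg p.2)
    calc p.1 * w.1 ^ 2 + p.2 * w.2 ^ 2
        = sg b * (|p.1| * w.1 ^ 2 - |p.2| * w.2 ^ 2) := by
          rw [h1, h2]; simp only [abs_mul, abs_neg, abs_abs]
          have : |sg b| = 1 := by cases b <;> simp [sg]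
          rw [this]; ring
      _ = _ := by linear_combination (-(sg b * w.1 ^ 2)) * q1 + (sg b * w.2 ^ 2) * q2
  ell := fun p w _ hp hw => by
    rcases pos_and_pos_or_neg_and_neg_of_mul_pos hp with ⟨h1, h2⟩ | ⟨h1, h2⟩
    · have a : w.1 ^ 2 = 0 := by nlinarith [sq_nonneg w.1, sq_nonneg w.2, mul_nonneg h2.le (sq_nonneg w.2)]
      have b : w.2 ^ 2 = 0 := by nlinarith [sq_nonneg w.1, sq_nonneg w.2, mul_nonneg h1.le (sq_nonneg w.1)]
      exact Prod.ext (pow_eq_zero_iff (two_ne_zero) |>.mp a) (pow_eq_zero_iff (two_ne_zero) |>.mp b)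
    · have a : w.1 ^ 2 = 0 := by nlinarith [sq_nonneg w.1, sq_nonneg w.2, mul_nonneg (neg_nonneg.mpr h2.le) (sq_nonneg w.2)]
      have b : w.2 ^ 2 = 0 := by nlinarith [sq_nonneg w.1, sq_nonneg w.2, mul_nonneg (neg_nonneg.mpr h1.le) (sq_nonneg w.1)]
      exact Prod.ext (pow_eq_zero_iff (two_ne_zero) |>.mp a) (pow_eq_zero_iff (two_ne_zero) |>.mp b)
  ax1 := fun p w _ h1 h2 hw => by simpa [h1, h2] using hw
  ax2 := fun p w _ h1 h2 hw => by simpa [h1, h2] using hw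

/-- root function -/
def etaF (α β γ : ℝ × ℝ → ℝ) (e : ℝ) (m : ℝ × ℝ) : ℝ :=
  (-e * (m.1 * m.2) * β (e * m.1 ^ 2, -e * m.2 ^ 2) +
    √((m.1 * m.2 * β (e * m.1 ^ 2, -e * m.2 ^ 2)) ^ 2 +
      α (e * m.1 ^ 2, -e * m.2 ^ 2) * γ (e * m.1 ^ 2, -e * m.2 ^ 2))) / α (e * m.1 ^ 2, -e * m.2 ^ 2)

lemma etaF_smooth {α β γ : ℝ × ℝ → ℝ} (hα : ContDiff ℝ 1 α) (hβ : ContDiff ℝ 1 β)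
    (hγ : ContDiff ℝ 1 γ) (hα0 : α 0 = 1) (hγ0 : γ 0 = 1) (e : ℝ) :
    ContDiffAt ℝ 1 (etaF α β γ e) 0 := by
  have hP : ContDiff ℝ 1 (fun m : ℝ × ℝ => (e * m.1 ^ 2, -e * m.2 ^ 2)) := by fun_prop
  have a := (hα.comp hP)
  have b := (hβ.comp hP)
  have c := (hγ.comp hP)
  simp only [Function.comp_def] at a b c
  have z : (e * (0 : ℝ × ℝ).1 ^ 2, -e * (0 : ℝ × ℝ).2 ^ 2) = (0 : ℝ × ℝ) := by simp
  unfold etaF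
  refine ContDiffAt.div (ContDiffAt.add ?_ (ContDiffAt.sqrt ?_ ?_)) a.contDiffAt ?_
  · exact ContDiff.contDiffAt (by fun_prop)
  · exact ContDiff.contDiffAt (by fun_prop)
  · rw [z]; simp [hα0, hγ0]
  · rw [z, hα0]; exact one_ne_zero

lemma root_fac {a s q β D X Y γ : ℝ} (ha : a ≠ 0) (hs : s * s = 1)
    (hD : D ^ 2 = (q * β) ^ 2 + a * γ) :
    s * (a * X ^ 2 - 2 * s * q * β * (X * Y) - γ * Y ^ 2) =
      s * a * ((X + (-s * q * β + D) / a * Y) * (X - (s * q * β + D) / a * Y)) := by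
  field_simp
  linear_combination s * ((-Y ^ 2 * (q * β) ^ 2) * hs + Y ^ 2 * hD)

theorem exists_good {ω : (ℝ × ℝ) → (ℝ × ℝ) → ℝ} {α β γ : ℝ × ℝ → ℝ} (hα : ContDiff ℝ 1 α)
    (hβ : ContDiff ℝ 1 β) (hγ : ContDiff ℝ 1 γ) (hα0 : α 0 = 1) (hγ0 : γ 0 = 1)
    (hω : ∀ᶠ p in nhds (0 : ℝ × ℝ), ∀ w : ℝ × ℝ, ω p w = p.1 * α p * w.1 ^ 2 +
      2 * (p.1 * p.2 * β p) * w.1 * w.2 + p.2 * γ p * w.2 ^ 2) :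
    ∃ N F u l, Good ω N F u l := by
  have hfl : ∀ b : Bool, ∃ r > 0, ∃ F u l, FlowData F u l ∧ ∀ x y : ℝ, |x| ≤ r → |y| ≤ r →
      F (th x) (th y) = etaF α β γ (sg b) (rt x, rt y) ∧
      F (th x) (- th y) = etaF α β γ (sg b) (rt x, - rt y) := fun b => by
    refine sector_flow _ (etaF_smooth hα hβ hγ hα0 hγ0 _) ?_ ?_
    · have z : ((0 : ℝ), (0 : ℝ)) = 0 := rfl
      simp [etaF, z, hα0, hγ0]
    · intro p; simp [etaF]
  choose r hr F u l hF hη using hfl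
  have evs : ∀ᶠ p in nhds (0 : ℝ × ℝ), (∀ w : ℝ × ℝ, ω p w = p.1 * α p * w.1 ^ 2 +
      2 * (p.1 * p.2 * β p) * w.1 * w.2 + p.2 * γ p * w.2 ^ 2) ∧ 0 < α p ∧ 0 < γ p ∧
      0 < α p * γ p - p.1 * p.2 * β p ^ 2 ∧ ‖p‖ < r true ∧ ‖p‖ < r false := by
    refine hω.and ?_
    have ca := hα.continuous
    have cb := hβ.continuous
    have cc := hγ.continuous
    have nb := fun (b : Bool) => (continuous_norm (E := ℝ × ℝ)).tendsto 0 |>.eventually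
      (gt_mem_nhds (by rw [norm_zero]; exact hr b : ‖(0 : ℝ × ℝ)‖ < r b))
    refine (ca.tendsto 0 |>.eventually (lt_mem_nhds (by rw [hα0]; exact one_pos))).and
      ((cc.tendsto 0 |>.eventually (lt_mem_nhds (by rw [hγ0]; exact one_pos))).and
      (Eventually.and ?_ ((nb true).and (nb false))))
    have : Continuous (fun p : ℝ × ℝ => α p * γ p - p.1 * p.2 * β p ^ 2) := by fun_prop
    exact this.tendsto 0 |>.eventually (lt_mem_nhds (by simp [hα0, hγ0]))
  obtain ⟨e, he, hb⟩ := Metric.mem_nhds_iff.mp evs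
  refine ⟨Metric.ball 0 e, F, u, l, ⟨hF, Metric.isOpen_ball, Metric.isBounded_ball,
    Metric.mem_ball_self he, ?_, ?_, ?_, ?_, ?_⟩⟩
  · intro w
    rw [(hb (Metric.mem_ball_self he)).1 w]; simp
  · intro b p hp hs
    obtain ⟨h0, ha, hc, -, hn1, hn2⟩ := hb hp
    have hnb : ‖p‖ ≤ r b := by cases b <;> [exact hn2.le; exact hn1.le]
    have b1 : |p.1| ≤ r b := (norm_fst_le p).trans hnb
    have b2 : |-p.2| ≤ r b := by rw [abs_neg]; exact (norm_snd_le p).trans hnb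
    obtain ⟨f1, f2⟩ := hη b p.1 (-p.2) b1 b2
    obtain ⟨s1, s2⟩ := sec_abs hs
    refine ⟨sg b * α p, mul_ne_zero (sg_ne b) ha.ne', fun w => ?_⟩
    have hP : (sg b * rt p.1 ^ 2, -sg b * rt (-p.2) ^ 2) = p := by
      rw [rt_sq, rt_sq, abs_neg]
      exact Prod.ext s1.symm (by rw [s2]; simp only [abs_neg, abs_mul, abs_abs]; cases b <;> simp [sg])
    have hP' : (sg b * rt p.1 ^ 2, -sg b * (-rt (-p.2)) ^ 2) = p := by rw [neg_sq]; exact hP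
    rw [f1, f2, h0 w]
    simp only [etaF, hP, hP', mul_neg, sec_rt hs]
    set q := √|p.1| * √|p.2| with hq
    set X := √|p.1| * w.1 with hX
    set Y := √|p.2| * w.2 with hY
    have q1 := Real.sq_sqrt (abs_nonneg p.1)
    have q2 := Real.sq_sqrt (abs_nonneg p.2)
    set D := √((q * β p) ^ 2 + α p * γ p) with hD
    have hD2 : D ^ 2 = (q * β p) ^ 2 + α p * γ p := Real.sq_sqrt (by positivity)
    have hD' : √((-q * β p) ^ 2 + α p * γ p) = D := by rw [hD]; congr 1; ring
    rw [hD']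
    have lhs : p.1 * α p * w.1 ^ 2 + 2 * (p.1 * p.2 * β p) * w.1 * w.2 + p.2 * γ p * w.2 ^ 2 =
        sg b * (α p * X ^ 2 - 2 * sg b * q * β p * (X * Y) - γ p * Y ^ 2) := by
      have e1 : X ^ 2 = |p.1| * w.1 ^ 2 := by rw [hX, mul_pow, q1]
      have e2 : Y ^ 2 = |p.2| * w.2 ^ 2 := by rw [hY, mul_pow, q2]
      have e3 : q * (X * Y) = |p.1| * |p.2| * (w.1 * w.2) := by
        calc q * (X * Y) = √|p.1| ^ 2 * √|p.2| ^ 2 * (w.1 * w.2) := by rw [hq, hX, hY]; ring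
          _ = _ := by rw [q1, q2]
      have hs2 := sg_sq b
      rw [e1, e2]
      linear_combination (α p * w.1 ^ 2 + 2 * p.2 * β p * w.1 * w.2) * s1 +
        (2 * sg b * |p.1| * β p * w.1 * w.2 + γ p * w.2 ^ 2) * s2 + (2 * (sg b * sg b) * β p) * e3
    rw [lhs]
    have ha' := ha.ne'
    have e4 : ∀ F1 F2 : ℝ, √|p.1| * w.1 + F1 * √|p.2| * w.2 = X + F1 * Y ∧
        √|p.1| * w.1 - F2 * √|p.2| * w.2 = X - F2 * Y := fun F1 F2 => by
      rw [hX, hY]; constructor <;> ring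
    rw [(e4 _ 0).1, (e4 0 _).2]
    have hs2 := sg_sq b
    refine (root_fac ha' hs2 hD2).trans ?_
    ring_nf
  · intro p w hp hpos hw
    obtain ⟨h0, ha, hc, hd, -, -⟩ := hb hp
    rw [h0 w] at hw
    have h1 : (p.1 * α p * w.1 + p.1 * p.2 * β p * w.2) ^ 2 +
        (p.1 * p.2) * (α p * γ p - p.1 * p.2 * β p ^ 2) * w.2 ^ 2 = 0 := by
      linear_combination p.1 * α p * hw
    have h2 : 0 < (p.1 * p.2) * (α p * γ p - p.1 * p.2 * β p ^ 2) := mul_pos hpos hd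
    have h3 : w.2 = 0 := by
      by_contra h
      have : 0 < w.2 ^ 2 := by positivity
      nlinarith [sq_nonneg (p.1 * α p * w.1 + p.1 * p.2 * β p * w.2), mul_pos h2 this]
    have h4 : p.1 ≠ 0 := fun h => by rw [h] at hpos; simp at hpos
    have h5 : w.1 = 0 := by
      rw [h3] at hw
      simpa [h4, ha.ne'] using hw
    exact Prod.ext h5 h3
  · intro p w hp h1 h2 hw
    obtain ⟨h0, ha, hc, hd, -, -⟩ := hb hp
    rw [h0 w, h1] at hw
    simpa [h2, hc.ne'] using hw
  · intro p w hp h1 h2 hw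
    obtain ⟨h0, ha, hc, hd, -, -⟩ := hb hp
    rw [h0 w, h1] at hw
    simpa [h2, ha.ne'] using hw

theorem class_equiv {ω : (ℝ × ℝ) → (ℝ × ℝ) → ℝ} {α β γ : ℝ × ℝ → ℝ} (hα : ContDiff ℝ 1 α)
    (hβ : ContDiff ℝ 1 β) (hγ : ContDiff ℝ 1 γ) (hα0 : α 0 = 1) (hγ0 : γ 0 = 1)
    (hω : ∀ᶠ p in nhds (0 : ℝ × ℝ), ∀ w : ℝ × ℝ, ω p w = p.1 * α p * w.1 ^ 2 +
      2 * (p.1 * p.2 * β p) * w.1 * w.2 + p.2 * γ p * w.2 ^ 2) :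
    TopEquivAt0 ω (fun p w => p.1 * w.1 ^ 2 + p.2 * w.2 ^ 2) := by
  obtain ⟨N, F, u, l, h⟩ := exists_good hα hβ hγ hα0 hγ0 hω
  obtain ⟨H, H0, Hs, Hl⟩ := glue_homeo h.flow
  exact h.topEquiv good_model H H0 Hs Hl


lemma TopEquivAt0.symm {ω Ω : (ℝ × ℝ) → (ℝ × ℝ) → ℝ} (h : TopEquivAt0 ω Ω) : TopEquivAt0 Ω ω := by
  obtain ⟨U, V, h, k, hU, hV, hU0, hV0, h0, hc, kc, hb, hi, i1, i2⟩ := h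
  exact ⟨V, U, k, h, hV, hU, hV0, hU0, by have := hi.1 hU0; rwa [h0] at this, kc, hc, hb.symm hi.symm,
    hi.symm, i2, i1⟩

lemma TopEquivAt0.trans {ω Ω Θ : (ℝ × ℝ) → (ℝ × ℝ) → ℝ} (h : TopEquivAt0 ω Ω)
    (h' : TopEquivAt0 Ω Θ) : TopEquivAt0 ω Θ := by
  obtain ⟨U, V, h, k, hU, hV, hU0, hV0, h0, hc, kc, hb, hi, i1, i2⟩ := h
  obtain ⟨U', V', h', k', hU', hV', hU0', hV0', h0', hc', kc', hb', hi', i1', i2'⟩ := h'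
  have k0 : k' 0 = 0 := by
    have := hi'.1 hU0'; rwa [h0'] at this
  have km : MapsTo k V U := (hb.symm hi.symm).mapsTo
  have km' : MapsTo k' V' U' := (hb'.symm hi'.symm).mapsTo
  refine ⟨U ∩ h ⁻¹' U', V' ∩ k' ⁻¹' V, h' ∘ h, k ∘ k', hc.isOpen_inter_preimage hU hU',
    kc'.isOpen_inter_preimage hV' hV, ⟨hU0, by simpa [h0] using hU0'⟩,
    ⟨hV0', by simpa [k0] using hV0⟩, by simp [h0, h0'], ?_, ?_, ?_, ?_, ?_, ?_⟩
  · exact hc'.comp (hc.mono inter_subset_left) (fun x hx => hx.2)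
  · exact kc.comp (kc'.mono inter_subset_left) (fun x hx => hx.2)
  · refine ⟨fun x hx => ⟨hb'.mapsTo hx.2, ?_⟩, ?_, ?_⟩
    · change k' (h' (h x)) ∈ V
      rw [hi'.1 hx.2]; exact hb.mapsTo hx.1
    · exact hb'.injOn.comp (hb.injOn.mono inter_subset_left) (fun x hx => hx.2)
    · intro z hz
      refine ⟨k (k' z), ⟨km hz.2, ?_⟩, ?_⟩
      · change h (k (k' z)) ∈ U'
        rw [hi.2 hz.2]; exact km' hz.1
      · change h' (h (k (k' z))) = z
        rw [hi.2 hz.2, hi'.2 hz.1]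
  · constructor
    · intro x hx
      change k (k' (h' (h x))) = x
      rw [hi'.1 hx.2, hi.1 hx.1]
    · intro z hz
      change h' (h (k (k' z))) = z
      rw [hi.2 hz.2, hi'.2 hz.1]
  · intro γ I hγ hm
    obtain ⟨σ, J, hσ, e⟩ := i1 γ I hγ (fun t ht => (hm ht).1)
    obtain ⟨τ, K, hτ, e'⟩ := i1' σ J hσ (fun t ht => by
      have : σ t ∈ h '' (γ '' I) := by rw [e]; exact mem_image_of_mem _ ht
      obtain ⟨_, ⟨s, hs, rfl⟩, h2⟩ := this
      rw [← h2]; exact (hm hs).2)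
    exact ⟨τ, K, hτ, by rw [image_comp, e, e']⟩
  · intro γ I hγ hm
    obtain ⟨σ, J, hσ, e⟩ := i2' γ I hγ (fun t ht => (hm ht).1)
    obtain ⟨τ, K, hτ, e'⟩ := i2 σ J hσ (fun t ht => by
      have : σ t ∈ k' '' (γ '' I) := by rw [e]; exact mem_image_of_mem _ ht
      obtain ⟨_, ⟨s, hs, rfl⟩, h2⟩ := this
      rw [← h2]; exact (hm hs).2)
    exact ⟨τ, K, hτ, by rw [image_comp, e, e']⟩

theorem pull_equiv {ω Ω : (ℝ × ℝ) → (ℝ × ℝ) → ℝ} {ψ : ℝ × ℝ → ℝ × ℝ} (hψ : ContDiff ℝ 1 ψ)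
    (h0 : ψ 0 = 0) (e : (ℝ × ℝ) ≃L[ℝ] (ℝ × ℝ)) (he : fderiv ℝ ψ 0 = e)
    (hω : ∀ᶠ p in nhds (0 : ℝ × ℝ), ∃ ρ : ℝ, ρ ≠ 0 ∧ ∀ w, Ω (ψ p) (fderiv ℝ ψ p w) = ρ * ω p w) :
    TopEquivAt0 ω Ω := by
  have hd : ∀ p, HasFDerivAt ψ (fderiv ℝ ψ p) p := fun p =>
    (hψ.differentiable one_ne_zero p).hasFDerivAt
  have hcd : Continuous (fderiv ℝ ψ) := hψ.continuous_fderiv one_ne_zero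
  have hs : HasFDerivAt ψ (e : (ℝ × ℝ) →L[ℝ] (ℝ × ℝ)) 0 := by rw [← he]; exact hd 0
  let E := hψ.contDiffAt.toOpenPartialHomeomorph ψ hs one_ne_zero
  have hE : (E : ℝ × ℝ → ℝ × ℝ) = ψ := rfl
  have hE0 : (0 : ℝ × ℝ) ∈ E.source := hψ.contDiffAt.mem_toOpenPartialHomeomorph_source hs one_ne_zero
  have hinv : ∀ᶠ p in nhds (0 : ℝ × ℝ), fderiv ℝ ψ p ∈
      range ((↑) : ((ℝ × ℝ) ≃L[ℝ] (ℝ × ℝ)) → ((ℝ × ℝ) →L[ℝ] (ℝ × ℝ))) :=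
    hcd.tendsto 0 (by rw [he]; exact ContinuousLinearEquiv.nhds e)
  obtain ⟨W, hWs, hWo, hW0⟩ := eventually_nhds_iff.mp (hinv.and hω)
  let G := E.restrOpen W hWo
  have hG : (G : ℝ × ℝ → ℝ × ℝ) = ψ := rfl
  have hGs : G.source = E.source ∩ W := E.restrOpen_source W hWo
  have hG0 : (0 : ℝ × ℝ) ∈ G.source := by rw [hGs]; exact ⟨hE0, hW0⟩
  have hGW : ∀ p ∈ G.source, p ∈ W := fun p hp => by rw [hGs] at hp; exact hp.2
  refine ⟨G.source, G.target, ψ, G.symm, G.open_source, G.open_target, hG0, ?_, h0, ?_, ?_,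
    ?_, ?_, ?_, ?_⟩
  · have := G.map_source hG0
    rwa [hG, h0] at this
  · exact hψ.continuous.continuousOn
  · exact G.continuousOn_symm
  · exact G.bijOn
  · exact G.invOn
  · rintro γ I ⟨hI, dγ, hc, hγ⟩ hm
    refine ⟨ψ ∘ γ, I, ⟨hI, fun t => fderiv ℝ ψ (γ t) (dγ t), ?_, fun t ht => ?_⟩,
      by rw [image_comp]⟩
    · have : ContinuousOn γ I := fun t ht => (hγ t ht).1.continuousAt.continuousWithinAt
      exact (hcd.comp_continuousOn this).clm_apply hc
    · obtain ⟨h1, h2, h3⟩ := hγ t ht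
      obtain ⟨⟨i, hi⟩, ρ, hρ, h4⟩ := hWs _ (hGW _ (hm ht))
      refine ⟨(hd (γ t)).comp_hasDerivAt t h1, ?_, ?_⟩
      · beta_reduce; rw [← hi]; exact fun h => h2 (by simpa using h)
      · change Ω (ψ (γ t)) _ = 0
        rw [h4, h3, mul_zero]
  · rintro σ J ⟨hJ, dσ, hc, hσ⟩ hm
    have hcσ : ContinuousOn σ J := fun t ht => (hσ t ht).1.continuousAt.continuousWithinAt
    have hms : ∀ t ∈ J, G.symm (σ t) ∈ G.source := fun t ht => G.map_target (hm ht)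
    have hcg : ContinuousOn (G.symm ∘ σ) J := G.continuousOn_symm.comp hcσ hm
    refine ⟨G.symm ∘ σ, J, ⟨hJ, fun t => (fderiv ℝ ψ (G.symm (σ t))).inverse (dσ t), ?_,
      fun t ht => ?_⟩, by rw [image_comp]⟩
    · refine ContinuousOn.clm_apply (fun t ht => ?_) hc
      obtain ⟨⟨i, hi⟩, -⟩ := hWs _ (hGW _ (hms t ht))
      have c1 : ContinuousAt (ContinuousLinearMap.inverse) (fderiv ℝ ψ ((G.symm ∘ σ) t)) := by
        have := (contDiffAt_map_inverse (𝕜 := ℝ) (n := 0) i).continuousAt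
        rw [hi] at this; exact this
      have c2 : ContinuousWithinAt (fun t => fderiv ℝ ψ ((G.symm ∘ σ) t)) J t :=
        hcd.continuousAt.comp_continuousWithinAt (f := G.symm ∘ σ) (hcg t ht)
      exact ContinuousAt.comp_continuousWithinAt (f := fun t => fderiv ℝ ψ ((G.symm ∘ σ) t)) c1 c2
    · obtain ⟨h1, h2, h3⟩ := hσ t ht
      obtain ⟨⟨i, hi⟩, ρ, hρ, h4⟩ := hWs _ (hGW _ (hms t ht))
      have hr : ψ (G.symm (σ t)) = σ t := G.right_inv (hm ht)
      have d1 : HasFDerivAt G.symm (i.symm : (ℝ × ℝ) →L[ℝ] (ℝ × ℝ)) (σ t) :=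
        G.hasFDerivAt_symm (hm ht) (by rw [hi, hG]; exact hd _)
      have e1 : (fderiv ℝ ψ (G.symm (σ t))).inverse (dσ t) = i.symm (dσ t) := by
        rw [← hi]; simp
      refine ⟨?_, ?_, ?_⟩
      · beta_reduce; rw [e1]; exact d1.comp_hasDerivAt t h1
      · beta_reduce; rw [e1]; exact fun h => h2 (by simpa using h)
      · beta_reduce; rw [e1]
        have := h4 (i.symm (dσ t))
        rw [hr, ← hi] at this
        simp only [ContinuousLinearEquiv.coe_coe, ContinuousLinearEquiv.apply_symm_apply] at this
        rw [h3] at this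
        exact (mul_eq_zero.mp this.symm).resolve_left hρ


theorem contDiff_param_int (n : ℕ) : ∀ {F : Type} [NormedAddCommGroup F] [NormedSpace ℝ F]
    [CompleteSpace F] (H : (ℝ × ℝ) × ℝ → F), ContDiff ℝ n H →
    ContDiff ℝ n (fun x => ∫ t in (0 : ℝ)..1, H (x, t)) := by
  induction n with
  | zero =>
    intro F _ _ _ H hH
    rw [Nat.cast_zero, contDiff_zero] at hH ⊢
    exact intervalIntegral.continuous_parametric_intervalIntegral_of_continuous' (f := fun x t => H (x, t)) hH 0 1
  | succ n ih =>
    intro F _ _ _ H hH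
    have hH1 : ContDiff ℝ 1 H := hH.of_le (by exact_mod_cast Nat.le_add_left 1 n)
    rw [Nat.cast_succ] at hH ⊢
    rw [contDiff_succ_iff_hasFDerivAt (n := n)]
    let H' : (ℝ × ℝ) × ℝ → (ℝ × ℝ) →L[ℝ] F := fun q =>
      (fderiv ℝ H q).comp (ContinuousLinearMap.inl ℝ (ℝ × ℝ) ℝ)
    have hH' : ContDiff ℝ n H' := by
      have := hH.fderiv_right (m := n) (by rfl)
      exact this.clm_comp contDiff_const
    refine ⟨fun x => ∫ t in (0 : ℝ)..1, H' (x, t), ih H' hH', fun x => ?_⟩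
    have cH' : Continuous H' := hH'.continuous
    obtain ⟨M, hM⟩ := ((isCompact_closedBall x 1).prod (isCompact_Icc (a := (0 : ℝ)) (b := 1))).exists_bound_of_continuousOn
      cH'.continuousOn
    refine (intervalIntegral.hasFDerivAt_integral_of_dominated_of_fderiv_le (μ := MeasureTheory.volume)
      (F := fun x t => H (x, t)) (F' := fun x t => H' (x, t)) (bound := fun _ => M)
      (Metric.ball_mem_nhds x one_pos) ?_ ?_ ?_ ?_ ?_ ?_)
    · exact Eventually.of_forall fun y =>
        (hH.continuous.comp (by fun_prop : Continuous fun t : ℝ => (y, t))).aestronglyMeasurable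
    · exact (hH.continuous.comp (by fun_prop : Continuous fun t : ℝ => (x, t))).intervalIntegrable _ _
    · exact (cH'.comp (by fun_prop : Continuous fun t : ℝ => (x, t))).aestronglyMeasurable
    · refine Eventually.of_forall fun t ht y hy => hM (y, t) ⟨Metric.ball_subset_closedBall hy, ?_⟩
      rw [uIoc_of_le zero_le_one] at ht
      exact ⟨ht.1.le, ht.2⟩
    · exact intervalIntegrable_const
    · refine Eventually.of_forall fun t ht y hy => ?_
      have h1 := (hH1.differentiable one_ne_zero (y, t)).hasFDerivAt
      have h2 : HasFDerivAt (fun y : ℝ × ℝ => (y, t)) (ContinuousLinearMap.inl ℝ (ℝ × ℝ) ℝ) y :=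
        hasFDerivAt_prodMk_left y t
      exact h1.comp y h2

theorem hadamard {F : ℝ × ℝ → ℝ} (hF : ContDiff ℝ (⊤ : ℕ∞) F) :
    ∃ G : ℝ × ℝ → ℝ, ContDiff ℝ (⊤ : ℕ∞) G ∧ (∀ p, F p = F (0, p.2) + p.1 * G p) ∧
      ∀ v, G (0, v) = fderiv ℝ F (0, v) (1, 0) := by
  have hd : ∀ p, HasFDerivAt F (fderiv ℝ F p) p := fun p =>
    (hF.differentiable (by simp) p).hasFDerivAt
  have hD : ContDiff ℝ (⊤ : ℕ∞) (fderiv ℝ F) := hF.fderiv_right (by simp)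
  have hH : ContDiff ℝ (⊤ : ℕ∞) (fun q : (ℝ × ℝ) × ℝ => fderiv ℝ F (q.2 * q.1.1, q.1.2) (1, 0)) :=
    (hD.comp (by fun_prop : ContDiff ℝ (⊤ : ℕ∞) (fun q : (ℝ × ℝ) × ℝ => (q.2 * q.1.1, q.1.2)))).clm_apply
      contDiff_const
  refine ⟨fun p => ∫ t in (0 : ℝ)..1, fderiv ℝ F (t * p.1, p.2) (1, 0), ?_, ?_, ?_⟩
  · rw [contDiff_infty]
    intro n
    exact contDiff_param_int n _ (hH.of_le (by exact_mod_cast le_top))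
  · intro p
    have key : ∫ t in (0 : ℝ)..1, p.1 * fderiv ℝ F (t * p.1, p.2) (1, 0) =
        F (1 * p.1, p.2) - F (0 * p.1, p.2) := by
      refine intervalIntegral.integral_eq_sub_of_hasDerivAt (f := fun t => F (t * p.1, p.2)) (fun t _ => ?_) ?_
      · have h2 : HasDerivAt (fun t : ℝ => (t * p.1, p.2)) (p.1, (0 : ℝ)) t := by
          refine HasDerivAt.prodMk ?_ (hasDerivAt_const _ _)
          simpa using (hasDerivAt_id t).mul_const p.1
        have := (hd (t * p.1, p.2)).comp_hasDerivAt t h2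
        refine this.congr_deriv ?_
        rw [show ((p.1, (0 : ℝ)) : ℝ × ℝ) = p.1 • (1, 0) by simp, map_smul, smul_eq_mul]
      · apply Continuous.intervalIntegrable
        exact continuous_const.mul (hH.continuous.comp (by fun_prop : Continuous fun t : ℝ => (p, t)))
    rw [intervalIntegral.integral_const_mul] at key
    rw [key]; simp
  · intro v; simp

theorem hadamard' {F : ℝ × ℝ → ℝ} (hF : ContDiff ℝ (⊤ : ℕ∞) F) :
    ∃ G : ℝ × ℝ → ℝ, ContDiff ℝ (⊤ : ℕ∞) G ∧ (∀ p, F p = F (p.1, 0) + p.2 * G p) ∧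
      ∀ u, G (u, 0) = fderiv ℝ F (u, 0) (0, 1) := by
  have hsw : ContDiff ℝ (⊤ : ℕ∞) (fun p : ℝ × ℝ => (p.2, p.1)) := by fun_prop
  obtain ⟨G, hG, h1, h2⟩ := hadamard (F := fun p => F (p.2, p.1)) (hF.comp hsw)
  refine ⟨fun p => G (p.2, p.1), hG.comp hsw, fun p => h1 (p.2, p.1), fun u => ?_⟩
  beta_reduce; rw [h2]
  have hd := (hF.differentiable (by simp) (u, 0)).hasFDerivAt
  have hs : HasFDerivAt (fun p : ℝ × ℝ => (p.2, p.1))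
    ((ContinuousLinearMap.snd ℝ ℝ ℝ).prod (ContinuousLinearMap.fst ℝ ℝ ℝ)) (0, u) :=
    hasFDerivAt_snd.prodMk hasFDerivAt_fst
  have := HasFDerivAt.comp (g := F) (0, u) hd hs
  have e := this.fderiv
  simp only [Function.comp_def] at e
  rw [e]; simp

theorem globalise {g : ℝ → ℝ} (hg : ∀ᶠ x in nhds (0 : ℝ), ContDiffAt ℝ (⊤ : ℕ∞) g x) :
    ∃ G : ℝ → ℝ, ContDiff ℝ (⊤ : ℕ∞) G ∧ ∀ᶠ x in nhds (0 : ℝ), G x = g x := by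
  obtain ⟨e, he, hb⟩ := Metric.mem_nhds_iff.mp hg
  let χ : ContDiffBump (0 : ℝ) := ⟨e / 3, e / 2, by positivity, by linarith⟩
  refine ⟨fun x => χ x * g x, ?_, ?_⟩
  · rw [contDiff_iff_contDiffAt]
    intro x
    by_cases hx : x ∈ Metric.ball (0 : ℝ) e
    · exact χ.contDiff.contDiffAt.mul (hb hx)
    · have hx' : x ∉ tsupport χ := by
        rw [χ.tsupport_eq]
        intro h
        apply hx
        rw [Metric.mem_closedBall] at h
        rw [Metric.mem_ball]
        have : χ.rOut = e / 2 := rfl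
        linarith
      have h0 : (fun x => χ x * g x) =ᶠ[nhds x] fun _ => 0 := by
        filter_upwards [notMem_tsupport_iff_eventuallyEq.mp hx'] with y hy
        rw [hy]; simp
      exact contDiffAt_const.congr_of_eventuallyEq h0
  · filter_upwards [χ.eventuallyEq_one] with x hx
    rw [hx]; simp


lemma blowup {A : ℝ × ℝ → ℝ} (hA : ContDiff ℝ (⊤ : ℕ∞) A) (h0 : A 0 = 0) :
    ∃ G : ℝ × ℝ → ℝ, ContDiff ℝ (⊤ : ℕ∞) G ∧ (∀ s v, A (v * s, v) = v * G (s, v)) ∧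
      ∀ s, G (s, 0) = fderiv ℝ A 0 (s, 1) := by
  have hb : ContDiff ℝ (⊤ : ℕ∞) (fun p : ℝ × ℝ => (p.2 * p.1, p.2)) := by fun_prop
  obtain ⟨G, hG, h1, h2⟩ := hadamard' (F := fun p => A (p.2 * p.1, p.2)) (hA.comp hb)
  refine ⟨G, hG, fun s v => ?_, fun s => ?_⟩
  · have := h1 (s, v)
    simp only [zero_mul] at this
    rw [this, show ((0 : ℝ), (0 : ℝ)) = 0 from rfl, h0, zero_add]
  · rw [h2]
    have hd := (hA.differentiable (by simp) 0).hasFDerivAt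
    have hs : HasFDerivAt (fun p : ℝ × ℝ => (p.2 * p.1, p.2))
      (((0 : ℝ) • (ContinuousLinearMap.fst ℝ ℝ ℝ) + s • (ContinuousLinearMap.snd ℝ ℝ ℝ)).prod
        (ContinuousLinearMap.snd ℝ ℝ ℝ)) (s, 0) :=
      HasFDerivAt.prodMk (by
        have h1 : HasFDerivAt (fun p : ℝ × ℝ => p.2) (ContinuousLinearMap.snd ℝ ℝ ℝ) (s, 0) := hasFDerivAt_snd
        have h2 : HasFDerivAt (fun p : ℝ × ℝ => p.1) (ContinuousLinearMap.fst ℝ ℝ ℝ) (s, 0) := hasFDerivAt_fst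
        exact HasFDerivAt.fun_mul h1 h2) hasFDerivAt_snd
    have z : ((0 : ℝ × ℝ)) = (fun p : ℝ × ℝ => (p.2 * p.1, p.2)) (s, 0) := by simp; rfl
    rw [z] at hd
    have := HasFDerivAt.comp (g := A) (s, 0) hd hs
    have e := this.fderiv
    simp only [Function.comp_def] at e
    rw [e]; simp; rfl

lemma implicit1 {E : ℝ × ℝ → ℝ} (hE : ContDiff ℝ (⊤ : ℕ∞) E) (h : ∀ s, E (s, 0) = s) :
    ∃ s : ℝ → ℝ, ContDiff ℝ (⊤ : ℕ∞) s ∧ s 0 = 0 ∧ ∀ᶠ v in nhds (0 : ℝ), E (s v, v) = 0 := by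
  let Φ : ℝ × ℝ → ℝ × ℝ := fun p => (E p, p.2)
  have hΦ : ContDiff ℝ (⊤ : ℕ∞) Φ := hE.prodMk contDiff_snd
  have hd : ∀ p, HasFDerivAt Φ (fderiv ℝ Φ p) p := fun p =>
    (hΦ.differentiable (by simp) p).hasFDerivAt
  have hcd : Continuous (fderiv ℝ Φ) := hΦ.continuous_fderiv (by simp)
  have hΦ0 : Φ 0 = 0 := by
    change (E 0, (0 : ℝ)) = 0
    rw [show (0 : ℝ × ℝ) = ((0 : ℝ), (0 : ℝ)) from rfl, h]
  have hE0 := (hE.differentiable (by simp) 0).hasFDerivAt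
  have e1 : fderiv ℝ E 0 (1, 0) = 1 := by
    have h2 : HasDerivAt (fun s : ℝ => (s, (0 : ℝ))) (1, 0) 0 :=
      (hasDerivAt_id _).prodMk (hasDerivAt_const _ _)
    have h3 := HasFDerivAt.comp_hasDerivAt (f := fun s : ℝ => (s, (0 : ℝ))) 0 hE0 h2
    have h4 : (E ∘ fun s : ℝ => (s, (0 : ℝ))) = id := funext h
    rw [h4] at h3
    exact h3.unique (hasDerivAt_id _)
  set c := fderiv ℝ E 0 (0, 1) with hc
  let e : (ℝ × ℝ) ≃L[ℝ] (ℝ × ℝ) := ContinuousLinearEquiv.equivOfInverse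
    ((ContinuousLinearMap.fst ℝ ℝ ℝ + c • ContinuousLinearMap.snd ℝ ℝ ℝ).prod (ContinuousLinearMap.snd ℝ ℝ ℝ))
    ((ContinuousLinearMap.fst ℝ ℝ ℝ - c • ContinuousLinearMap.snd ℝ ℝ ℝ).prod (ContinuousLinearMap.snd ℝ ℝ ℝ))
    (fun x => by simp) (fun x => by simp)
  have he : HasFDerivAt Φ (e : (ℝ × ℝ) →L[ℝ] (ℝ × ℝ)) 0 := by
    have h1 : HasFDerivAt Φ ((fderiv ℝ E 0).prod (ContinuousLinearMap.snd ℝ ℝ ℝ)) 0 :=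
      hE0.prodMk hasFDerivAt_snd
    refine h1.congr_fderiv ?_
    refine ContinuousLinearMap.ext fun w => ?_
    have : w = w.1 • ((1 : ℝ), (0 : ℝ)) + w.2 • ((0 : ℝ), (1 : ℝ)) := by simp
    have h3 : fderiv ℝ E 0 w = w.1 + c * w.2 := by
      conv_lhs => rw [this]
      rw [map_add, map_smul, map_smul, e1, ← hc, smul_eq_mul, smul_eq_mul]; ring
    exact Prod.ext h3 rfl
  let P := hΦ.contDiffAt.toOpenPartialHomeomorph Φ he (by simp)
  have hP : (P : ℝ × ℝ → ℝ × ℝ) = Φ := rfl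
  have hP0 : (0 : ℝ × ℝ) ∈ P.source := hΦ.contDiffAt.mem_toOpenPartialHomeomorph_source he (by simp)
  have hPt : (0 : ℝ × ℝ) ∈ P.target := by
    have := P.map_source hP0
    rwa [hP, hΦ0] at this
  have hPs0 : P.symm 0 = 0 := by
    have := P.left_inv hP0
    rwa [hP, hΦ0] at this
  have hinv : ∀ᶠ p in nhds (0 : ℝ × ℝ), fderiv ℝ Φ p ∈
      range ((↑) : ((ℝ × ℝ) ≃L[ℝ] (ℝ × ℝ)) → ((ℝ × ℝ) →L[ℝ] (ℝ × ℝ))) :=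
    hcd.tendsto 0 (by rw [he.fderiv]; exact ContinuousLinearEquiv.nhds e)
  have hsc : ContinuousAt P.symm 0 := P.continuousAt_symm hPt
  have ev : ∀ᶠ q in nhds (0 : ℝ × ℝ), q ∈ P.target ∧ fderiv ℝ Φ (P.symm q) ∈
      range ((↑) : ((ℝ × ℝ) ≃L[ℝ] (ℝ × ℝ)) → ((ℝ × ℝ) →L[ℝ] (ℝ × ℝ))) := by
    refine Filter.Eventually.and (P.open_target.mem_nhds hPt : ∀ᶠ q in nhds (0 : ℝ × ℝ), q ∈ P.target) ?_
    have : Tendsto P.symm (nhds 0) (nhds 0) := by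
      have := hsc.tendsto; rwa [hPs0] at this
    exact this.eventually hinv
  have ev' : ∀ᶠ v in nhds (0 : ℝ), ((0 : ℝ), v) ∈ P.target ∧ fderiv ℝ Φ (P.symm (0, v)) ∈
      range ((↑) : ((ℝ × ℝ) ≃L[ℝ] (ℝ × ℝ)) → ((ℝ × ℝ) →L[ℝ] (ℝ × ℝ))) := by
    have : Tendsto (fun v : ℝ => ((0 : ℝ), v)) (nhds 0) (nhds 0) :=
      (by fun_prop : Continuous (fun v : ℝ => ((0 : ℝ), v))).tendsto 0
    exact this.eventually ev
  obtain ⟨s, hs, hse⟩ := globalise (g := fun v => (P.symm (0, v)).1) (by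
    filter_upwards [ev'] with v hv
    obtain ⟨h1, i, hi⟩ := hv
    have := P.contDiffAt_symm (n := (⊤ : ℕ∞)) h1 (f₀' := i) (by rw [hi, hP]; exact hd _)
      (by rw [hP]; exact hΦ.contDiffAt)
    exact (this.comp v (by fun_prop : ContDiff ℝ (⊤ : ℕ∞) (fun v : ℝ => ((0 : ℝ), v))).contDiffAt).fst)
  refine ⟨s, hs, ?_, ?_⟩
  · rw [hse.self_of_nhds, show ((0 : ℝ), (0 : ℝ)) = 0 from rfl, hPs0]; rfl
  · filter_upwards [hse, ev'] with v h1 h2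
    have h3 : Φ (P.symm (0, v)) = (0, v) := P.right_inv h2.1
    have h4 : (P.symm (0, v)).2 = v := congrArg Prod.snd h3
    have h5 : E (P.symm (0, v)) = 0 := congrArg Prod.fst h3
    rw [h1]
    have h6 : ((P.symm (0, v)).1, v) = P.symm (0, v) := Prod.ext rfl h4.symm
    rw [h6, h5]

theorem branch {A B C : ℝ × ℝ → ℝ} (hA : ContDiff ℝ (⊤ : ℕ∞) A) (hB : ContDiff ℝ (⊤ : ℕ∞) B)
    (hC : ContDiff ℝ (⊤ : ℕ∞) C) (A0 : A 0 = 0) (B0 : B 0 = 0) (C0 : C 0 = 0)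
    (dA : ∀ w, fderiv ℝ A 0 w = w.1) (dB : ∀ w, fderiv ℝ B 0 w = 0) (dC : ∀ w, fderiv ℝ C 0 w = w.2) :
    ∃ φ κ : ℝ → ℝ, ContDiff ℝ (⊤ : ℕ∞) φ ∧ ContDiff ℝ (⊤ : ℕ∞) κ ∧ φ 0 = 0 ∧ deriv φ 0 = 0 ∧
      κ 0 = 0 ∧ ∀ᶠ v in nhds (0 : ℝ), A (φ v, v) + B (φ v, v) * κ v = 0 ∧
        B (φ v, v) + C (φ v, v) * κ v = 0 := by
  obtain ⟨A', hA', a1, a2⟩ := blowup hA A0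
  obtain ⟨B', hB', b1, b2⟩ := blowup hB B0
  obtain ⟨C', hC', c1, c2⟩ := blowup hC C0
  obtain ⟨s, hs, s0, hse⟩ := implicit1 (E := fun p => A' p * C' p - B' p ^ 2)
    ((hA'.mul hC').sub (hB'.pow 2)) (fun s => by simp [a2, b2, c2, dA, dB, dC])
  have hsv : ContDiff ℝ (⊤ : ℕ∞) (fun v => (s v, v)) := hs.prodMk contDiff_id
  have hBs := hB'.comp hsv
  have hCs := hC'.comp hsv
  have hC1 : C' (s 0, 0) = 1 := by rw [c2, dC]
  have hne : ∀ᶠ v in nhds (0 : ℝ), C' (s v, v) ≠ 0 :=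
    hCs.continuous.continuousAt.eventually_ne (by
      change C' (s 0, 0) ≠ 0
      rw [hC1]; exact one_ne_zero)
  obtain ⟨κ, hκ, hκe⟩ := globalise (g := fun v => -B' (s v, v) / C' (s v, v)) (by
    filter_upwards [hne] with v hv
    exact hBs.contDiffAt.neg.div hCs.contDiffAt hv)
  refine ⟨fun v => v * s v, κ, contDiff_id.mul hs, hκ, by simp, ?_, ?_, ?_⟩
  · have := (hasDerivAt_id (0 : ℝ)).fun_mul (hs.differentiable (by simp) 0).hasDerivAt
    simpa [s0] using this.deriv
  · rw [hκe.self_of_nhds, b2, dB]; simp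
  · filter_upwards [hse, hne, hκe] with v h1 h2 h3
    rw [a1, b1, c1, h3]
    constructor
    · field_simp
      linear_combination v * h1
    · field_simp; ring


lemma fd_mul0 {P Q : ℝ × ℝ → ℝ} {P' : (ℝ × ℝ) →L[ℝ] ℝ} (hP : HasFDerivAt P P' 0) (hQ : ContDiff ℝ (⊤ : ℕ∞) Q)
    (h0 : P 0 = 0) : HasFDerivAt (fun p => P p * Q p) (Q 0 • P') 0 := by
  have hq := (hQ.differentiable (by simp) 0).hasFDerivAt
  refine (hP.fun_mul hq).congr_fderiv ?_
  rw [h0]; simp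

theorem normal_form {A B C : ℝ × ℝ → ℝ} (hA : ContDiff ℝ (⊤ : ℕ∞) A) (hB : ContDiff ℝ (⊤ : ℕ∞) B)
    (hC : ContDiff ℝ (⊤ : ℕ∞) C) (A0 : A 0 = 0) (B0 : B 0 = 0) (C0 : C 0 = 0)
    (dA : ∀ w, fderiv ℝ A 0 w = w.1) (dB : ∀ w, fderiv ℝ B 0 w = 0) (dC : ∀ w, fderiv ℝ C 0 w = w.2) :
    ∃ (ψ : ℝ × ℝ → ℝ × ℝ) (α β γ : ℝ × ℝ → ℝ), ContDiff ℝ (⊤ : ℕ∞) ψ ∧ ContDiff ℝ (⊤ : ℕ∞) α ∧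
      ContDiff ℝ (⊤ : ℕ∞) β ∧ ContDiff ℝ (⊤ : ℕ∞) γ ∧ ψ 0 = 0 ∧
      fderiv ℝ ψ 0 = ContinuousLinearMap.id ℝ (ℝ × ℝ) ∧ α 0 = 1 ∧ γ 0 = 1 ∧
      ∀ᶠ p in nhds (0 : ℝ × ℝ), ∀ w : ℝ × ℝ,
        A (ψ p) * (fderiv ℝ ψ p w).1 ^ 2 + 2 * B (ψ p) * (fderiv ℝ ψ p w).1 * (fderiv ℝ ψ p w).2 +
          C (ψ p) * (fderiv ℝ ψ p w).2 ^ 2 =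
        p.1 * α p * w.1 ^ 2 + 2 * (p.1 * p.2 * β p) * w.1 * w.2 + p.2 * γ p * w.2 ^ 2 := by
  obtain ⟨φ, κt, hφ, hκt, φ0, dφ0, κt0, hker⟩ := branch hA hB hC A0 B0 C0 dA dB dC
  have hsw : ContDiff ℝ (⊤ : ℕ∞) (fun p : ℝ × ℝ => (p.2, p.1)) := by fun_prop
  have hswd : ∀ G : ℝ × ℝ → ℝ, ContDiff ℝ (⊤ : ℕ∞) G → ∀ w : ℝ × ℝ,
      fderiv ℝ (fun p : ℝ × ℝ => G (p.2, p.1)) 0 w = fderiv ℝ G 0 (w.2, w.1) := by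
    intro G hG w
    have hd := (hG.differentiable (by simp) 0).hasFDerivAt
    have hs : HasFDerivAt (fun p : ℝ × ℝ => (p.2, p.1))
      ((ContinuousLinearMap.snd ℝ ℝ ℝ).prod (ContinuousLinearMap.fst ℝ ℝ ℝ)) 0 :=
      hasFDerivAt_snd.prodMk hasFDerivAt_fst
    have e := (HasFDerivAt.comp (g := G) (0 : ℝ × ℝ) hd hs).fderiv
    simp only [Function.comp_def] at e
    rw [e]; simp
  obtain ⟨χ, lt, hχ, hlt, χ0, dχ0, lt0, hker2⟩ := branch (A := fun p => C (p.2, p.1))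
    (B := fun p => B (p.2, p.1)) (C := fun p => A (p.2, p.1)) (hC.comp hsw) (hB.comp hsw)
    (hA.comp hsw) C0 B0 A0 (fun w => by rw [hswd C hC, dC]) (fun w => by rw [hswd B hB, dB])
    (fun w => by rw [hswd A hA, dA])
  simp only at hker2
  -- the corrected slopes
  obtain ⟨κ, hκd⟩ : ∃ κ : ℝ → ℝ, κ = fun v => (1 + deriv lt 0 * v) * κt v := ⟨_, rfl⟩
  obtain ⟨l, hld⟩ : ∃ l : ℝ → ℝ, l = fun u => (1 + deriv κt 0 * u) * lt u := ⟨_, rfl⟩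
  have hκ : ContDiff ℝ (⊤ : ℕ∞) κ := by
    rw [hκd]; exact (contDiff_const.add (contDiff_const.mul contDiff_id)).mul hκt
  have hl : ContDiff ℝ (⊤ : ℕ∞) l := by
    rw [hld]; exact (contDiff_const.add (contDiff_const.mul contDiff_id)).mul hlt
  have slope0 : ∀ (k : ℝ) (g : ℝ → ℝ), ContDiff ℝ (⊤ : ℕ∞) g → g 0 = 0 →
      deriv (fun v => (1 + k * v) * g v) 0 = deriv g 0 := by
    intro k g hg g0
    have h1 : HasDerivAt (fun v : ℝ => 1 + k * v) k 0 := by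
      simpa using ((hasDerivAt_id (0 : ℝ)).const_mul k).const_add 1
    have := h1.fun_mul (hg.differentiable (by simp) 0).hasDerivAt
    simpa [g0] using this.deriv
  have κ0 : κ 0 = 0 := by rw [hκd]; simp [κt0]
  have l0 : l 0 = 0 := by rw [hld]; simp [lt0]
  have dκ0 : deriv κ 0 = deriv κt 0 := by rw [hκd]; exact slope0 _ _ hκt κt0
  have dl0 : deriv l 0 = deriv lt 0 := by rw [hld]; exact slope0 _ _ hlt lt0
  have sd : ∀ g : ℝ → ℝ, ContDiff ℝ (⊤ : ℕ∞) g → ContDiff ℝ (⊤ : ℕ∞) (deriv g) := fun g hg =>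
    (contDiff_infty_iff_deriv.mp hg).2
  have sdκ := sd κ hκ
  have sdl := sd l hl
  have sdφ := sd φ hφ
  have sdχ := sd χ hχ
  let ψ : ℝ × ℝ → ℝ × ℝ := fun p => (p.1 + φ p.2 + p.2 * l p.1, p.2 + χ p.1 + p.1 * κ p.2)
  let a : ℝ × ℝ → ℝ := fun p => 1 + p.2 * deriv l p.1
  let b : ℝ × ℝ → ℝ := fun p => deriv χ p.1 + κ p.2
  let c : ℝ × ℝ → ℝ := fun p => deriv φ p.2 + l p.1
  let d : ℝ × ℝ → ℝ := fun p => 1 + p.1 * deriv κ p.2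
  have ha : ContDiff ℝ (⊤ : ℕ∞) a := by fun_prop
  have hb : ContDiff ℝ (⊤ : ℕ∞) b := by fun_prop
  have hc : ContDiff ℝ (⊤ : ℕ∞) c := by fun_prop
  have hd : ContDiff ℝ (⊤ : ℕ∞) d := by fun_prop
  have hψ : ContDiff ℝ (⊤ : ℕ∞) ψ := by fun_prop
  have hψ0 : ψ 0 = 0 := by simp [ψ, φ0, χ0]
  have a0 : a 0 = 1 := by simp [a]
  have b0 : b 0 = 0 := by simp [b, dχ0, κ0]
  have c0 : c 0 = 0 := by simp [c, dφ0, l0]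
  have d0 : d 0 = 1 := by simp [d]
  have hder : ∀ p, HasFDerivAt ψ
      ((a p • ContinuousLinearMap.fst ℝ ℝ ℝ + c p • ContinuousLinearMap.snd ℝ ℝ ℝ).prod
       (b p • ContinuousLinearMap.fst ℝ ℝ ℝ + d p • ContinuousLinearMap.snd ℝ ℝ ℝ)) p := by
    intro p
    have f1 : HasFDerivAt (fun p : ℝ × ℝ => p.1) (ContinuousLinearMap.fst ℝ ℝ ℝ) p := hasFDerivAt_fst
    have f2 : HasFDerivAt (fun p : ℝ × ℝ => p.2) (ContinuousLinearMap.snd ℝ ℝ ℝ) p := hasFDerivAt_snd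
    have g1 : ∀ g : ℝ → ℝ, ContDiff ℝ (⊤ : ℕ∞) g → HasFDerivAt (fun p : ℝ × ℝ => g p.1)
        (deriv g p.1 • ContinuousLinearMap.fst ℝ ℝ ℝ) p := fun g hg =>
      (hg.differentiable (by simp) p.1).hasDerivAt.comp_hasFDerivAt p f1
    have g2 : ∀ g : ℝ → ℝ, ContDiff ℝ (⊤ : ℕ∞) g → HasFDerivAt (fun p : ℝ × ℝ => g p.2)
        (deriv g p.2 • ContinuousLinearMap.snd ℝ ℝ ℝ) p := fun g hg =>
      (hg.differentiable (by simp) p.2).hasDerivAt.comp_hasFDerivAt p f2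
    refine (((f1.fun_add (g2 φ hφ)).fun_add (f2.fun_mul (g1 l hl))).prodMk
      ((f2.fun_add (g1 χ hχ)).fun_add (f1.fun_mul (g2 κ hκ)))).congr_fderiv ?_
    refine ContinuousLinearMap.ext fun w => Prod.ext ?_ ?_
    · simp [a, c]; ring
    · simp [b, d]; ring
  have hfd : ∀ p w, fderiv ℝ ψ p w = (a p * w.1 + c p * w.2, b p * w.1 + d p * w.2) := fun p w => by
    rw [(hder p).fderiv]; simp
  have hid : fderiv ℝ ψ 0 = ContinuousLinearMap.id ℝ (ℝ × ℝ) :=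
    ContinuousLinearMap.ext fun w => by rw [hfd, a0, b0, c0, d0]; simp
  have hcompd : ∀ G : ℝ × ℝ → ℝ, ContDiff ℝ (⊤ : ℕ∞) G →
      HasFDerivAt (fun p => G (ψ p)) (fderiv ℝ G 0) 0 := by
    intro G hG
    have h1 : HasFDerivAt G (fderiv ℝ G 0) (ψ 0) := by
      rw [hψ0]; exact (hG.differentiable (by simp) 0).hasFDerivAt
    have h2 : HasFDerivAt ψ (ContinuousLinearMap.id ℝ (ℝ × ℝ)) 0 := by rw [← hid]; exact (hψ.differentiable (by simp) 0).hasFDerivAt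
    exact h1.comp (0 : ℝ × ℝ) h2
  have hAψ := hA.comp hψ
  have hBψ := hB.comp hψ
  have hCψ := hC.comp hψ
  simp only [Function.comp_def] at hAψ hBψ hCψ
  let As : ℝ × ℝ → ℝ := fun p => A (ψ p) * a p ^ 2 + B (ψ p) * (2 * a p * b p) + C (ψ p) * b p ^ 2
  let Bs : ℝ × ℝ → ℝ := fun p => A (ψ p) * (a p * c p) + B (ψ p) * (a p * d p + b p * c p) + C (ψ p) * (b p * d p)
  let Cs : ℝ × ℝ → ℝ := fun p => A (ψ p) * c p ^ 2 + B (ψ p) * (2 * c p * d p) + C (ψ p) * d p ^ 2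
  have hAs : ContDiff ℝ (⊤ : ℕ∞) As := by fun_prop
  have hBs : ContDiff ℝ (⊤ : ℕ∞) Bs := by fun_prop
  have hCs : ContDiff ℝ (⊤ : ℕ∞) Cs := by fun_prop
  have dAs : fderiv ℝ As 0 (1, 0) = 1 := by
    have h := ((fd_mul0 (hcompd A hA) (ha.pow 2) (by rw [hψ0, A0])).fun_add
      (fd_mul0 (hcompd B hB) ((contDiff_const (c := (2 : ℝ))).mul ha |>.mul hb) (by rw [hψ0, B0]))).fun_add
      (fd_mul0 (hcompd C hC) (hb.pow 2) (by rw [hψ0, C0]))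
    have h' : fderiv ℝ As 0 = _ := h.fderiv
    rw [h']
    simp [a0, b0, dA, dB, dC]
  have dCs : fderiv ℝ Cs 0 (0, 1) = 1 := by
    have h := ((fd_mul0 (hcompd A hA) (hc.pow 2) (by rw [hψ0, A0])).fun_add
      (fd_mul0 (hcompd B hB) ((contDiff_const (c := (2 : ℝ))).mul hc |>.mul hd) (by rw [hψ0, B0]))).fun_add
      (fd_mul0 (hcompd C hC) (hd.pow 2) (by rw [hψ0, C0]))
    have h' : fderiv ℝ Cs 0 = _ := h.fderiv
    rw [h']
    simp [c0, d0, dA, dB, dC]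
  obtain ⟨α, hα, α1, α2⟩ := hadamard hAs
  obtain ⟨γ, hγ, γ1, γ2⟩ := hadamard' hCs
  obtain ⟨b', hb', b1, -⟩ := hadamard hBs
  obtain ⟨β, hβ, β1, -⟩ := hadamard' hb'
  -- vanishing on the axes
  have van1 : ∀ᶠ v in nhds (0 : ℝ), As (0, v) = 0 ∧ Bs (0, v) = 0 := by
    filter_upwards [hker] with v ⟨k1, k2⟩
    have e1 : ψ (0, v) = (φ v, v) := by simp [ψ, l0, χ0]
    have e2 : b (0, v) = a (0, v) * κt v := by simp only [a, b, dχ0, dl0]; rw [hκd]; ring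
    simp only [As, Bs, e1, e2]
    constructor
    · linear_combination a (0, v) ^ 2 * k1 + a (0, v) ^ 2 * κt v * k2
    · linear_combination a (0, v) * c (0, v) * k1 + a (0, v) * d (0, v) * k2
  have van2 : ∀ᶠ u in nhds (0 : ℝ), Bs (u, 0) = 0 ∧ Cs (u, 0) = 0 := by
    filter_upwards [hker2] with u ⟨k1, k2⟩
    have e1 : ψ (u, 0) = (u, χ u) := by simp [ψ, κ0, φ0]
    have e2 : c (u, 0) = d (u, 0) * lt u := by simp only [c, d, dφ0, dκ0]; rw [hld]; ring
    simp only [Cs, Bs, e1, e2]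
    constructor
    · linear_combination d (u, 0) * b (u, 0) * k1 + d (u, 0) * a (u, 0) * k2
    · linear_combination d (u, 0) ^ 2 * k1 + d (u, 0) ^ 2 * lt u * k2
  refine ⟨ψ, α, β, γ, hψ, hα, hβ, hγ, hψ0, hid, ?_, ?_, ?_⟩
  · exact (α2 0).trans dAs
  · exact (γ2 0).trans dCs
  · have t1 := (continuous_fst (X := ℝ) (Y := ℝ)).tendsto 0
    have t2 := (continuous_snd (X := ℝ) (Y := ℝ)).tendsto 0
    filter_upwards [t2.eventually van1, t1.eventually van2] with p ⟨v1, v2⟩ ⟨v3, v4⟩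
    intro w
    have eA : As p = p.1 * α p := by rw [α1, v1, zero_add]
    have eC : Cs p = p.2 * γ p := by rw [γ1, v4, zero_add]
    have B00 : Bs (0, 0) = 0 := van2.self_of_nhds.1
    have eB : Bs p = p.1 * p.2 * β p := by
      have h1 := b1 (p.1, 0)
      simp only [v3, B00] at h1
      rw [b1, v2, β1]
      linear_combination -h1
    rw [← eA, ← eB, ← eC, hfd]
    simp only [As, Bs, Cs]
    ring


lemma r3 : √(3 : ℝ) * √3 = 3 := Real.mul_self_sqrt (by norm_num)

/-- linear change of coordinates -/
def Lc : (ℝ × ℝ) ≃L[ℝ] (ℝ × ℝ) := ContinuousLinearEquiv.equivOfInverse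
  (((√3 / 6) • (ContinuousLinearMap.fst ℝ ℝ ℝ + ContinuousLinearMap.snd ℝ ℝ ℝ)).prod
    ((1 / 2 : ℝ) • (ContinuousLinearMap.fst ℝ ℝ ℝ - ContinuousLinearMap.snd ℝ ℝ ℝ)))
  ((√3 • ContinuousLinearMap.fst ℝ ℝ ℝ + ContinuousLinearMap.snd ℝ ℝ ℝ).prod
    (√3 • ContinuousLinearMap.fst ℝ ℝ ℝ - ContinuousLinearMap.snd ℝ ℝ ℝ))
  (fun x => by
    have := r3
    refine Prod.ext ?_ ?_
    · simp; linear_combination (x.1 + x.2) / 6 * this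
    · simp; linear_combination (x.1 + x.2) / 6 * this)
  (fun x => by
    have := r3
    refine Prod.ext ?_ ?_
    · simp; linear_combination x.1 / 3 * this
    · simp; ring)

lemma Lc_apply (p : ℝ × ℝ) : Lc p = (√3 / 6 * (p.1 + p.2), 1 / 2 * (p.1 - p.2)) := by
  simp [Lc]; ring

/-- linear change of coordinates for the model -/
def Mc : (ℝ × ℝ) ≃L[ℝ] (ℝ × ℝ) := ContinuousLinearEquiv.equivOfInverse
  ((ContinuousLinearMap.fst ℝ ℝ ℝ + ContinuousLinearMap.snd ℝ ℝ ℝ).prod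
    (ContinuousLinearMap.snd ℝ ℝ ℝ - ContinuousLinearMap.fst ℝ ℝ ℝ))
  (((1 / 2 : ℝ) • (ContinuousLinearMap.fst ℝ ℝ ℝ - ContinuousLinearMap.snd ℝ ℝ ℝ)).prod
    ((1 / 2 : ℝ) • (ContinuousLinearMap.fst ℝ ℝ ℝ + ContinuousLinearMap.snd ℝ ℝ ℝ)))
  (fun x => by
    refine Prod.ext ?_ ?_
    · simp; ring
    · simp; ring)
  (fun x => by
    refine Prod.ext ?_ ?_
    · simp; ring
    · simp; ring)

lemma Mc_apply (p : ℝ × ℝ) : Mc p = (p.1 + p.2, p.2 - p.1) := by simp [Mc]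

lemma model_equiv : TopEquivAt0 (BDE (fun p => p.2) (fun p => p.1) (fun p => p.2))
    (fun p w => p.1 * w.1 ^ 2 + p.2 * w.2 ^ 2) := by
  refine pull_equiv (ψ := Mc) Mc.contDiff (map_zero _) Mc Mc.fderiv (Eventually.of_forall fun p =>
    ⟨2, two_ne_zero, fun w => ?_⟩)
  rw [Mc.fderiv]
  change (Mc p).1 * (Mc w).1 ^ 2 + (Mc p).2 * (Mc w).2 ^ 2 = _
  rw [Mc_apply, Mc_apply]
  simp only [BDE]
  ring

theorem main_geo {a b c : ℝ × ℝ → ℝ} (ha : ContDiff ℝ (⊤ : ℕ∞) a) (hb : ContDiff ℝ (⊤ : ℕ∞) b)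
    (hc : ContDiff ℝ (⊤ : ℕ∞) c) (a0 : a 0 = 0) (b0 : b 0 = 0) (c0 : c 0 = 0)
    (da : ∀ w, fderiv ℝ a 0 w = 2 * w.1) (db : ∀ w, fderiv ℝ b 0 w = 2 * w.2)
    (dc : ∀ w, fderiv ℝ c 0 w = 6 * w.1) :
    (∃ U ∈ nhds (0 : ℝ × ℝ), ∃ γ₁ γ₂ : ℝ → ℝ × ℝ,
      ContDiff ℝ (⊤ : ℕ∞) γ₁ ∧ ContDiff ℝ (⊤ : ℕ∞) γ₂ ∧ γ₁ 0 = 0 ∧ γ₂ 0 = 0 ∧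
      LinearIndependent ℝ ![deriv γ₁ 0, deriv γ₂ 0] ∧
      ∀ p ∈ U, (b p ^ 2 - c p * a p = 0 ↔ ∃ s ∈ Set.Ioo (-1 : ℝ) 1, γ₁ s = p ∨ γ₂ s = p)) ∧
    TopEquivAt0 (BDE a b c) (BDE (fun p => p.2) (fun p => p.1) (fun p => p.2)) := by
  have hL : ContDiff ℝ (⊤ : ℕ∞) Lc := Lc.contDiff
  have haL := ha.comp hL
  have hbL := hb.comp hL
  have hcL := hc.comp hL
  simp only [Function.comp_def] at haL hbL hcL
  have hr := r3
  have hr0 : √(3 : ℝ) ≠ 0 := by positivity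
  have dcomp : ∀ G : ℝ × ℝ → ℝ, ContDiff ℝ (⊤ : ℕ∞) G →
      HasFDerivAt (fun p => G (Lc p)) ((fderiv ℝ G 0).comp (Lc : (ℝ × ℝ) →L[ℝ] (ℝ × ℝ))) 0 := by
    intro G hG
    have h1 : HasFDerivAt G (fderiv ℝ G 0) (Lc 0) := by
      rw [map_zero]; exact (hG.differentiable (by simp) 0).hasFDerivAt
    exact h1.comp (0 : ℝ × ℝ) Lc.hasFDerivAt
  let A : ℝ × ℝ → ℝ := fun p => √3 / 4 * a (Lc p) + 1 / 2 * b (Lc p) + √3 / 12 * c (Lc p)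
  let B : ℝ × ℝ → ℝ := fun p => -(√3 / 4) * a (Lc p) + √3 / 12 * c (Lc p)
  let C : ℝ × ℝ → ℝ := fun p => √3 / 4 * a (Lc p) + -(1 / 2) * b (Lc p) + √3 / 12 * c (Lc p)
  have hA : ContDiff ℝ (⊤ : ℕ∞) A := by fun_prop
  have hB : ContDiff ℝ (⊤ : ℕ∞) B := by fun_prop
  have hC : ContDiff ℝ (⊤ : ℕ∞) C := by fun_prop
  have A0 : A 0 = 0 := by simp [A, a0, b0, c0]
  have B0 : B 0 = 0 := by simp [B, a0, c0]
  have C0 : C 0 = 0 := by simp [C, a0, b0, c0]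
  have dA : ∀ w, fderiv ℝ A 0 w = w.1 := fun w => by
    have h : HasFDerivAt A _ 0 := (((dcomp a ha).const_mul (√3 / 4)).fun_add
      ((dcomp b hb).const_mul (1 / 2))).fun_add ((dcomp c hc).const_mul (√3 / 12))
    rw [h.fderiv]
    simp [da, db, dc, Lc_apply]
    linear_combination (w.1 + w.2) / 6 * hr
  have dB : ∀ w, fderiv ℝ B 0 w = 0 := fun w => by
    have h : HasFDerivAt B _ 0 := ((dcomp a ha).const_mul (-(√3 / 4))).fun_add
      ((dcomp c hc).const_mul (√3 / 12))
    rw [h.fderiv]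
    simp [da, dc, Lc_apply]
    ring
  have dC : ∀ w, fderiv ℝ C 0 w = w.2 := fun w => by
    have h : HasFDerivAt C _ 0 := (((dcomp a ha).const_mul (√3 / 4)).fun_add
      ((dcomp b hb).const_mul (-(1 / 2)))).fun_add ((dcomp c hc).const_mul (√3 / 12))
    rw [h.fderiv]
    simp [da, db, dc, Lc_apply]
    linear_combination (w.1 + w.2) / 6 * hr
  obtain ⟨ψ, α, β, γ, hψ, hα, hβ, hγ, ψ0, dψ0, α0, γ0, hform⟩ :=
    normal_form hA hB hC A0 B0 C0 dA dB dC
  have hψd : HasFDerivAt ψ (ContinuousLinearMap.id ℝ (ℝ × ℝ)) 0 := by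
    rw [← dψ0]; exact (hψ.differentiable (by simp) 0).hasFDerivAt
  constructor
  · -- the node
    have hcz : Continuous (fun p : ℝ × ℝ => p.1 * p.2 * β p ^ 2 - α p * γ p) := by fun_prop
    have hne : ∀ᶠ p in nhds (0 : ℝ × ℝ), p.1 * p.2 * β p ^ 2 - α p * γ p ≠ 0 :=
      hcz.continuousAt.eventually_ne (by simp [α0, γ0])
    have hcd : Continuous (fderiv ℝ ψ) := hψ.continuous_fderiv (by simp)
    have hdet : ∀ᶠ p in nhds (0 : ℝ × ℝ), (fderiv ℝ ψ p (1, 0)).1 * (fderiv ℝ ψ p (0, 1)).2 -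
        (fderiv ℝ ψ p (1, 0)).2 * (fderiv ℝ ψ p (0, 1)).1 ≠ 0 := by
      have : Continuous (fun p => (fderiv ℝ ψ p (1, 0)).1 * (fderiv ℝ ψ p (0, 1)).2 -
        (fderiv ℝ ψ p (1, 0)).2 * (fderiv ℝ ψ p (0, 1)).1) := by fun_prop
      exact this.continuousAt.eventually_ne (by rw [dψ0]; simp)
    have hz : ∀ᶠ p in nhds (0 : ℝ × ℝ), (b (Lc (ψ p)) ^ 2 - c (Lc (ψ p)) * a (Lc (ψ p)) = 0 ↔
        p.1 = 0 ∨ p.2 = 0) := by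
      filter_upwards [hform, hne, hdet] with p h1 h2 h3
      have k1 := h1 (1, 0)
      have k2 := h1 (0, 1)
      have k3 := h1 (1, 1)
      have ew : fderiv ℝ ψ p (1, 1) = fderiv ℝ ψ p (1, 0) + fderiv ℝ ψ p (0, 1) := by
        rw [← map_add]; simp
      rw [ew] at k3
      simp only [Prod.fst_add, Prod.snd_add] at k3
      generalize fderiv ℝ ψ p (1, 0) = m at *
      generalize fderiv ℝ ψ p (0, 1) = n at *
      have kB : A (ψ p) * (m.1 * n.1) + B (ψ p) * (m.1 * n.2 + m.2 * n.1) + C (ψ p) * (m.2 * n.2) =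
          p.1 * p.2 * β p := by linear_combination (k3 - k1 - k2) / 2
      have kA : A (ψ p) * m.1 ^ 2 + 2 * B (ψ p) * m.1 * m.2 + C (ψ p) * m.2 ^ 2 = p.1 * α p := by
        linear_combination k1
      have kC : A (ψ p) * n.1 ^ 2 + 2 * B (ψ p) * n.1 * n.2 + C (ψ p) * n.2 ^ 2 = p.2 * γ p := by
        linear_combination k2
      have e1 : (B (ψ p) ^ 2 - A (ψ p) * C (ψ p)) * (m.1 * n.2 - m.2 * n.1) ^ 2 =
          p.1 * p.2 * (p.1 * p.2 * β p ^ 2 - α p * γ p) := by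
        have : p.1 * p.2 * (p.1 * p.2 * β p ^ 2 - α p * γ p) =
          (p.1 * p.2 * β p) ^ 2 - (p.1 * α p) * (p.2 * γ p) := by ring
        rw [this, ← kA, ← kB, ← kC]; ring
      have e2 : B (ψ p) ^ 2 - A (ψ p) * C (ψ p) =
          (b (Lc (ψ p)) ^ 2 - c (Lc (ψ p)) * a (Lc (ψ p))) / 4 := by
        simp only [A, B, C]
        linear_combination (-(1 / 12) * a (Lc (ψ p)) * c (Lc (ψ p))) * hr
      rw [e2] at e1
      constructor
      · intro h
        rw [h] at e1
        simp only [zero_div, zero_mul] at e1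
        exact mul_eq_zero.mp ((mul_eq_zero.mp e1.symm).resolve_right h2)
      · intro h
        have h4 : p.1 * p.2 = 0 := mul_eq_zero.mpr h
        rw [h4, zero_mul] at e1
        have := (mul_eq_zero.mp e1).resolve_right (pow_ne_zero 2 h3)
        linarith
    obtain ⟨ε, hε, hball⟩ := Metric.mem_nhds_iff.mp hz
    have hLψ : HasStrictFDerivAt (fun p => Lc (ψ p)) (Lc : (ℝ × ℝ) →L[ℝ] (ℝ × ℝ)) 0 := by
      have h1 : HasStrictFDerivAt ψ (ContinuousLinearMap.id ℝ (ℝ × ℝ)) 0 := by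
        rw [← dψ0]; exact hψ.contDiffAt.hasStrictFDerivAt (by simp)
      exact Lc.hasStrictFDerivAt.comp (0 : ℝ × ℝ) h1
    have hmap := hLψ.map_nhds_eq_of_equiv
    rw [ψ0, map_zero] at hmap
    have hU : (fun p => Lc (ψ p)) '' Metric.ball 0 ε ∈ nhds (0 : ℝ × ℝ) := by
      rw [← hmap]; exact image_mem_map (Metric.ball_mem_nhds 0 hε)
    have hLs : ContDiff ℝ (⊤ : ℕ∞) (fun p => Lc (ψ p)) := hL.comp hψ
    have hLd := hLψ.hasFDerivAt
    have mem1 : ∀ s ∈ Ioo (-1 : ℝ) 1, ((0 : ℝ), ε * s) ∈ Metric.ball (0 : ℝ × ℝ) ε ∧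
        (ε * s, (0 : ℝ)) ∈ Metric.ball (0 : ℝ × ℝ) ε := by
      intro s hs
      have h1 : |ε * s| < ε := by
        rw [abs_mul, abs_of_pos hε]
        have := abs_lt.mpr hs
        nlinarith
      constructor
      · rw [mem_ball_zero_iff, Prod.norm_def]; exact max_lt (by simpa using hε) h1
      · rw [mem_ball_zero_iff, Prod.norm_def]; exact max_lt h1 (by simpa using hε)
    have d1 : HasDerivAt (fun s : ℝ => Lc (ψ (0, ε * s))) (Lc (0, ε)) 0 := by
      have h1 : HasDerivAt (fun s : ℝ => ((0 : ℝ), ε * s)) (0, ε) 0 :=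
        (hasDerivAt_const _ _).prodMk (by simpa using (hasDerivAt_id (0 : ℝ)).const_mul ε)
      have z : ((0 : ℝ), ε * (0 : ℝ)) = 0 := by rw [mul_zero]; rfl
      exact HasFDerivAt.comp_hasDerivAt (f := fun s : ℝ => ((0 : ℝ), ε * s)) 0 (by rw [z]; exact hLd) h1
    have d2 : HasDerivAt (fun s : ℝ => Lc (ψ (ε * s, 0))) (Lc (ε, 0)) 0 := by
      have h1 : HasDerivAt (fun s : ℝ => (ε * s, (0 : ℝ))) (ε, 0) 0 :=
        HasDerivAt.prodMk (by simpa using (hasDerivAt_id (0 : ℝ)).const_mul ε) (hasDerivAt_const _ _)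
      have z : (ε * (0 : ℝ), (0 : ℝ)) = 0 := by rw [mul_zero]; rfl
      exact HasFDerivAt.comp_hasDerivAt (f := fun s : ℝ => (ε * s, (0 : ℝ))) 0 (by rw [z]; exact hLd) h1
    refine ⟨_, hU, fun s => Lc (ψ (0, ε * s)), fun s => Lc (ψ (ε * s, 0)),
      hLs.comp (by fun_prop : ContDiff ℝ (⊤ : ℕ∞) fun s : ℝ => ((0 : ℝ), ε * s)),
      hLs.comp (by fun_prop : ContDiff ℝ (⊤ : ℕ∞) fun s : ℝ => (ε * s, (0 : ℝ))), ?_, ?_, ?_, ?_⟩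
    · beta_reduce
      rw [mul_zero, show ((0 : ℝ), (0 : ℝ)) = 0 from rfl, ψ0, map_zero]
    · beta_reduce
      rw [mul_zero, show ((0 : ℝ), (0 : ℝ)) = 0 from rfl, ψ0, map_zero]
    · rw [d1.deriv, d2.deriv, LinearIndependent.pair_iff]
      intro s t hst
      rw [Lc_apply, Lc_apply] at hst
      have h1 := congrArg Prod.fst hst
      have h2 := congrArg Prod.snd hst
      simp at h1 h2
      have h3 : (s + t) * (√3 / 6 * ε) = 0 := by linear_combination h1
      have h4 : s + t = 0 := (mul_eq_zero.mp h3).resolve_right (by positivity)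
      have h5 : (t - s) * ε = 0 := by linear_combination 2 * h2
      have h6 : t - s = 0 := (mul_eq_zero.mp h5).resolve_right hε.ne'
      constructor <;> linarith
    · rintro _ ⟨p, hp, rfl⟩
      constructor
      · intro h
        have hpn := mem_ball_zero_iff.mp hp
        rcases (hball hp).mp h with h1 | h1
        · refine ⟨p.2 / ε, ?_, Or.inl ?_⟩
          · have := abs_lt.mp ((norm_snd_le p).trans_lt hpn)
            constructor
            · rw [lt_div_iff₀ hε]; linarith
            · rw [div_lt_iff₀ hε]; linarith
          · have e : ((0 : ℝ), ε * (p.2 / ε)) = p := Prod.ext h1.symm (by field_simp)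
            beta_reduce; rw [e]
        · refine ⟨p.1 / ε, ?_, Or.inr ?_⟩
          · have := abs_lt.mp ((norm_fst_le p).trans_lt hpn)
            constructor
            · rw [lt_div_iff₀ hε]; linarith
            · rw [div_lt_iff₀ hε]; linarith
          · have e : (ε * (p.1 / ε), (0 : ℝ)) = p := Prod.ext (by field_simp) h1.symm
            beta_reduce; rw [e]
      · rintro ⟨s, hs, h | h⟩
        · rw [← h]; exact (hball (mem1 s hs).1).mpr (Or.inl rfl)
        · rw [← h]; exact (hball (mem1 s hs).2).mpr (Or.inr rfl)
  · -- the equivalence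
    have t1 : TopEquivAt0 (fun p w => A p * w.1 ^ 2 + 2 * B p * w.1 * w.2 + C p * w.2 ^ 2)
        (BDE a b c) := by
      refine pull_equiv (ψ := Lc) Lc.contDiff (map_zero _) Lc Lc.fderiv (Eventually.of_forall fun p =>
        ⟨√3 / 3, by positivity, fun w => ?_⟩)
      rw [Lc.fderiv]
      change BDE a b c (Lc p) (Lc w) = _
      rw [Lc_apply w]
      simp only [BDE, A, B, C]
      linear_combination (-(1 / 12) * a (Lc p) * (w.1 - w.2) ^ 2) * hr
    have t2 := pull_equiv (ω := fun p w => p.1 * α p * w.1 ^ 2 +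
        2 * (p.1 * p.2 * β p) * w.1 * w.2 + p.2 * γ p * w.2 ^ 2)
      (Ω := fun p w => A p * w.1 ^ 2 + 2 * B p * w.1 * w.2 + C p * w.2 ^ 2)
      (hψ.of_le (by simp)) ψ0 (ContinuousLinearEquiv.refl ℝ (ℝ × ℝ)) dψ0
      (by filter_upwards [hform] with p hp
          exact ⟨1, one_ne_zero, fun w => by rw [one_mul]; exact hp w⟩)
    have t3 := class_equiv (ω := fun p w => p.1 * α p * w.1 ^ 2 +
        2 * (p.1 * p.2 * β p) * w.1 * w.2 + p.2 * γ p * w.2 ^ 2)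
      (hα.of_le (by simp)) (hβ.of_le (by simp)) (hγ.of_le (by simp)) α0 γ0
      (Eventually.of_forall fun p w => rfl)
    exact (t1.symm.trans t2.symm).trans (t3.trans model_equiv.symm)


lemma poly_o {d0 d1 d2 d3 : ℝ}
    (h : (fun t : ℝ => d0 + d1 * t + d2 * t ^ 2 + d3 * t ^ 3) =o[nhds 0] fun t => t ^ 3) :
    d2 = 0 ∧ d3 = 0 := by
  have pw : ∀ m n : ℕ, m ≤ n → (fun t : ℝ => t ^ n) =O[nhds 0] fun t => t ^ m := by
    intro m n hmn
    refine IsBigO.of_bound 1 ?_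
    filter_upwards [Metric.ball_mem_nhds (0 : ℝ) one_pos] with t ht
    rw [mem_ball_zero_iff] at ht
    rw [norm_pow, norm_pow, one_mul]
    exact pow_le_pow_of_le_one (norm_nonneg _) ht.le hmn
  have pwo : ∀ m n : ℕ, m < n → (fun t : ℝ => t ^ n) =o[nhds 0] fun t => t ^ m := by
    intro m n hmn
    exact isLittleO_pow_pow hmn
  have key : ∀ (d : ℝ) (m : ℕ), (fun t : ℝ => d * t ^ m) =o[nhds 0] (fun t => t ^ m) → d = 0 := by
    intro d m hd
    by_contra hne
    have h1 : (fun t : ℝ => t ^ m) =o[nhds 0] (fun t : ℝ => t ^ m) :=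
      (isLittleO_const_mul_left_iff hne).mp hd
    have h2 := (h1.def (c := 1 / 2) (by norm_num))
    have h3 : ∀ᶠ t in nhdsWithin (0 : ℝ) {0}ᶜ, False := by
      filter_upwards [nhdsWithin_le_nhds h2, self_mem_nhdsWithin] with t ht htn
      have : 0 < ‖t ^ m‖ := norm_pos_iff.mpr (pow_ne_zero _ htn)
      linarith
    exact h3.exists.choose_spec
  have e0 : d0 = 0 := by
    apply key d0 0
    have h1 := h.trans_isBigO (pw 0 3 (by norm_num))
    have h2 := ((pwo 0 1 (by norm_num)).const_mul_left d1).add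
      (((pwo 0 2 (by norm_num)).const_mul_left d2).add ((pwo 0 3 (by norm_num)).const_mul_left d3))
    refine (h1.sub h2).congr_left fun t => ?_
    ring
  subst e0
  have e1 : d1 = 0 := by
    apply key d1 1
    have h1 := h.trans_isBigO (pw 1 3 (by norm_num))
    have h2 := (((pwo 1 2 (by norm_num)).const_mul_left d2).add ((pwo 1 3 (by norm_num)).const_mul_left d3))
    refine (h1.sub h2).congr_left fun t => ?_
    ring
  subst e1
  have e2 : d2 = 0 := by
    apply key d2 2
    have h1 := h.trans_isBigO (pw 2 3 (by norm_num))
    have h2 := ((pwo 2 3 (by norm_num)).const_mul_left d3)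
    refine (h1.sub h2).congr_left fun t => ?_
    ring
  subst e2
  refine ⟨rfl, key d3 3 ?_⟩
  refine h.congr_left fun t => ?_
  ring

lemma taylor3 {φ φ1 φ2 : ℝ → ℝ} {c q : ℝ} (hφ : ContDiff ℝ 3 φ) (h0 : ∀ t, HasDerivAt φ (φ1 t) t)
    (h1 : ∀ t, HasDerivAt φ1 (φ2 t) t) (h2 : HasDerivAt φ2 c 0)
    (h : (fun t : ℝ => φ t - q * t ^ 3) =o[nhds 0] fun t => t ^ 3) : φ2 0 = 0 ∧ c = 6 * q := by
  have d1 : deriv φ = φ1 := funext fun t => (h0 t).deriv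
  have d2 : deriv φ1 = φ2 := funext fun t => (h1 t).deriv
  have ht := taylor_isLittleO_univ (n := 3) (x₀ := 0) hφ
  simp only [taylorWithinEval_succ, taylor_within_zero_eval, iteratedDerivWithin_univ, sub_zero,
    iteratedDeriv_succ, iteratedDeriv_zero, d1, d2, h2.deriv, smul_eq_mul] at ht
  have hp : (fun t : ℝ => φ 0 + φ1 0 * t + (φ2 0 / 2) * t ^ 2 + (c / 6 - q) * t ^ 3) =o[nhds 0]
      fun t => t ^ 3 := by
    refine (h.sub ht).congr_left fun t => ?_
    norm_num [Nat.factorial]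
    ring
  obtain ⟨a, b⟩ := poly_o hp
  constructor <;> linarith

section
variable {g h : ℝ × ℝ → ℝ}

lemma pdx_eq (hg : ContDiff ℝ (⊤ : ℕ∞) g) : pdx g = fun p => fderiv ℝ g p (1, 0) := by
  funext p
  have h1 : HasDerivAt (fun s : ℝ => (s, p.2)) (1, 0) p.1 :=
    (hasDerivAt_id _).prodMk (hasDerivAt_const _ _)
  exact (HasFDerivAt.comp_hasDerivAt (f := fun s : ℝ => (s, p.2)) p.1
    (hg.differentiable (by simp) (p.1, p.2)).hasFDerivAt h1).deriv

lemma pdy_eq (hg : ContDiff ℝ (⊤ : ℕ∞) g) : pdy g = fun p => fderiv ℝ g p (0, 1) := by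
  funext p
  have h1 : HasDerivAt (fun s : ℝ => (p.1, s)) (0, 1) p.2 :=
    (hasDerivAt_const _ _).prodMk (hasDerivAt_id _)
  exact (HasFDerivAt.comp_hasDerivAt (f := fun s : ℝ => (p.1, s)) p.2
    (hg.differentiable (by simp) (p.1, p.2)).hasFDerivAt h1).deriv

lemma cd_fd (hg : ContDiff ℝ (⊤ : ℕ∞) g) (v : ℝ × ℝ) :
    ContDiff ℝ (⊤ : ℕ∞) (fun p => fderiv ℝ g p v) :=
  (hg.fderiv_right (m := (⊤ : ℕ∞)) (by simp)).clm_apply contDiff_const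

lemma pdx_cd (hg : ContDiff ℝ (⊤ : ℕ∞) g) : ContDiff ℝ (⊤ : ℕ∞) (pdx g) := by
  rw [pdx_eq hg]; exact cd_fd hg _
lemma pdy_cd (hg : ContDiff ℝ (⊤ : ℕ∞) g) : ContDiff ℝ (⊤ : ℕ∞) (pdy g) := by
  rw [pdy_eq hg]; exact cd_fd hg _

lemma fd_pd (hg : ContDiff ℝ (⊤ : ℕ∞) g) (p v : ℝ × ℝ) :
    fderiv ℝ g p v = v.1 * pdx g p + v.2 * pdy g p := by
  rw [pdx_eq hg, pdy_eq hg]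
  have : v = v.1 • ((1 : ℝ), (0 : ℝ)) + v.2 • ((0 : ℝ), (1 : ℝ)) := by ext <;> simp
  conv_lhs => rw [this, map_add, map_smul, map_smul]
  rfl

lemma pdx_comb (hg : ContDiff ℝ (⊤ : ℕ∞) g) (hh : ContDiff ℝ (⊤ : ℕ∞) h) (r s : ℝ) :
    pdx (fun p => r * g p + s * h p) = fun p => r * pdx g p + s * pdx h p := by
  rw [pdx_eq ((contDiff_const.mul hg).add (contDiff_const.mul hh)), pdx_eq hg, pdx_eq hh]
  funext p
  rw [(((hg.differentiable (by simp) p).hasFDerivAt.const_mul r).fun_add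
    ((hh.differentiable (by simp) p).hasFDerivAt.const_mul s)).fderiv]
  simp

lemma pdy_comb (hg : ContDiff ℝ (⊤ : ℕ∞) g) (hh : ContDiff ℝ (⊤ : ℕ∞) h) (r s : ℝ) :
    pdy (fun p => r * g p + s * h p) = fun p => r * pdy g p + s * pdy h p := by
  rw [pdy_eq ((contDiff_const.mul hg).add (contDiff_const.mul hh)), pdy_eq hg, pdy_eq hh]
  funext p
  rw [(((hg.differentiable (by simp) p).hasFDerivAt.const_mul r).fun_add
    ((hh.differentiable (by simp) p).hasFDerivAt.const_mul s)).fderiv]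
  simp

lemma pdx_mul (hg : ContDiff ℝ (⊤ : ℕ∞) g) (hh : ContDiff ℝ (⊤ : ℕ∞) h) :
    pdx (fun p => g p * h p) = fun p => pdx g p * h p + g p * pdx h p := by
  rw [pdx_eq (hg.mul hh), pdx_eq hg, pdx_eq hh]
  funext p
  rw [((hg.differentiable (by simp) p).hasFDerivAt.fun_mul
    (hh.differentiable (by simp) p).hasFDerivAt).fderiv]
  simp; ring

lemma pdy_mul (hg : ContDiff ℝ (⊤ : ℕ∞) g) (hh : ContDiff ℝ (⊤ : ℕ∞) h) :
    pdy (fun p => g p * h p) = fun p => pdy g p * h p + g p * pdy h p := by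
  rw [pdy_eq (hg.mul hh), pdy_eq hg, pdy_eq hh]
  funext p
  rw [((hg.differentiable (by simp) p).hasFDerivAt.fun_mul
    (hh.differentiable (by simp) p).hasFDerivAt).fderiv]
  simp; ring

lemma pd_comm (hg : ContDiff ℝ (⊤ : ℕ∞) g) : pdx (pdy g) = pdy (pdx g) := by
  rw [pdx_eq (pdy_cd hg), pdy_eq (pdx_cd hg), pdx_eq hg, pdy_eq hg]
  funext p
  have hd := (hg.fderiv_right (m := (⊤ : ℕ∞)) (by simp)).differentiable (by simp) p
  have e : ∀ v w : ℝ × ℝ, fderiv ℝ (fun p => fderiv ℝ g p v) p w = fderiv ℝ (fderiv ℝ g) p w v := by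
    intro v w
    rw [(hd.hasFDerivAt.clm_apply (hasFDerivAt_const v p)).fderiv]
    simp
  rw [e, e]
  exact hg.contDiffAt.isSymmSndFDerivAt (by
    simp only [minSmoothness_of_isRCLikeNormedField]
    exact WithTop.coe_le_coe.mpr (le_top : (2 : ℕ∞) ≤ ⊤)) _ _

lemma line_deriv (hg : ContDiff ℝ (⊤ : ℕ∞) g) (v : ℝ × ℝ) (t : ℝ) :
    HasDerivAt (fun t : ℝ => g (t • v)) (v.1 * pdx g (t • v) + v.2 * pdy g (t • v)) t := by
  rw [← fd_pd hg]
  have h1 : HasDerivAt (fun s : ℝ => s • v) v t := by simpa using (hasDerivAt_id t).smul_const v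
  exact HasFDerivAt.comp_hasDerivAt (f := fun s : ℝ => s • v) t
    (hg.differentiable (by simp) _).hasFDerivAt h1
end

lemma jet_line {α β : ℝ} {f : ℝ × ℝ → ℝ} (hf : ContDiff ℝ (⊤ : ℕ∞) f)
    (hjet : HasJetAt0 f
      (fun p => p.1 * p.2 ^ 2 + p.1 ^ 3 + α * p.1 ^ 3 * p.2 + β * p.2 ^ 4) 4) (v : ℝ × ℝ) :
    v.1 ^ 2 * fxx f 0 + 2 * v.1 * v.2 * fxy f 0 + v.2 ^ 2 * fyy f 0 = 0 ∧
    v.1 ^ 3 * pdx (fxx f) 0 + 3 * v.1 ^ 2 * v.2 * pdy (fxx f) 0 + 3 * v.1 * v.2 ^ 2 * pdx (fyy f) 0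
      + v.2 ^ 3 * pdy (fyy f) 0 = 6 * (v.1 * v.2 ^ 2 + v.1 ^ 3) := by
  have X := pdx_cd hf
  have Y := pdy_cd hf
  have G1 := (contDiff_const (c := v.1)).mul X |>.add ((contDiff_const (c := v.2)).mul Y)
  have G2 := (contDiff_const (c := v.1)).mul (pdx_cd G1) |>.add ((contDiff_const (c := v.2)).mul (pdy_cd G1))
  have l0 := line_deriv hf v
  have l1 := line_deriv G1 v
  have l2 := line_deriv G2 v 0
  have l3 := taylor3 (q := v.1 * v.2 ^ 2 + v.1 ^ 3)
    ((hf.comp (by fun_prop : ContDiff ℝ (⊤ : ℕ∞) fun t : ℝ => t • v)).of_le (WithTop.coe_le_coe.mpr (le_top : (3 : ℕ∞) ≤ ⊤))) l0 l1 l2 ?_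
  · have pxy := pd_comm hf
    have e1 : pdx (fun p => v.1 * pdx f p + v.2 * pdy f p) = fun p => v.1 * fxx f p + v.2 * fxy f p := by
      rw [pdx_comb X Y, pxy]; rfl
    have e2 : pdy (fun p => v.1 * pdx f p + v.2 * pdy f p) = fun p => v.1 * fxy f p + v.2 * fyy f p := by
      rw [pdy_comb X Y]; rfl
    have cxx : ContDiff ℝ (⊤ : ℕ∞) (fxx f) := pdx_cd X
    have cxy : ContDiff ℝ (⊤ : ℕ∞) (fxy f) := pdy_cd X
    have cyy : ContDiff ℝ (⊤ : ℕ∞) (fyy f) := pdy_cd Y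
    have f1 : pdx (fxy f) = pdy (fxx f) := pd_comm X
    have f2 : pdy (fxy f) = pdx (fyy f) := by
      have : pdx (fyy f) = pdy (pdx (pdy f)) := pd_comm Y
      rw [this, pxy]; rfl
    have c1 := (contDiff_const (c := v.1)).mul cxx |>.add ((contDiff_const (c := v.2)).mul cxy)
    have c2 := (contDiff_const (c := v.1)).mul cxy |>.add ((contDiff_const (c := v.2)).mul cyy)
    have g1 := pdx_comb c1 c2 v.1 v.2
    have g2 := pdy_comb c1 c2 v.1 v.2
    rw [pdx_comb cxx cxy, pdx_comb cxy cyy, f1] at g1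
    rw [pdy_comb cxx cxy, pdy_comb cxy cyy, f2] at g2
    simp only [e1, e2, smul_zero, zero_smul] at l3
    rw [g1, g2] at l3
    obtain ⟨m1, m2⟩ := l3
    constructor
    · linear_combination m1
    · rw [← m2]
      ring
  · have ht : Tendsto (fun t : ℝ => t • v) (nhds 0) (nhds 0) := by
      have : Continuous fun t : ℝ => t • v := by fun_prop
      simpa using this.tendsto 0
    have h1 := hjet.comp_tendsto ht
    have h2 : ((fun p : ℝ × ℝ => ‖p‖ ^ 4) ∘ fun t : ℝ => t • v) =O[nhds 0] fun t : ℝ => t ^ 4 := by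
      refine IsBigO.of_bound (‖v‖ ^ 4) (Eventually.of_forall fun t => ?_)
      simp only [Function.comp, norm_smul, norm_pow, norm_mul, norm_norm]
      rw [mul_pow, mul_comm]
    have h43 : (fun t : ℝ => t ^ 4) =o[nhds 0] fun t => t ^ 3 := isLittleO_pow_pow (by norm_num)
    have h3 := (h1.trans_isBigO h2).trans h43
    refine (h3.add (h43.const_mul_left (α * v.1 ^ 3 * v.2 + β * v.2 ^ 4))).congr_left fun t => ?_
    simp only [Function.comp, Prod.smul_fst, Prod.smul_snd, smul_eq_mul]
    ring

lemma lin_o {g : ℝ × ℝ → ℝ} (hg : ContDiff ℝ (⊤ : ℕ∞) g) (g0 : g 0 = 0) {r s : ℝ}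
    (hr : pdx g 0 = r) (hs : pdy g 0 = s) :
    (fun p => g p - (r * p.1 + s * p.2)) =o[nhds 0] fun p => ‖p‖ := by
  have h1 := (hg.differentiable (by simp) 0).hasFDerivAt.isLittleO
  have h2 : (fun p : ℝ × ℝ => p - 0) =O[nhds 0] fun p => ‖p‖ :=
    IsBigO.of_bound 1 (Eventually.of_forall fun p => by simp)
  refine (h1.trans_isBigO h2).congr_left fun p => ?_
  rw [sub_zero, fd_pd hg, g0, hr, hs]
  ring

lemma lin_O (r s : ℝ) : (fun p : ℝ × ℝ => r * p.1 + s * p.2) =O[nhds 0] fun p => ‖p‖ := by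
  have h1 : (fun p : ℝ × ℝ => p.1) =O[nhds 0] fun p => ‖p‖ :=
    IsBigO.of_bound 1 (Eventually.of_forall fun p => by simpa using norm_fst_le p)
  have h2 : (fun p : ℝ × ℝ => p.2) =O[nhds 0] fun p => ‖p‖ :=
    IsBigO.of_bound 1 (Eventually.of_forall fun p => by simpa using norm_snd_le p)
  exact (h1.const_mul_left r).add (h2.const_mul_left s)

lemma prod_o {g h G H : ℝ × ℝ → ℝ} (hg : (fun p => g p - G p) =o[nhds 0] fun p => ‖p‖)
    (hh : (fun p => h p - H p) =o[nhds 0] fun p => ‖p‖) (hG : G =O[nhds 0] fun p => ‖p‖)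
    (hH : H =O[nhds 0] fun p => ‖p‖) :
    (fun p => g p * h p - G p * H p) =o[nhds 0] fun p => ‖p‖ ^ 2 := by
  have h1 := (hg.mul_isBigO hH).add ((hG.mul_isLittleO hh).add (hg.mul hh))
  refine (h1.congr_left fun p => ?_).congr_right fun p => ?_
  · ring
  · ring


/-- class `Π^f_1` (one real root direction): for smooth `f` with
`j⁴f(0) = xy² + x³ + αx³y + βy⁴`, the discriminant `δ` vanishes to first order
at `0`, `j²δ(0) = 4y² − 12x²` (so `Hess δ(0)` is indefinite and the parabolic
set has a node at the origin), and the asymptotic BDE of `f` is topologically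
equivalent at `0` to the 1-saddle BDE `y dy² + 2x dxdy + y dx² = 0`. -/
theorem stmt7 (α β : ℝ) (f : ℝ × ℝ → ℝ) (hf : ContDiff ℝ (⊤ : ℕ∞) f)
    (hjet : HasJetAt0 f
      (fun p => p.1 * p.2 ^ 2 + p.1 ^ 3 + α * p.1 ^ 3 * p.2 + β * p.2 ^ 4) 4) :
    bdeDiscr f 0 = 0 ∧
    (pdx (bdeDiscr f) 0, pdy (bdeDiscr f) 0) = (0, 0) ∧
    HasJetAt0 (bdeDiscr f) (fun p => 4 * p.2 ^ 2 - 12 * p.1 ^ 2) 2 ∧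
    -- the Hessian of δ at 0 is indefinite
    (∃ v w : ℝ × ℝ,
      pdx (pdx (bdeDiscr f)) 0 * v.1 ^ 2 + 2 * pdy (pdx (bdeDiscr f)) 0 * v.1 * v.2 +
        pdy (pdy (bdeDiscr f)) 0 * v.2 ^ 2 > 0 ∧
      pdx (pdx (bdeDiscr f)) 0 * w.1 ^ 2 + 2 * pdy (pdx (bdeDiscr f)) 0 * w.1 * w.2 +
        pdy (pdy (bdeDiscr f)) 0 * w.2 ^ 2 < 0) ∧
    -- the parabolic set has a node (two transverse smooth branches) at the origin
    (∃ U ∈ nhds (0 : ℝ × ℝ), ∃ γ₁ γ₂ : ℝ → ℝ × ℝ,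
      ContDiff ℝ (⊤ : ℕ∞) γ₁ ∧ ContDiff ℝ (⊤ : ℕ∞) γ₂ ∧ γ₁ 0 = 0 ∧ γ₂ 0 = 0 ∧
      LinearIndependent ℝ ![deriv γ₁ 0, deriv γ₂ 0] ∧
      ∀ p ∈ U, (bdeDiscr f p = 0 ↔ ∃ s ∈ Set.Ioo (-1 : ℝ) 1, γ₁ s = p ∨ γ₂ s = p)) ∧
    TopEquivAt0 (asymBDE f)
      (BDE (fun p => p.2) (fun p => p.1) (fun p => p.2)) := by
  have X := pdx_cd hf
  have Y := pdy_cd hf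
  have cxx : ContDiff ℝ (⊤ : ℕ∞) (fxx f) := pdx_cd X
  have cxy : ContDiff ℝ (⊤ : ℕ∞) (fxy f) := pdy_cd X
  have cyy : ContDiff ℝ (⊤ : ℕ∞) (fyy f) := pdy_cd Y
  have f1 : pdx (fxy f) = pdy (fxx f) := pd_comm X
  have f2 : pdy (fxy f) = pdx (fyy f) := by
    have : pdx (fyy f) = pdy (pdx (pdy f)) := pd_comm Y
    rw [this, pd_comm hf]; rfl
  obtain ⟨a1, a2⟩ := jet_line hf hjet (1, 0)
  obtain ⟨b1, b2⟩ := jet_line hf hjet (0, 1)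
  obtain ⟨c1, c2⟩ := jet_line hf hjet (1, 1)
  obtain ⟨-, d2⟩ := jet_line hf hjet (1, -1)
  norm_num at a1 a2 b1 b2 c1 c2 d2
  have xx0 : fxx f 0 = 0 := by linarith
  have yy0 : fyy f 0 = 0 := by linarith
  have xy0 : fxy f 0 = 0 := by linarith
  have x1 : pdx (fxx f) 0 = 6 := by linarith
  have x2 : pdy (fxx f) 0 = 0 := by linarith
  have y2 : pdy (fyy f) 0 = 0 := by linarith
  have y1 : pdx (fyy f) 0 = 2 := by linarith
  have z1 : pdx (fxy f) 0 = 0 := by rw [f1, x2]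
  have z2 : pdy (fxy f) 0 = 2 := by rw [f2, y1]
  have eδ : bdeDiscr f = fun p => 1 * (fxy f p * fxy f p) + (-1) * (fxx f p * fyy f p) := by
    funext p; unfold bdeDiscr; ring
  have m1 := cxy.mul cxy
  have m2 := cxx.mul cyy
  have ex : pdx (bdeDiscr f) = fun p => 1 * (1 * (pdx (fxy f) p * fxy f p) + 1 * (fxy f p * pdx (fxy f) p))
      + (-1) * (1 * (pdx (fxx f) p * fyy f p) + 1 * (fxx f p * pdx (fyy f) p)) := by
    rw [eδ, pdx_comb m1 m2, pdx_mul cxy cxy, pdx_mul cxx cyy]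
    funext p; ring
  have ey : pdy (bdeDiscr f) = fun p => 1 * (1 * (pdy (fxy f) p * fxy f p) + 1 * (fxy f p * pdy (fxy f) p))
      + (-1) * (1 * (pdy (fxx f) p * fyy f p) + 1 * (fxx f p * pdy (fyy f) p)) := by
    rw [eδ, pdy_comb m1 m2, pdy_mul cxy cxy, pdy_mul cxx cyy]
    funext p; ring
  have k1 := (pdx_cd cxy).mul cxy
  have k2 := cxy.mul (pdx_cd cxy)
  have k3 := (pdx_cd cxx).mul cyy
  have k4 := cxx.mul (pdx_cd cyy)
  have k5 := (contDiff_const (c := (1 : ℝ))).mul k1 |>.add ((contDiff_const (c := (1 : ℝ))).mul k2)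
  have k6 := (contDiff_const (c := (1 : ℝ))).mul k3 |>.add ((contDiff_const (c := (1 : ℝ))).mul k4)
  have l1 := (pdy_cd cxy).mul cxy
  have l2 := cxy.mul (pdy_cd cxy)
  have l3 := (pdy_cd cxx).mul cyy
  have l4 := cxx.mul (pdy_cd cyy)
  have l5 := (contDiff_const (c := (1 : ℝ))).mul l1 |>.add ((contDiff_const (c := (1 : ℝ))).mul l2)
  have l6 := (contDiff_const (c := (1 : ℝ))).mul l3 |>.add ((contDiff_const (c := (1 : ℝ))).mul l4)
  have hxx : pdx (pdx (bdeDiscr f)) 0 = -24 := by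
    rw [ex, pdx_comb k5 k6, pdx_comb k1 k2, pdx_comb k3 k4, pdx_mul (pdx_cd cxy) cxy,
      pdx_mul cxy (pdx_cd cxy), pdx_mul (pdx_cd cxx) cyy, pdx_mul cxx (pdx_cd cyy)]
    beta_reduce
    rw [xx0, yy0, xy0, x1, y1, z1]; norm_num
  have hyy : pdy (pdy (bdeDiscr f)) 0 = 8 := by
    rw [ey, pdy_comb l5 l6, pdy_comb l1 l2, pdy_comb l3 l4, pdy_mul (pdy_cd cxy) cxy,
      pdy_mul cxy (pdy_cd cxy), pdy_mul (pdy_cd cxx) cyy, pdy_mul cxx (pdy_cd cyy)]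
    beta_reduce
    rw [xx0, yy0, xy0, x2, y2, z2]; norm_num
  have geo := main_geo cyy cxy cxx yy0 xy0 xx0
    (fun w => by rw [fd_pd cyy, y1, y2]; ring) (fun w => by rw [fd_pd cxy, z1, z2]; ring)
    (fun w => by rw [fd_pd cxx, x1, x2]; ring)
  refine ⟨?_, ?_, ?_, ⟨(0, 1), (1, 0), ?_, ?_⟩, geo.1, geo.2⟩
  · unfold bdeDiscr; rw [xx0, xy0]; norm_num
  · rw [ex, ey]; beta_reduce; rw [xx0, yy0, xy0]; norm_num
  · have o1 := lin_o cxy xy0 z1 z2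
    have o2 := lin_o cxx xx0 x1 x2
    have o3 := lin_o cyy yy0 y1 y2
    have p1 := prod_o o1 o1 (lin_O _ _) (lin_O _ _)
    have p2 := prod_o o2 o3 (lin_O _ _) (lin_O _ _)
    refine (p1.sub p2).congr_left fun p => ?_
    unfold bdeDiscr
    ring
  · rw [hyy]; norm_num
  · rw [hxx]; norm_num
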